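/- For every finite time T>0 there exist constants ε(T)>0 and C₀(T)>0 with the following property: for all initial data ρ₀, v₀ ∈ C¹([0,L]) and boundary data u₀, u_L ∈ C¹([0,T]) that satisfy the C¹-compatibility conditions and for which max(‖ρ₀−ρ̄‖_{C¹([0,L])}, ‖v₀−v̄‖_{C¹([0,L])}, ‖u₀−v̄‖_{C¹([0,T])}, ‖u_L−ρ̄‖_{C¹([0,T])}) < ε(T), there exists a unique classical solution (ρ,v) ∈ C¹([0,T]×[0,L]) with ρ>0 of the density–velocity system together with the initial conditions ρ(0,x)=ρ₀(x), v(0,x)=v₀(x) and the boundary conditions v(t,0)=u₀(t), ρ(t,L)=u_L(t); moreover the solution satisfies the a priori bound max(‖ρ−ρ̄‖_{C¹([0,T]×[0,L])}, ‖v−v̄‖_{C¹([0,T]×[0,L])}) ≤ C₀(T)·max(‖ρ₀−ρ̄‖_{C¹}, ‖v₀−v̄‖_{C¹}, ‖u₀−v̄‖_{C¹}, ‖u_L−ρ̄‖_{C¹}). -/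

import Mathlib

/-!
Write `c(ρ)/ρ = G'(ρ)` with `G ρ_bar = 0`.  The Riemann invariants `v - v_bar ± G ρ` diagonalise the
system: they are transported with the speeds `v ± c(ρ)` and the source `-F`.  Near a subsonic
equilibrium the speeds have opposite signs, so after the reflection `x ↦ L - x` of the second
invariant both families travel to the right.  The unknowns `r true`, `r false` then satisfy
`∂ₜ rᵢ + lamᵢ ∂ₓ rᵢ = fᵢ` with `0 < lamᵢ` and `fᵢ(0, 0) = 0`, and the boundary conditions become
`rᵢ(t, 0) = βᵢ(t) + σᵢ rⱼ(t, L)` with `j = !i` and `|σᵢ| = 1`.  The coefficients of `rᵢ` at `x`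
depend on `rⱼ` at `L - x`.

*Lipschitz solutions.*  For small data the explicit upwind scheme is stable.  Time differences are
estimated in a norm with the weight `1 - x / (2 L)`, which makes the (non-contractive) boundary
coupling a contraction at the price of exponential growth in time (`DiagSys.upwind_diff_bound`);
the equation and the data convert this into bounds on space differences and on the solution, linear
in the size of the data (`DiagSys.upwind_gridBounds`).  Along an ultrafilter the scheme converges to
a Lipschitz function; a parabolic barrier (`DiagSys.upwind_barrier`) shows that the limit has the
right derivative along characteristics (`DiagSys.exists_broad`).

*Regularity.*  With `x` as the evolution variable the characteristics are graphs `t = τ(x)` of an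
ordinary differential equation `τ' = 1 / lam`, and the difference quotient `D` of the solution
between two characteristics satisfies `D' = p - D m`, where `p` and `m` are almost linear in the
difference quotients.  Hence the oscillation of the time difference quotients over short windows
obeys a closed inequality.  Near `t = 0` the oscillation is small by the first-order compatibility
conditions (`CharSys.pair`), and at `x = 0` it is inherited from `x = L` through the boundary
coupling; a barrier with the weight `e^{K t} (1 - x / (2 L))` halves it, up to arbitrarily small
errors, on shrinking windows (`CharSys.osc_step`).  So the oscillation tends to `0` and the
solution is `C¹` (`CharSys.regularity`, `exists_diag`).

*Uniqueness.*  The differences of the Riemann invariants of two solutions solve a linear diagonal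
system; since `|σᵢ| = 1`, the functions `e^{x - K t} z²` cannot have a positive maximum
(`max_principle`, `unique_dv`).
-/

open Set

/-- The `C¹`-norm of a one-variable function on a set `s`:
`max(sup |h|, sup |h'|)` (derivatives taken within `s`). -/
noncomputable def c1NormOn (h : ℝ → ℝ) (s : Set ℝ) : ℝ :=
  ⨆ x : s, max |h x| |derivWithin h s x|

/-- The `C¹`-norm of a two-variable function on a product set `st ×ˢ sx`:
`max(sup |h|, sup |∂_t h|, sup |∂_x h|)` (derivatives taken within the slices). -/
noncomputable def c1NormOn₂ (h : ℝ → ℝ → ℝ) (st sx : Set ℝ) : ℝ :=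
  ⨆ z : (st ×ˢ sx : Set (ℝ × ℝ)),
    max |h (z : ℝ × ℝ).1 (z : ℝ × ℝ).2|
      (max |derivWithin (fun t => h t (z : ℝ × ℝ).2) st (z : ℝ × ℝ).1|
        |derivWithin (fun x => h (z : ℝ × ℝ).1 x) sx (z : ℝ × ℝ).2|)

/-- `(ρ, v)` is a classical (`C¹`) solution on `[0,T] × [0,L]` of the
density–velocity system `∂_t ρ + v ∂_x ρ + ρ ∂_x v = 0`,
`∂_t v + (c(ρ)²/ρ) ∂_x ρ + v ∂_x v = −F(ρ,v)` with positive density,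
initial data `(ρ₀, v₀)` and Dirichlet boundary data `v(t,0) = u₀(t)`,
`ρ(t,L) = u_L(t)`.  Time derivatives are taken within `[0,T]` and space
derivatives within `[0,L]`. -/
def IsClassicalSolutionDV (c : ℝ → ℝ) (F : ℝ → ℝ → ℝ) (T L : ℝ)
    (ρ₀ v₀ u₀ uL : ℝ → ℝ) (ρ v : ℝ → ℝ → ℝ) : Prop :=
  ContDiffOn ℝ 1 (Function.uncurry ρ) (Icc 0 T ×ˢ Icc 0 L) ∧
  ContDiffOn ℝ 1 (Function.uncurry v) (Icc 0 T ×ˢ Icc 0 L) ∧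
  (∀ t ∈ Icc (0 : ℝ) T, ∀ x ∈ Icc (0 : ℝ) L, 0 < ρ t x) ∧
  (∀ t ∈ Icc (0 : ℝ) T, ∀ x ∈ Icc (0 : ℝ) L,
    derivWithin (fun s => ρ s x) (Icc 0 T) t
      + v t x * derivWithin (fun y => ρ t y) (Icc 0 L) x
      + ρ t x * derivWithin (fun y => v t y) (Icc 0 L) x = 0) ∧
  (∀ t ∈ Icc (0 : ℝ) T, ∀ x ∈ Icc (0 : ℝ) L,
    derivWithin (fun s => v s x) (Icc 0 T) t
      + (c (ρ t x)) ^ 2 / ρ t x * derivWithin (fun y => ρ t y) (Icc 0 L) x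
      + v t x * derivWithin (fun y => v t y) (Icc 0 L) x = -F (ρ t x) (v t x)) ∧
  (∀ x ∈ Icc (0 : ℝ) L, ρ 0 x = ρ₀ x ∧ v 0 x = v₀ x) ∧
  (∀ t ∈ Icc (0 : ℝ) T, v t 0 = u₀ t ∧ ρ t L = uL t)

/-! ### The upwind scheme for a diagonal system -/

/-- Structural hypotheses on a diagonal system `∂ₜ rᵢ + lamᵢ(rᵢ, rⱼ*) ∂ₓ rᵢ = fᵢ(rᵢ, rⱼ*)`, where
`j = !i` and `rⱼ*(t, x) = rⱼ(t, L - x)`, for states in the square `[-δ, δ]²`.  Both families are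
written so that they travel to the right, which makes the two equations formally identical; the
boundary coupling is `rᵢ(t, 0) = βᵢ(t) + σᵢ rⱼ(t, L)`. -/
structure DiagSys (δ a0 Λ Lc : ℝ) (lam f : Bool → ℝ → ℝ → ℝ) (σ : Bool → ℝ) : Prop where
  hδ : 0 < δ
  ha0 : 0 < a0
  hLc : 0 < Lc
  lam_ge : ∀ i a b, |a| ≤ δ → |b| ≤ δ → a0 ≤ lam i a b
  lam_le : ∀ i a b, |a| ≤ δ → |b| ≤ δ → lam i a b ≤ Λ
  lam_lip : ∀ i a b a' b', |a| ≤ δ → |b| ≤ δ → |a'| ≤ δ → |b'| ≤ δ →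
    |lam i a b - lam i a' b'| ≤ Lc * (|a - a'| + |b - b'|)
  f_lip : ∀ i a b a' b', |a| ≤ δ → |b| ≤ δ → |a'| ≤ δ → |b'| ≤ δ →
    |f i a b - f i a' b'| ≤ Lc * (|a - a'| + |b - b'|)
  f_zero : ∀ i, f i 0 0 = 0
  hσ : ∀ i, |σ i| ≤ 1

/-- Initial data `w` and boundary data `β` of size `E` (sup and Lipschitz bounds) satisfying the
zeroth-order compatibility conditions. -/
structure DiagData (L E : ℝ) (σ : Bool → ℝ) (w β : Bool → ℝ → ℝ) : Prop where
  hE : 0 ≤ E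
  w_bd : ∀ i x, x ∈ Icc 0 L → |w i x| ≤ E
  w_lip : ∀ i x y, x ∈ Icc 0 L → y ∈ Icc 0 L → |w i x - w i y| ≤ E * |x - y|
  β_lip : ∀ i s t, |β i s - β i t| ≤ E * |s - t|
  compat : ∀ i, w i 0 = β i 0 + σ i * w (!i) L

namespace DiagSys

variable {δ a0 Λ Lc : ℝ} {lam f : Bool → ℝ → ℝ → ℝ} {σ : Bool → ℝ}

theorem Λ_pos (S : DiagSys δ a0 Λ Lc lam f σ) : 0 < Λ :=
  S.ha0.trans_le ((S.lam_ge true 0 0 (by simp [S.hδ.le]) (by simp [S.hδ.le])).trans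
    (S.lam_le true 0 0 (by simp [S.hδ.le]) (by simp [S.hδ.le])))

theorem f_bd (S : DiagSys δ a0 Λ Lc lam f σ) (i : Bool) {a b : ℝ} (ha : |a| ≤ δ) (hb : |b| ≤ δ) :
    |f i a b| ≤ Lc * (|a| + |b|) := by
  have := S.f_lip i a b 0 0 ha hb (by simp [S.hδ.le]) (by simp [S.hδ.le])
  simpa [S.f_zero] using this

theorem lam_abs_le (S : DiagSys δ a0 Λ Lc lam f σ) (i : Bool) {a b : ℝ} (ha : |a| ≤ δ)
    (hb : |b| ≤ δ) : |lam i a b| ≤ Λ := by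
  rw [abs_of_pos (S.ha0.trans_le (S.lam_ge i a b ha hb))]
  exact S.lam_le i a b ha hb

end DiagSys

/-- One explicit upwind update at the node `j`, with Courant number `χ = k / h`. -/
def upStep (χ k : ℝ) (lam f : Bool → ℝ → ℝ → ℝ) (N : ℕ) (u : Bool → ℕ → ℝ) (i : Bool) (j : ℕ) : ℝ :=
  u i j - χ * lam i (u i j) (u (!i) (N - j)) * (u i j - u i (j - 1))
    + k * f i (u i j) (u (!i) (N - j))

/-- The upwind scheme: `upwind … n i j` approximates `rᵢ(n k, j h)`. -/
def upwind (χ k h : ℝ) (lam f : Bool → ℝ → ℝ → ℝ) (σ : Bool → ℝ) (N : ℕ) (w β : Bool → ℝ → ℝ) :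
    ℕ → Bool → ℕ → ℝ
  | 0 => fun i j => w i (j * h)
  | n + 1 => fun i j =>
      if j = 0 then
        β i ((n + 1 : ℕ) * k) + σ i * upStep χ k lam f N (upwind χ k h lam f σ N w β n) (!i) N
      else upStep χ k lam f N (upwind χ k h lam f σ N w β n) i j

section UpwindBounds

variable {δ a0 Λ Lc : ℝ} {lam f : Bool → ℝ → ℝ → ℝ} {σ : Bool → ℝ}
  {L T E χ k h : ℝ} {w β : Bool → ℝ → ℝ} {N : ℕ}

theorem upwind_succ {n : ℕ} {i : Bool} {j : ℕ} (hj : j ≠ 0) :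
    upwind χ k h lam f σ N w β (n + 1) i j =
      upStep χ k lam f N (upwind χ k h lam f σ N w β n) i j := by
  simp [upwind, hj]

theorem upwind_bdry (D : DiagData L E σ w β) (hN : N ≠ 0) (hNh : N * h = L) (n : ℕ) (i : Bool) :
    upwind χ k h lam f σ N w β n i 0 =
      β i (n * k) + σ i * upwind χ k h lam f σ N w β n (!i) N := by
  cases n with
  | zero => simp [upwind, hNh, D.compat]
  | succ n => rw [upwind_succ hN]; simp [upwind]

/-- The difference of the updates of two states is a combination of their differences at `j` and
`j - 1`, which is convex when `0 ≤ χ * lam ≤ 1`, plus terms from the variation of the coefficients. -/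
theorem upStep_sub (u u' : Bool → ℕ → ℝ) (i : Bool) (j : ℕ) :
    upStep χ k lam f N u' i j - upStep χ k lam f N u i j =
      (1 - χ * lam i (u' i j) (u' (!i) (N - j))) * (u' i j - u i j)
      + χ * lam i (u' i j) (u' (!i) (N - j)) * (u' i (j - 1) - u i (j - 1))
      - χ * (lam i (u' i j) (u' (!i) (N - j)) - lam i (u i j) (u (!i) (N - j)))
          * (u i j - u i (j - 1))
      + k * (f i (u' i j) (u' (!i) (N - j)) - f i (u i j) (u (!i) (N - j))) := by
  unfold upStep; ring

/-- Growth rate of the time differences of the upwind scheme. -/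
noncomputable def upK (δ a0 Λ Lc L T : ℝ) : ℝ :=
  Λ / L + 3 * Lc * ((2 * Lc * δ + δ / T) / a0 + 1)

/-- Amplification constant of the upwind scheme over the time interval `[0, 2T]`. -/
noncomputable def upA (δ a0 Λ Lc L T : ℝ) : ℝ :=
  2 * (1 + Λ + 2 * Lc) * Real.exp (2 * upK δ a0 Λ Lc L T * T)

theorem upK_pos (S : DiagSys δ a0 Λ Lc lam f σ) (hL : 0 < L) (hT : 0 < T) :
    0 < upK δ a0 Λ Lc L T := by
  have := S.Λ_pos; have := S.hδ; have := S.ha0; have := S.hLc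
  unfold upK; positivity

theorem upA_pos (S : DiagSys δ a0 Λ Lc lam f σ) : 0 < upA δ a0 Λ Lc L T := by
  have := S.Λ_pos; have := S.hLc
  unfold upA; positivity

/-- Up to time `2 T` the growth factor of the weighted bound is at most an exponential, which is
absorbed in the constant `upA`. -/
theorem upwind_growth_le (S : DiagSys δ a0 Λ Lc lam f σ) (hL : 0 < L) (hT : 0 < T) (hk : 0 < k)
    (hE : 0 ≤ E) {m : ℕ} (hm : m * k ≤ 2 * T) {W : ℝ} (hW : W ≤ 1) :
    2 * (1 + Λ + 2 * Lc) * E * k * (1 + upK δ a0 Λ Lc L T * k) ^ m * W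
      ≤ upA δ a0 Λ Lc L T * E * k := by
  have hK := upK_pos S hL hT
  have := S.Λ_pos; have := S.hLc
  have h1 : (1 + upK δ a0 Λ Lc L T * k) ^ m ≤ Real.exp (2 * upK δ a0 Λ Lc L T * T) := by
    calc (1 + upK δ a0 Λ Lc L T * k) ^ m ≤ (Real.exp (upK δ a0 Λ Lc L T * k)) ^ m := by
          gcongr
          linarith [Real.add_one_le_exp (upK δ a0 Λ Lc L T * k)]
      _ = Real.exp (upK δ a0 Λ Lc L T * (m * k)) := by
          rw [← Real.exp_nat_mul]; ring_nf
      _ ≤ _ := by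
          apply Real.exp_le_exp.2
          nlinarith
  calc 2 * (1 + Λ + 2 * Lc) * E * k * (1 + upK δ a0 Λ Lc L T * k) ^ m * W
      ≤ 2 * (1 + Λ + 2 * Lc) * E * k * (1 + upK δ a0 Λ Lc L T * k) ^ m * 1 :=
        mul_le_mul_of_nonneg_left hW (by positivity)
    _ ≤ 2 * (1 + Λ + 2 * Lc) * E * k * Real.exp (2 * upK δ a0 Λ Lc L T * T) * 1 := by gcongr
    _ = _ := by unfold upA; ring

theorem upwind_abs_le_of_diff (D : DiagData L E σ w β) (hk : 0 < k) (hh : 0 < h)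
    (hNh : N * h = L) {A : ℝ} {n : ℕ} {i : Bool} {j : ℕ} (hj : j ≤ N)
    (hd : ∀ m < n, |upwind χ k h lam f σ N w β (m + 1) i j - upwind χ k h lam f σ N w β m i j|
      ≤ A * E * k) :
    |upwind χ k h lam f σ N w β n i j| ≤ E + n * k * (A * E) := by
  induction n with
  | zero =>
    have : (j : ℝ) * h ∈ Icc 0 L := by
      refine ⟨by positivity, ?_⟩
      rw [← hNh]; gcongr
    simpa [upwind] using D.w_bd i _ this
  | succ n ih =>
    have h1 := ih fun m hm => hd m (by omega)
    have h2 := hd n (by omega)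
    have h3 := abs_sub_abs_le_abs_sub (upwind χ k h lam f σ N w β (n + 1) i j)
      (upwind χ k h lam f σ N w β n i j)
    push_cast
    nlinarith

set_option maxHeartbeats 1600000 in
/-- Weighted bound on time differences of the scheme.  The weight `1 - x / (2 L)` halves between
the inflow and the outflow end, which makes the boundary coupling (of gain `1`) contractive; the
factor `(1 + K k) ^ m` absorbs everything else. -/
theorem upwind_diff_bound (S : DiagSys δ a0 Λ Lc lam f σ) (D : DiagData L E σ w β)
    (hL : 0 < L) (hT : 0 < T) (hk : 0 < k) (hh : 0 < h) (hN : N ≠ 0) (hNh : N * h = L)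
    (hkχ : k = χ * h) (hχ : χ * Λ ≤ 1) (hkT : k ≤ T) (hE1 : E ≤ δ / 4)
    (hE2 : upA δ a0 Λ Lc L T * E * T ≤ δ / 4) (n : ℕ) (hn : n * k ≤ 2 * T) :
    ∀ m ≤ n, ∀ i, ∀ j ≤ N,
      |upwind χ k h lam f σ N w β (m + 1) i j - upwind χ k h lam f σ N w β m i j|
        ≤ 2 * (1 + Λ + 2 * Lc) * E * k * (1 + upK δ a0 Λ Lc L T * k) ^ m
            * (1 - j * h / (2 * L)) := by
  have hΛ := S.Λ_pos
  have hLc := S.hLc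
  have hδ := S.hδ
  have ha0 := S.ha0
  have hEn := D.hE
  have hχ0 : 0 < χ := by
    by_contra hc
    have : χ * h ≤ 0 := mul_nonpos_of_nonpos_of_nonneg (not_lt.1 hc) hh.le
    linarith
  have hA := upA_pos (L := L) (T := T) S
  have hK := upK_pos S hL hT
  set A := upA δ a0 Λ Lc L T with hAdef
  set K := upK δ a0 Λ Lc L T with hKdef
  have hB : (0:ℝ) ≤ 2 * (1 + Λ + 2 * Lc) * E * k := by positivity
  have hWle : ∀ j : ℕ, 1 - j * h / (2 * L) ≤ 1 := fun j => by
    have : (0:ℝ) ≤ j * h / (2 * L) := by positivity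
    linarith
  have hWge : ∀ j : ℕ, j ≤ N → 1 / 2 ≤ 1 - j * h / (2 * L) := fun j hj => by
    have h1 : (j:ℝ) * h ≤ L := by rw [← hNh]; gcongr
    have : (j:ℝ) * h / (2 * L) ≤ 1 / 2 := by
      rw [div_le_iff₀ (by positivity)]; linarith
    linarith
  have hWN : 1 - N * h / (2 * L) = 1 / 2 := by
    rw [hNh]; field_simp; norm_num
  -- the boundary node, given the outflow node
  have hbd : ∀ m : ℕ, ∀ i, ∀ P : ℝ, 1 ≤ P →
      |upwind χ k h lam f σ N w β (m + 1) (!i) N - upwind χ k h lam f σ N w β m (!i) N|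
        ≤ 2 * (1 + Λ + 2 * Lc) * E * k * P * (1 - N * h / (2 * L)) →
      |upwind χ k h lam f σ N w β (m + 1) i 0 - upwind χ k h lam f σ N w β m i 0|
        ≤ 2 * (1 + Λ + 2 * Lc) * E * k * P * (1 - (0:ℕ) * h / (2 * L)) := by
    intro m i P hP h1
    rw [hWN] at h1
    rw [upwind_bdry D hN hNh, upwind_bdry D hN hNh]
    have h2 := D.β_lip i ((m + 1 : ℕ) * k) (m * k)
    have h3 : |((m + 1 : ℕ) : ℝ) * k - m * k| = k := by
      push_cast; rw [show ((m:ℝ) + 1) * k - m * k = k by ring, abs_of_pos hk]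
    rw [h3] at h2
    set d := upwind χ k h lam f σ N w β (m + 1) (!i) N - upwind χ k h lam f σ N w β m (!i) N
    have h4 : |σ i * d| ≤ |d| := by
      rw [abs_mul]; nlinarith [S.hσ i, abs_nonneg d]
    calc _ = |(β i ((m + 1 : ℕ) * k) - β i (m * k)) + σ i * d| := by congr 1; ring
      _ ≤ E * k + 2 * (1 + Λ + 2 * Lc) * E * k * P * (1 / 2) :=
        (abs_add_le _ _).trans (add_le_add h2 (h4.trans h1))
      _ ≤ _ := by
        have h5 : E * k * 1 ≤ E * k * P := by gcongr
        have h6 : 0 ≤ E * k * P * (Λ + 2 * Lc) := by positivity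
        simp only [Nat.cast_zero, zero_mul, zero_div, sub_zero, mul_one]
        nlinarith
  induction n with
  | zero =>
    intro m hm
    obtain rfl : m = 0 := by omega
    have hpos : ∀ i, ∀ j ≤ N, j ≠ 0 →
        |upwind χ k h lam f σ N w β (0 + 1) i j - upwind χ k h lam f σ N w β 0 i j|
        ≤ 2 * (1 + Λ + 2 * Lc) * E * k * (1 + K * k) ^ 0 * (1 - j * h / (2 * L)) := by
      intro i j hj hj0
      rw [upwind_succ hj0]
      have hb : ∀ i, ∀ j ≤ N, |upwind χ k h lam f σ N w β 0 i j| ≤ E := fun i j hj => by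
        have : (j : ℝ) * h ∈ Icc 0 L := ⟨by positivity, by rw [← hNh]; gcongr⟩
        simpa [upwind] using D.w_bd i _ this
      have hs : |upwind χ k h lam f σ N w β 0 i j - upwind χ k h lam f σ N w β 0 i (j - 1)|
          ≤ E * h := by
        have h1 : (j : ℝ) * h ∈ Icc 0 L := ⟨by positivity, by rw [← hNh]; gcongr⟩
        have h2 : ((j - 1 : ℕ) : ℝ) * h ∈ Icc 0 L :=
          ⟨by positivity, by rw [← hNh]; gcongr; omega⟩
        have h3 := D.w_lip i _ _ h1 h2
        have h4 : |(j : ℝ) * h - (j - 1 : ℕ) * h| = h := by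
          rw [Nat.cast_sub (by omega)]; push_cast
          rw [show (j:ℝ) * h - (j - 1) * h = h by ring, abs_of_pos hh]
        rw [h4] at h3
        simpa [upwind] using h3
      set u := upwind χ k h lam f σ N w β 0
      have hu1 := hb i j hj
      have hu2 := hb (!i) (N - j) (by omega)
      have hl := S.lam_abs_le i (hu1.trans (by linarith)) (hu2.trans (by linarith : E ≤ δ))
      have hf := S.f_bd i (hu1.trans (by linarith)) (hu2.trans (by linarith : E ≤ δ))
      have e1 : |χ * lam i (u i j) (u (!i) (N - j)) * (u i j - u i (j - 1))| ≤ χ * Λ * (E * h) := by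
        rw [abs_mul, abs_mul, abs_of_pos hχ0]; gcongr
      have e2 : |k * f i (u i j) (u (!i) (N - j))| ≤ k * (Lc * (E + E)) := by
        rw [abs_mul, abs_of_pos hk]; gcongr; exact hf.trans (by gcongr)
      calc _ = |-(χ * lam i (u i j) (u (!i) (N - j)) * (u i j - u i (j - 1)))
              + k * f i (u i j) (u (!i) (N - j))| := by unfold upStep; congr 1; ring
        _ ≤ χ * Λ * (E * h) + k * (Lc * (E + E)) :=
          (abs_add_le _ _).trans (add_le_add (by rw [abs_neg]; exact e1) e2)
        _ = (Λ + 2 * Lc) * E * k := by rw [hkχ]; ring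
        _ ≤ _ := by
          have h1 := hWge j hj
          have h2 : 2 * (1 + Λ + 2 * Lc) * E * k * (1 / 2) ≤
            2 * (1 + Λ + 2 * Lc) * E * k * (1 - j * h / (2 * L)) := by gcongr
          have : 0 ≤ E * k := by positivity
          rw [pow_zero, mul_one]
          nlinarith
    intro i j hj
    by_cases hj0 : j = 0
    · subst hj0
      exact hbd 0 i _ (by simp) (hpos (!i) N le_rfl hN)
    · exact hpos i j hj hj0
  | succ n ih =>
    have hn' : (n : ℝ) * k ≤ 2 * T := by
      push_cast at hn; nlinarith
    have IH := ih hn'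
    intro m hm
    rcases Nat.lt_or_ge m (n + 1) with hlt | hge
    · exact IH m (by omega)
    obtain rfl : m = n + 1 := by omega
    have hdA : ∀ m ≤ n, ∀ i, ∀ j ≤ N,
        |upwind χ k h lam f σ N w β (m + 1) i j - upwind χ k h lam f σ N w β m i j|
          ≤ A * E * k := fun m hm i j hj =>
      (IH m hm i j hj).trans (upwind_growth_le S hL hT hk hEn
        (le_trans (by gcongr) hn') (hWle j))
    -- the bound already proved keeps the grid values in `[-δ, δ]`, where the coefficient bounds hold
    have hub : ∀ m ≤ n + 1, ∀ i, ∀ j ≤ N, |upwind χ k h lam f σ N w β m i j| ≤ δ := by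
      intro m hm i j hj
      have h1 := upwind_abs_le_of_diff (χ := χ) (lam := lam) (f := f) D hk hh hNh (A := A) (n := m)
        (i := i) hj (fun m' hm' => hdA m' (by omega) i j hj)
      have h2 : (m : ℝ) * k ≤ 3 * T := by
        have : (m : ℝ) ≤ n + 1 := by exact_mod_cast hm
        push_cast at hn
        nlinarith
      have h3 : 0 ≤ A * E := by positivity
      nlinarith
    have hpos : ∀ i, ∀ j ≤ N, j ≠ 0 →
        |upwind χ k h lam f σ N w β (n + 1 + 1) i j - upwind χ k h lam f σ N w β (n + 1) i j|
        ≤ 2 * (1 + Λ + 2 * Lc) * E * k * (1 + K * k) ^ (n + 1) * (1 - j * h / (2 * L)) := by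
      intro i j hj hj0
      set B := 2 * (1 + Λ + 2 * Lc) * E * k * (1 + K * k) ^ n with hBdef
      have hB0 : 0 ≤ B := by positivity
      have d1 := IH n le_rfl i j hj
      have d2 := IH n le_rfl i (j - 1) (by omega)
      have d3 := IH n le_rfl (!i) (N - j) (by omega)
      have d1A := hdA n le_rfl i j hj
      have a1 := hub n (by omega) i j hj
      have a2 := hub n (by omega) (!i) (N - j) (by omega)
      have b1 := hub (n + 1) (by omega) i j hj
      have b2 := hub (n + 1) (by omega) (!i) (N - j) (by omega)
      have hstep := upwind_succ (χ := χ) (k := k) (h := h) (lam := lam) (f := f) (σ := σ) (N := N)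
        (w := w) (β := β) (n := n) (i := i) hj0
      rw [upwind_succ hj0, hstep, upStep_sub]
      set u' := upwind χ k h lam f σ N w β (n + 1)
      set u := upwind χ k h lam f σ N w β n
      set l' := lam i (u' i j) (u' (!i) (N - j)) with hl'
      set l := lam i (u i j) (u (!i) (N - j)) with hl
      have hl'0 : a0 ≤ l' := S.lam_ge i _ _ b1 b2
      have hl'1 : l' ≤ Λ := S.lam_le i _ _ b1 b2
      have hl0 : a0 ≤ l := S.lam_ge i _ _ a1 a2
      have hll := S.lam_lip i _ _ _ _ b1 b2 a1 a2
      have hff := S.f_lip i _ _ _ _ b1 b2 a1 a2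
      have hf0 := S.f_bd i a1 a2
      have hν1 : χ * l' ≤ 1 := le_trans (by gcongr) hχ
      have hν0 : 0 ≤ χ * l' := by have := ha0.le.trans hl'0; positivity
      set W := 1 - (j:ℝ) * h / (2 * L) with hW
      have hWh := hWge j hj
      have hW1 : 1 - ((j - 1 : ℕ) : ℝ) * h / (2 * L) = W + h / (2 * L) := by
        rw [Nat.cast_sub (by omega)]; push_cast; rw [hW]; field_simp; ring
      rw [hW1] at d2
      have d3' : |u' (!i) (N - j) - u (!i) (N - j)| ≤ B * (2 * W) :=
        d3.trans (by
          have := hWle (N - j)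
          gcongr
          linarith)
      have hsum : |u' i j - u i j| + |u' (!i) (N - j) - u (!i) (N - j)| ≤ 3 * (B * W) := by
        linarith
      have hBW : 0 ≤ B * W := by have : 0 ≤ W := by linarith
                                 positivity
      -- the spatial difference is controlled through the scheme itself
      have hs : |u i j - u i (j - 1)| ≤ h * ((2 * Lc * δ + δ / T) / a0) := by
        have e1 : χ * l * (u i j - u i (j - 1)) =
            k * f i (u i j) (u (!i) (N - j)) - (u' i j - u i j) := by
          rw [hstep]; unfold upStep; ring
        have e2 : |χ * l * (u i j - u i (j - 1))| ≤ k * (2 * Lc * δ) + k * (δ / T) := by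
          rw [e1]
          refine (abs_sub _ _).trans (add_le_add ?_ ?_)
          · rw [abs_mul, abs_of_pos hk]
            gcongr
            nlinarith
          · refine d1A.trans ?_
            rw [show A * E * k = k * (A * E) by ring]
            gcongr
            rw [le_div_iff₀ hT]; linarith
        have e3 : χ * a0 * |u i j - u i (j - 1)| ≤ k * (2 * Lc * δ) + k * (δ / T) := by
          refine le_trans ?_ e2
          rw [abs_mul, abs_mul, abs_of_pos hχ0, abs_of_pos (ha0.trans_le hl0)]
          gcongr
        rw [← mul_div_assoc, le_div_iff₀ ha0]
        rw [hkχ] at e3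
        have e4 : χ * (|u i j - u i (j - 1)| * a0) ≤ χ * (h * (2 * Lc * δ + δ / T)) := by
          linarith
        exact le_of_mul_le_mul_left e4 hχ0
      set X := (2 * Lc * δ + δ / T) / a0 with hX
      have hX0 : 0 ≤ X := by positivity
      -- bounds for the terms of `upStep_sub`
      have t1 : |(1 - χ * l') * (u' i j - u i j)| ≤ (1 - χ * l') * (B * W) := by
        rw [abs_mul, abs_of_nonneg (by linarith : (0:ℝ) ≤ 1 - χ * l')]
        gcongr
      have t2 : |χ * l' * (u' i (j - 1) - u i (j - 1))| ≤ χ * l' * (B * (W + h / (2 * L))) := by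
        rw [abs_mul, abs_of_nonneg hν0]
        gcongr
      have t3 : |χ * (l' - l) * (u i j - u i (j - 1))| ≤ χ * (Lc * (3 * (B * W))) * (h * X) := by
        rw [abs_mul, abs_mul, abs_of_pos hχ0]
        gcongr
        exact hll.trans (by gcongr)
      have t4 : |k * (f i (u' i j) (u' (!i) (N - j)) - f i (u i j) (u (!i) (N - j)))| ≤
          k * (Lc * (3 * (B * W))) := by
        rw [abs_mul, abs_of_pos hk]
        gcongr
        exact hff.trans (by gcongr)
      have hfin : χ * l' * (B * (h / (2 * L))) ≤ k * (Λ / L) * (B * W) := by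
        calc χ * l' * (B * (h / (2 * L))) ≤ χ * Λ * (B * (h / (2 * L))) := by gcongr
          _ = k * (Λ / L) * (B * (1 / 2)) := by rw [hkχ]; field_simp
          _ ≤ _ := by gcongr
      calc _ ≤ (1 - χ * l') * (B * W) + χ * l' * (B * (W + h / (2 * L)))
            + χ * (Lc * (3 * (B * W))) * (h * X) + k * (Lc * (3 * (B * W))) := by
            refine (abs_add_le _ _).trans (add_le_add ?_ t4)
            refine (abs_sub _ _).trans (add_le_add ?_ t3)
            exact (abs_add_le _ _).trans (add_le_add t1 t2)
        _ = B * W + χ * l' * (B * (h / (2 * L))) + k * (3 * Lc * (X + 1)) * (B * W) := by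
            rw [hkχ]; ring
        _ ≤ B * W + k * (Λ / L) * (B * W) + k * (3 * Lc * (X + 1)) * (B * W) := by
            linarith
        _ = _ := by
            rw [hBdef, hKdef]; unfold upK; rw [← hX, pow_succ]; ring
    intro i j hj
    by_cases hj0 : j = 0
    · subst hj0
      exact hbd (n + 1) i _ (one_le_pow₀ (by nlinarith)) (hpos (!i) N le_rfl hN)
    · exact hpos i j hj hj0

end UpwindBounds

/-! ### Space differences and consistency of the upwind scheme -/

section UpwindLimit

variable {δ a0 Λ Lc : ℝ} {lam f : Bool → ℝ → ℝ → ℝ} {σ : Bool → ℝ}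
  {L T E χ k h : ℝ} {w β : Bool → ℝ → ℝ} {N : ℕ}

/-- Constant in the sup and Lipschitz bounds for the upwind scheme. -/
noncomputable def upC (δ a0 Λ Lc L T : ℝ) : ℝ :=
  1 + 2 * T * upA δ a0 Λ Lc L T + upA δ a0 Λ Lc L T
    + (2 * Lc * (1 + 2 * T * upA δ a0 Λ Lc L T) + upA δ a0 Λ Lc L T) / a0

theorem upC_pos (S : DiagSys δ a0 Λ Lc lam f σ) (hT : 0 < T) : 0 < upC δ a0 Λ Lc L T := by
  have := upA_pos (L := L) (T := T) S
  have := S.ha0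
  have := S.hLc
  unfold upC; positivity

/-- Sup, time-difference and space-difference bounds for grid functions. -/
structure GridBounds (M δ k h T : ℝ) (N : ℕ) (u : ℕ → Bool → ℕ → ℝ) : Prop where
  bd : ∀ n : ℕ, n * k ≤ 2 * T → ∀ i, ∀ j ≤ N, |u n i j| ≤ M
  bdδ : ∀ n : ℕ, n * k ≤ 2 * T → ∀ i, ∀ j ≤ N, |u n i j| ≤ δ
  dt : ∀ n : ℕ, n * k ≤ 2 * T → ∀ i, ∀ j ≤ N, |u (n + 1) i j - u n i j| ≤ M * k
  dx : ∀ n : ℕ, n * k ≤ 2 * T → ∀ i, ∀ j < N, |u n i (j + 1) - u n i j| ≤ M * h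

/-- Bounds linear in the size `E` of the data. Since `lam ≥ a0`, the scheme itself converts bounds
on time differences into bounds on space differences. -/
theorem upwind_gridBounds (S : DiagSys δ a0 Λ Lc lam f σ) (D : DiagData L E σ w β)
    (hL : 0 < L) (hT : 0 < T) (hk : 0 < k) (hh : 0 < h) (hN : N ≠ 0) (hNh : N * h = L)
    (hkχ : k = χ * h) (hχ : χ * Λ ≤ 1) (hkT : k ≤ T) (hE1 : E ≤ δ / 4)
    (hE2 : upA δ a0 Λ Lc L T * E * T ≤ δ / 4) :
    GridBounds (upC δ a0 Λ Lc L T * E) δ k h T N (upwind χ k h lam f σ N w β) := by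
  have hA := upA_pos (L := L) (T := T) S
  have hLc := S.hLc
  have ha0 := S.ha0
  have hE := D.hE
  have hdt : ∀ n : ℕ, n * k ≤ 2 * T → ∀ i, ∀ j ≤ N,
      |upwind χ k h lam f σ N w β (n + 1) i j - upwind χ k h lam f σ N w β n i j|
        ≤ upA δ a0 Λ Lc L T * E * k := by
    intro n hn i j hj
    refine (upwind_diff_bound S D hL hT hk hh hN hNh hkχ hχ hkT hE1 hE2 n hn n le_rfl i j hj).trans
      (upwind_growth_le S hL hT hk hE hn ?_)
    have : (0:ℝ) ≤ j * h / (2 * L) := by positivity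
    linarith
  have hb : ∀ n : ℕ, n * k ≤ 2 * T → ∀ i, ∀ j ≤ N,
      |upwind χ k h lam f σ N w β n i j| ≤ E + 2 * T * (upA δ a0 Λ Lc L T * E) := by
    intro n hn i j hj
    refine (upwind_abs_le_of_diff D hk hh hNh hj (A := upA δ a0 Λ Lc L T)
      fun m hm => hdt m (le_trans (by gcongr) hn) i j hj).trans ?_
    gcongr
  have hbδ : ∀ n : ℕ, n * k ≤ 2 * T → ∀ i, ∀ j ≤ N,
      |upwind χ k h lam f σ N w β n i j| ≤ δ := by
    intro n hn i j hj
    refine (hb n hn i j hj).trans ?_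
    nlinarith [S.hδ]
  have hχ0 : 0 < χ := by
    by_contra hc
    have : χ * h ≤ 0 := mul_nonpos_of_nonpos_of_nonneg (not_lt.1 hc) hh.le
    linarith
  set A := upA δ a0 Λ Lc L T with hAdef
  have hC : upC δ a0 Λ Lc L T = 1 + 2 * T * A + A + (2 * Lc * (1 + 2 * T * A) + A) / a0 := rfl
  have hX : 0 ≤ (2 * Lc * (1 + 2 * T * A) + A) / a0 := by positivity
  refine ⟨?_, hbδ, ?_, ?_⟩
  · intro n hn i j hj
    refine (hb n hn i j hj).trans ?_
    rw [hC]
    nlinarith [mul_nonneg hA.le hE, mul_nonneg hX hE]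
  · intro n hn i j hj
    refine (hdt n hn i j hj).trans ?_
    gcongr
    rw [hC]
    have : 0 ≤ T * A := by positivity
    linarith
  · intro n hn i j hj
    have h1 := hdt n hn i (j + 1) hj
    have b1 := hbδ n hn i (j + 1) hj
    have b2 := hbδ n hn (!i) (N - (j + 1)) (by omega)
    have c1 := hb n hn i (j + 1) hj
    have c2 := hb n hn (!i) (N - (j + 1)) (by omega)
    rw [upwind_succ (by omega : j + 1 ≠ 0)] at h1
    set u := upwind χ k h lam f σ N w β n
    have hl := S.lam_ge i _ _ b1 b2
    have hf := S.f_bd i b1 b2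
    set l := lam i (u i (j + 1)) (u (!i) (N - (j + 1)))
    have e1 : χ * l * (u i (j + 1) - u i j) =
        k * f i (u i (j + 1)) (u (!i) (N - (j + 1)))
          - (upStep χ k lam f N u i (j + 1) - u i (j + 1)) := by
      unfold upStep; simp only [Nat.add_sub_cancel]; ring
    have e2 : |χ * l * (u i (j + 1) - u i j)| ≤
        k * (Lc * (2 * (E + 2 * T * (A * E)))) + A * E * k := by
      rw [e1]
      refine (abs_sub _ _).trans (add_le_add ?_ h1)
      rw [abs_mul, abs_of_pos hk]
      gcongr
      refine hf.trans ?_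
      gcongr
      linarith
    have e3 : χ * (a0 * |u i (j + 1) - u i j|) ≤
        χ * (h * E * (2 * Lc * (1 + 2 * T * A) + A)) := by
      calc χ * (a0 * |u i (j + 1) - u i j|) ≤ χ * (l * |u i (j + 1) - u i j|) := by gcongr
        _ = |χ * l * (u i (j + 1) - u i j)| := by
          rw [abs_mul, abs_mul, abs_of_pos hχ0, abs_of_pos (ha0.trans_le hl)]; ring
        _ ≤ _ := e2.trans_eq (by rw [hkχ]; ring)
    have e4 := le_of_mul_le_mul_left e3 hχ0
    have e5 : |u i (j + 1) - u i j| ≤ (2 * Lc * (1 + 2 * T * A) + A) / a0 * E * h := by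
      rw [show (2 * Lc * (1 + 2 * T * A) + A) / a0 * E * h =
        (h * E * (2 * Lc * (1 + 2 * T * A) + A)) / a0 by ring, le_div_iff₀ ha0]
      linarith
    refine e5.trans ?_
    gcongr
    rw [hC]
    have : 0 ≤ T * A := by positivity
    linarith

/-- Space-time Lipschitz bound between arbitrary grid points. -/
theorem GridBounds.lip {M : ℝ} {u : ℕ → Bool → ℕ → ℝ} (hk : 0 < k)
    (G : GridBounds M δ k h T N u) {n n' : ℕ} (hn : n * k ≤ 2 * T) (hn' : n' * k ≤ 2 * T)
    (i : Bool) {j j' : ℕ} (hj : j ≤ N) (hj' : j' ≤ N) :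
    |u n i j - u n' i j'| ≤ M * (|n * k - n' * k| + |j * h - j' * h|) := by
  have key : ∀ n n' : ℕ, n ≤ n' → n' * k ≤ 2 * T → |u n' i j - u n i j| ≤ M * (n' * k - n * k) := by
    intro n n' hle
    induction n', hle using Nat.le_induction with
    | base => intro; simp
    | succ m hm ih =>
      intro hm'
      have hm2 : (m : ℝ) * k ≤ 2 * T := by push_cast at hm'; nlinarith
      have h1 := ih hm2
      have h2 := G.dt m hm2 i j hj
      calc _ = |(u (m + 1) i j - u m i j) + (u m i j - u n i j)| := by congr 1; ring
        _ ≤ _ := (abs_add_le _ _).trans (add_le_add h2 h1)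
        _ = _ := by push_cast; ring
  have keyx : ∀ j j' : ℕ, j ≤ j' → j' ≤ N → |u n' i j' - u n' i j| ≤ M * (j' * h - j * h) := by
    intro j j' hle
    induction j', hle using Nat.le_induction with
    | base => intro; simp
    | succ m hm ih =>
      intro hm'
      have h1 := ih (by omega)
      have h2 := G.dx n' hn' i m (by omega)
      calc _ = |(u n' i (m + 1) - u n' i m) + (u n' i m - u n' i j)| := by congr 1; ring
        _ ≤ _ := (abs_add_le _ _).trans (add_le_add h2 h1)
        _ = _ := by push_cast; ring
  have hM : 0 ≤ M * k := (abs_nonneg _).trans (G.dt n hn i j hj)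
  have hM0 : 0 ≤ M := by
    by_contra hc
    nlinarith
  have h1 : |u n i j - u n' i j| ≤ M * |n * k - n' * k| := by
    rcases le_total n n' with hle | hle
    · rw [abs_sub_comm]
      refine (key n n' hle hn').trans ?_
      gcongr
      rw [abs_sub_comm]; exact le_abs_self _
    · refine (key n' n hle hn).trans ?_
      gcongr
      exact le_abs_self _
  have h2 : |u n' i j - u n' i j'| ≤ M * |j * h - j' * h| := by
    rcases le_total j j' with hle | hle
    · rw [abs_sub_comm]
      refine (keyx j j' hle hj').trans ?_
      gcongr
      rw [abs_sub_comm]; exact le_abs_self _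
    · refine (keyx j' j hle hj).trans ?_
      gcongr
      exact le_abs_self _
  calc _ = |(u n i j - u n' i j) + (u n' i j - u n' i j')| := by congr 1; ring
    _ ≤ _ := (abs_add_le _ _).trans (add_le_add h1 h2)
    _ = _ := by ring

set_option maxHeartbeats 800000 in
/-- Local consistency of the scheme along a straight line of slope `λ₀`.  The parabola
`Y² / κ + κ` (where `Y` is the distance to the line) dominates `2 |Y|` at the initial layer and is
almost preserved by the upwind averaging, because `(1 - ν) Y² + ν (Y - h)²` differs from
`(Y - λ₀ k)²` only by terms of order `k (|λ - λ₀| |Y| + h)`. -/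
theorem upwind_barrier {M κ e Y0 l0 f0 : ℝ} {n0 A J : ℕ} {j0 : ℕ} (i : Bool) (hκ : 0 < κ)
    (hM : 0 ≤ M) (hk : 0 < k) (hh : 0 < h) (hkχ : k = χ * h) (hχ : χ * Λ ≤ 1)
    (hAJ : A ≤ J)
    (hl : ∀ a < A, ∀ j, J - A ≤ j → j ≤ J →
      |lam i (upwind χ k h lam f σ N w β (n0 + a) i j)
        (upwind χ k h lam f σ N w β (n0 + a) (!i) (N - j)) - l0| ≤ e)
    (hl' : ∀ a < A, ∀ j, J - A ≤ j → j ≤ J →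
      lam i (upwind χ k h lam f σ N w β (n0 + a) i j)
        (upwind χ k h lam f σ N w β (n0 + a) (!i) (N - j)) ∈ Icc 0 Λ)
    (hf : ∀ a < A, ∀ j, J - A ≤ j → j ≤ J →
      |f i (upwind χ k h lam f σ N w β (n0 + a) i j)
        (upwind χ k h lam f σ N w β (n0 + a) (!i) (N - j)) - f0| ≤ e)
    (hY : ∀ a < A, ∀ j, J - A ≤ j → j ≤ J → |j * h - j0 * h - l0 * (a * k)| ≤ Y0)
    (h0 : ∀ j, J - A ≤ j → j ≤ J → |upwind χ k h lam f σ N w β n0 i j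
      - upwind χ k h lam f σ N w β n0 i j0| ≤ M * |j * h - j0 * h|) :
    |upwind χ k h lam f σ N w β (n0 + A) i J - upwind χ k h lam f σ N w β n0 i j0 - A * k * f0|
      ≤ M / 2 * ((J * h - j0 * h - l0 * (A * k)) ^ 2 / κ + κ)
        + A * k * (e + M / (2 * κ) * (2 * e * Y0 + Λ * h)) := by
  have hχ0 : 0 < χ := by
    by_contra hc
    have : χ * h ≤ 0 := mul_nonpos_of_nonpos_of_nonneg (not_lt.1 hc) hh.le
    linarith
  have hq : ∀ y : ℝ, M / 2 * (y / κ + κ) = M / (2 * κ) * y + M / 2 * κ := by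
    intro y; field_simp
  -- induction over the numerical domain of dependence of the node `J`
  suffices H : ∀ a ≤ A, ∀ j, J - A + a ≤ j → j ≤ J →
      |upwind χ k h lam f σ N w β (n0 + a) i j - upwind χ k h lam f σ N w β n0 i j0 - a * k * f0|
        ≤ M / 2 * ((j * h - j0 * h - l0 * (a * k)) ^ 2 / κ + κ)
          + a * k * (e + M / (2 * κ) * (2 * e * Y0 + Λ * h)) from H A le_rfl J (by omega) le_rfl
  intro a
  induction a with
  | zero =>
    intro _ j hj1 hj2
    simp only [Nat.cast_zero, zero_mul, sub_zero, add_zero, mul_zero]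
    refine (h0 j (by omega) hj2).trans ?_
    set Y : ℝ := j * h - j0 * h
    have h1 : 2 * |Y| ≤ Y ^ 2 / κ + κ := by
      have : 0 ≤ (|Y| - κ) ^ 2 / κ := by positivity
      have h2 : (|Y| - κ) ^ 2 / κ = Y ^ 2 / κ + κ - 2 * |Y| := by
        rw [sub_sq, sq_abs]; field_simp; ring
      linarith
    nlinarith
  | succ a ih =>
    intro ha j hj1 hj2
    have i1 := ih (by omega) j (by omega) hj2
    have i2 := ih (by omega) (j - 1) (by omega) (by omega)
    have g1 := hl a (by omega) j (by omega) hj2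
    have g2 := hl' a (by omega) j (by omega) hj2
    have g3 := hf a (by omega) j (by omega) hj2
    have g4 := hY a (by omega) j (by omega) hj2
    rw [show n0 + (a + 1) = n0 + a + 1 by ring, upwind_succ (by omega : j ≠ 0)]
    unfold upStep
    set U := upwind χ k h lam f σ N w β n0 i j0
    set u := upwind χ k h lam f σ N w β (n0 + a)
    set l := lam i (u i j) (u (!i) (N - j))
    set F := f i (u i j) (u (!i) (N - j))
    set Γ := e + M / (2 * κ) * (2 * e * Y0 + Λ * h)
    have hj : ((j - 1 : ℕ) : ℝ) * h = j * h - h := by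
      rw [Nat.cast_sub (by omega)]; push_cast; ring
    rw [hj] at i2
    set Y : ℝ := j * h - j0 * h - l0 * (a * k) with hYd
    have hY2 : (j:ℝ) * h - h - j0 * h - l0 * (a * k) = Y - h := by rw [hYd]; ring
    have hY3 : (j:ℝ) * h - j0 * h - l0 * (((a + 1 : ℕ):ℝ) * k) = Y - l0 * k := by
      rw [hYd]; push_cast; ring
    rw [hY2] at i2
    rw [hY3]
    have hν0 : 0 ≤ χ * l := mul_nonneg hχ0.le g2.1
    have hν1 : χ * l ≤ 1 := le_trans (by gcongr; exact g2.2) hχ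
    have e1 : u i j - χ * l * (u i j - u i (j - 1)) + k * F - U - ((a + 1 : ℕ):ℝ) * k * f0 =
        (1 - χ * l) * (u i j - U - a * k * f0) + χ * l * (u i (j - 1) - U - a * k * f0)
          + k * (F - f0) := by push_cast; ring
    rw [e1]
    have e2 : |(1 - χ * l) * (u i j - U - a * k * f0)| ≤
        (1 - χ * l) * (M / 2 * (Y ^ 2 / κ + κ) + a * k * Γ) := by
      rw [abs_mul, abs_of_nonneg (by linarith : (0:ℝ) ≤ 1 - χ * l)]
      gcongr
    have e3 : |χ * l * (u i (j - 1) - U - a * k * f0)| ≤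
        χ * l * (M / 2 * ((Y - h) ^ 2 / κ + κ) + a * k * Γ) := by
      rw [abs_mul, abs_of_nonneg hν0]
      gcongr
    have e4 : |k * (F - f0)| ≤ k * e := by
      rw [abs_mul, abs_of_pos hk]; gcongr
    refine (abs_add_le _ _).trans ((add_le_add ((abs_add_le _ _).trans (add_le_add e2 e3))
      e4).trans ?_)
    -- averaging almost preserves the parabola transported with speed `l0`
    have e5 : (1 - χ * l) * Y ^ 2 + χ * l * (Y - h) ^ 2 ≤
        (Y - l0 * k) ^ 2 + k * (2 * e * Y0 + Λ * h) := by
      have q1 : (1 - χ * l) * Y ^ 2 + χ * l * (Y - h) ^ 2 =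
          (Y - l0 * k) ^ 2 + k * (2 * ((l0 - l) * Y) + l * h) - (l0 * k) ^ 2 := by
        rw [hkχ]; ring
      have q2 : (l0 - l) * Y ≤ e * Y0 := by
        refine (le_abs_self _).trans ?_
        rw [abs_mul, abs_sub_comm]
        have := abs_nonneg (l - l0)
        exact mul_le_mul g1 g4 (abs_nonneg _) (this.trans g1)
      have q3 : l * h ≤ Λ * h := by gcongr; exact g2.2
      have q4 : k * (2 * ((l0 - l) * Y) + l * h) ≤ k * (2 * e * Y0 + Λ * h) := by
        gcongr k * ?_
        linarith
      nlinarith [sq_nonneg (l0 * k)]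
    have e6 : M / (2 * κ) * ((1 - χ * l) * Y ^ 2 + χ * l * (Y - h) ^ 2) ≤
        M / (2 * κ) * ((Y - l0 * k) ^ 2 + k * (2 * e * Y0 + Λ * h)) := by gcongr
    have e7 : (1 - χ * l) * (M / 2 * (Y ^ 2 / κ + κ) + a * k * Γ)
        + χ * l * (M / 2 * ((Y - h) ^ 2 / κ + κ) + a * k * Γ) + k * e =
        M / (2 * κ) * ((1 - χ * l) * Y ^ 2 + χ * l * (Y - h) ^ 2) + M / 2 * κ + a * k * Γ + k * e := by
      rw [hq, hq]; ring
    rw [e7]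
    calc _ ≤ M / (2 * κ) * ((Y - l0 * k) ^ 2 + k * (2 * e * Y0 + Λ * h)) + M / 2 * κ
          + a * k * Γ + k * e := by linarith
      _ = _ := by
        rw [hq]
        push_cast
        simp only [Γ]
        ring

end UpwindLimit

/-! ### Lipschitz solutions: local consistency in the limit -/

/-- A Lipschitz solution of the diagonal system on `[0, T] × [0, L]` (extended by clamping both
variables).  The equation is encoded by `cons`: following a straight line of slope
`lamᵢ` for a time `d`, the value of `rᵢ` changes by `d fᵢ + o(d)` (take `κ = η d`). -/
structure Broad (T L M δ Cc : ℝ) (lam f : Bool → ℝ → ℝ → ℝ) (σ : Bool → ℝ)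
    (w β : Bool → ℝ → ℝ) (r : Bool → ℝ → ℝ → ℝ) : Prop where
  hM : 0 ≤ M
  bd : ∀ i t x, |r i t x| ≤ M
  bdδ : ∀ i t x, |r i t x| ≤ δ
  lip : ∀ i t t' x x', |r i t x - r i t' x'| ≤ M * (|t - t'| + |x - x'|)
  init : ∀ i, ∀ x ∈ Icc 0 L, r i 0 x = w i x
  bdry : ∀ i, ∀ t ∈ Icc 0 T, r i t 0 = β i t + σ i * r (!i) t L
  cons : ∀ i t x d κ, 0 ≤ t → 0 < d → 0 < κ → t + d ≤ T → Cc * d < x →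
    x + lam i (r i t x) (r (!i) t (L - x)) * d ≤ L →
    |r i (t + d) (x + lam i (r i t x) (r (!i) t (L - x)) * d) - r i t x
        - d * f i (r i t x) (r (!i) t (L - x))| ≤ Cc * (κ + d ^ 2 + d ^ 3 / κ)

section Limit

variable {δ a0 Λ Lc : ℝ} {lam f : Bool → ℝ → ℝ → ℝ} {σ : Bool → ℝ}
  {L T E χ k h : ℝ} {w β : Bool → ℝ → ℝ} {N : ℕ}

theorem floor_div_mul_le {t k : ℝ} (ht : 0 ≤ t) (hk : 0 < k) : (⌊t / k⌋₊ : ℝ) * k ≤ t := by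
  have := Nat.floor_le (div_nonneg ht hk.le)
  rwa [le_div_iff₀ hk] at this

theorem lt_floor_div_mul {t k : ℝ} (hk : 0 < k) : t < (⌊t / k⌋₊ : ℝ) * k + k := by
  have := Nat.lt_floor_add_one (t / k)
  rw [div_lt_iff₀ hk] at this
  linarith

theorem floor_div_le_of_le {x h : ℝ} (hx : x ≤ L) (hh : 0 < h) (hNh : N * h = L) :
    ⌊x / h⌋₊ ≤ N := by
  apply Nat.floor_le_of_le
  rw [div_le_iff₀ hh]
  linarith

set_option maxHeartbeats 1600000 in
/-- The consistency estimate for a fixed mesh: `ξ` measures all discretisation errors. -/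
theorem upwind_cons_step {M ξ d κ t x ri rj r1 : ℝ} (i : Bool) (S : DiagSys δ a0 Λ Lc lam f σ)
    (hM : 0 ≤ M) (hk : 0 < k) (hh : 0 < h) (hχ0 : 0 < χ) (hkχ : k = χ * h) (hχ : χ * Λ ≤ 1)
    (hNh : N * h = L) (G : GridBounds M δ k h T N (upwind χ k h lam f σ N w β))
    (hξd : ξ ≤ d) (hhξ : h ≤ ξ) (hkξ : k ≤ ξ) (hκ : 0 < κ)
    (ht : 0 ≤ t) (htT : t + d ≤ T) (hx : (1 + 2 / χ) * d < x) (hri : |ri| ≤ δ) (hrj : |rj| ≤ δ)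
    (hxL : x + lam i ri rj * d ≤ L)
    (h1 : |upwind χ k h lam f σ N w β ⌊t / k⌋₊ i ⌊x / h⌋₊ - ri| ≤ ξ)
    (h2 : |upwind χ k h lam f σ N w β ⌊t / k⌋₊ (!i) ⌊(L - x) / h⌋₊ - rj| ≤ ξ)
    (h3 : |upwind χ k h lam f σ N w β ⌊(t + d) / k⌋₊ i ⌊(x + lam i ri rj * d) / h⌋₊ - r1| ≤ ξ) :
    |r1 - ri - d * f i ri rj| ≤ M / 2 * κ
      + 2 * d * (Lc * (M * (6 + 2 * (Λ + 3 + 2 / χ)) + 2) * d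
        + M / κ * (Lc * (M * (6 + 2 * (Λ + 3 + 2 / χ)) + 2) * d) * ((Λ + 3 + 2 / χ + 2 * Λ) * d))
      + ξ * (2 + 2 * Lc * δ + M / 2 * ((2 + Λ) ^ 2 * d / κ) + d * M * Λ / κ) := by
  have hΛ := S.Λ_pos
  have hLc := S.hLc
  have ha0 := S.ha0
  have hξ : 0 < ξ := hh.trans_le hhξ
  have hd : 0 < d := hξ.trans_le hξd
  have hl0 := S.lam_ge i ri rj hri hrj
  have hl1 := S.lam_le i ri rj hri hrj
  have hf0 := S.f_bd i hri hrj
  set l0 := lam i ri rj with hl0d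
  set f0 := f i ri rj with hf0d
  have hl00 : 0 < l0 := ha0.trans_le hl0
  have hc2 : 0 < 2 / χ := by positivity
  set c2 := 2 / χ with hc2d
  set n0 := ⌊t / k⌋₊
  set n1 := ⌊(t + d) / k⌋₊
  set j0 := ⌊x / h⌋₊
  set J := ⌊(x + l0 * d) / h⌋₊
  set j0' := ⌊(L - x) / h⌋₊
  have hx0 : 0 < x := lt_trans (by positivity) hx
  have hl0d' : 0 < l0 * d := by positivity
  have hl0dΛ : l0 * d ≤ Λ * d := by gcongr
  have hxL' : x ≤ L := by linarith
  have n0a : (n0:ℝ) * k ≤ t := floor_div_mul_le ht hk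
  have n0b : t < n0 * k + k := lt_floor_div_mul hk
  have n1a : (n1:ℝ) * k ≤ t + d := floor_div_mul_le (by linarith) hk
  have n1b : t + d < n1 * k + k := lt_floor_div_mul hk
  have j0a : (j0:ℝ) * h ≤ x := floor_div_mul_le hx0.le hh
  have j0b : x < j0 * h + h := lt_floor_div_mul hh
  have Ja : (J:ℝ) * h ≤ x + l0 * d := floor_div_mul_le (by linarith) hh
  have Jb : x + l0 * d < J * h + h := lt_floor_div_mul hh
  have j0'a : (j0':ℝ) * h ≤ L - x := floor_div_mul_le (by linarith) hh
  have j0'b : L - x < j0' * h + h := lt_floor_div_mul hh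
  have j0N : j0 ≤ N := floor_div_le_of_le hxL' hh hNh
  have j0'N : j0' ≤ N := floor_div_le_of_le (by linarith) hh hNh
  have JN : J ≤ N := floor_div_le_of_le hxL hh hNh
  have hn01 : n0 ≤ n1 := by
    apply Nat.floor_le_floor
    gcongr
    linarith
  obtain ⟨A, hA⟩ := Nat.exists_eq_add_of_le hn01
  rw [hA] at n1a n1b h3
  push_cast at n1a n1b
  have Ak1 : (A:ℝ) * k ≤ d + ξ := by linarith
  have Ak2 : d - ξ ≤ (A:ℝ) * k := by linarith
  have Ah : (A:ℝ) * h ≤ c2 * d := by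
    have : (A:ℝ) * h * χ ≤ 2 * d := by
      have : (A:ℝ) * h * χ = A * k := by rw [hkχ]; ring
      linarith
    rw [hc2d, div_mul_eq_mul_div, le_div_iff₀ hχ0]
    exact this
  have hAJ : A ≤ J := by
    have : (A:ℝ) * h ≤ J * h := by nlinarith
    exact_mod_cast le_of_mul_le_mul_right this hh
  have hTle : ∀ a ≤ A, ((n0 + a : ℕ):ℝ) * k ≤ 2 * T := by
    intro a ha
    have : (a:ℝ) * k ≤ A * k := by gcongr
    push_cast
    linarith
  have hak : ∀ a < A, (a:ℝ) * k ≤ 2 * d := by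
    intro a ha
    have : (a:ℝ) * k ≤ A * k := by gcongr
    linarith
  have hjr : ∀ j, J - A ≤ j → j ≤ J → |(j:ℝ) * h - j0 * h| ≤ (Λ + 3 + c2) * d := by
    intro j hj1 hj2
    have e1 : (j:ℝ) * h ≤ J * h := by gcongr
    have e2 : (J:ℝ) * h ≤ j * h + A * h := by
      rw [← add_mul]; gcongr; exact_mod_cast (by omega : J ≤ j + A)
    have : 0 < Λ * d := by positivity
    have : 0 < c2 * d := by positivity
    rw [abs_le]
    constructor <;> linarith
  set R := (Λ + 3 + c2) * d with hR
  -- on the numerical domain of dependence both components stay close to their values at the base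
  -- point
  have hu : ∀ a < A, ∀ j, J - A ≤ j → j ≤ J →
      |upwind χ k h lam f σ N w β (n0 + a) i j - ri| ≤ M * (2 * d + R) + d := by
    intro a ha j hj1 hj2
    have e1 := G.lip hk (hTle a ha.le) (hTle 0 (by omega)) i (hj2.trans JN) j0N
    have e2 := hjr j hj1 hj2
    have e3 : |((n0 + a : ℕ):ℝ) * k - ((n0 + 0 : ℕ):ℝ) * k| ≤ 2 * d := by
      have : 0 ≤ (a:ℝ) * k := by positivity
      push_cast
      rw [show ((n0:ℝ) + a) * k - (n0 + 0) * k = a * k by ring, abs_of_nonneg this]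
      exact hak a ha
    calc _ ≤ _ := abs_sub_le _ (upwind χ k h lam f σ N w β n0 i j0) _
      _ ≤ M * (2 * d + R) + d := by
        refine add_le_add (e1.trans ?_) (h1.trans hξd)
        gcongr
  have hu' : ∀ a < A, ∀ j, J - A ≤ j → j ≤ J →
      |upwind χ k h lam f σ N w β (n0 + a) (!i) (N - j) - rj| ≤ M * (4 * d + R) + d := by
    intro a ha j hj1 hj2
    have e1 := G.lip hk (hTle a ha.le) (hTle 0 (by omega)) (!i) (by omega : N - j ≤ N) j0'N
    have e2 := hjr j hj1 hj2
    have e3 : |((n0 + a : ℕ):ℝ) * k - ((n0 + 0 : ℕ):ℝ) * k| ≤ 2 * d := by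
      have : 0 ≤ (a:ℝ) * k := by positivity
      push_cast
      rw [show ((n0:ℝ) + a) * k - (n0 + 0) * k = a * k by ring, abs_of_nonneg this]
      exact hak a ha
    have e4 : |((N - j : ℕ):ℝ) * h - j0' * h| ≤ R + 2 * d := by
      rw [Nat.cast_sub (hj2.trans JN), sub_mul, hNh]
      rw [abs_le] at e2 ⊢
      constructor <;> linarith [e2.1, e2.2]
    calc _ ≤ _ := abs_sub_le _ (upwind χ k h lam f σ N w β n0 (!i) j0') _
      _ ≤ M * (4 * d + R) + d := by
        refine add_le_add (e1.trans (mul_le_mul_of_nonneg_left ?_ hM)) (h2.trans hξd)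
        linarith
  set e := Lc * (M * (6 + 2 * (Λ + 3 + c2)) + 2) * d with he
  have hesum : Lc * ((M * (2 * d + R) + d) + (M * (4 * d + R) + d)) = e := by
    rw [he, hR]; ring
  have hbδ : ∀ a < A, ∀ j ≤ N, ∀ i, |upwind χ k h lam f σ N w β (n0 + a) i j| ≤ δ :=
    fun a ha j hj i => G.bdδ _ (hTle a ha.le) i j hj
  have hl00' := hl00
  have key := upwind_barrier (χ := χ) (k := k) (h := h) (lam := lam) (f := f) (σ := σ) (N := N)
    (w := w) (β := β) (M := M) (κ := κ) (e := e) (Y0 := (Λ + 3 + c2 + 2 * Λ) * d) (l0 := l0)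
    (f0 := f0) (n0 := n0) (A := A) (J := J) (j0 := j0) i hκ hM hk hh hkχ hχ hAJ
    (fun a ha j hj1 hj2 => by
      have hjN := hj2.trans JN
      refine (S.lam_lip i _ _ _ _ (hbδ a ha j hjN i) (hbδ a ha (N - j) (by omega) (!i))
        hri hrj).trans ?_
      rw [← hesum]
      gcongr
      · exact hu a ha j hj1 hj2
      · exact hu' a ha j hj1 hj2)
    (fun a ha j hj1 hj2 => by
      have hjN := hj2.trans JN
      exact ⟨ha0.le.trans (S.lam_ge i _ _ (hbδ a ha j hjN i) (hbδ a ha (N - j) (by omega) (!i))),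
        S.lam_le i _ _ (hbδ a ha j hjN i) (hbδ a ha (N - j) (by omega) (!i))⟩)
    (fun a ha j hj1 hj2 => by
      have hjN := hj2.trans JN
      refine (S.f_lip i _ _ _ _ (hbδ a ha j hjN i) (hbδ a ha (N - j) (by omega) (!i))
        hri hrj).trans ?_
      rw [← hesum]
      gcongr
      · exact hu a ha j hj1 hj2
      · exact hu' a ha j hj1 hj2)
    (fun a ha j hj1 hj2 => by
      have e1 := hjr j hj1 hj2
      have e2 := hak a ha
      have e3 : 0 ≤ (a:ℝ) * k := by positivity
      have e4 : |l0 * (a * k)| ≤ Λ * (2 * d) := by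
        rw [abs_of_nonneg (by positivity)]; gcongr
      refine (abs_sub _ _).trans ((add_le_add e1 e4).trans_eq ?_)
      rw [hR]; ring)
    (fun j hj1 hj2 => by
      have e1 := G.lip hk (hTle 0 (by omega)) (hTle 0 (by omega)) i (hj2.trans JN) j0N
      simpa using e1)
  set uJ := upwind χ k h lam f σ N w β (n0 + A) i J
  set u0 := upwind χ k h lam f σ N w β n0 i j0
  clear_value uJ u0
  have hYf : ((J:ℝ) * h - j0 * h - l0 * (A * k)) ^ 2 ≤ (2 + Λ) ^ 2 * (ξ * d) := by
    have e1 : |(J:ℝ) * h - j0 * h - l0 * (A * k)| ≤ (2 + Λ) * ξ := by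
      have q1 : |l0 * (A * k - d)| ≤ Λ * ξ := by
        rw [abs_mul, abs_of_pos hl00]
        gcongr
        rw [abs_le]; constructor <;> linarith
      rw [abs_le] at q1 ⊢
      constructor <;> linarith [q1.1, q1.2]
    calc _ = |(J:ℝ) * h - j0 * h - l0 * (A * k)| ^ 2 := (sq_abs _).symm
      _ ≤ ((2 + Λ) * ξ) ^ 2 := by gcongr
      _ = (2 + Λ) ^ 2 * (ξ * ξ) := by ring
      _ ≤ _ := by gcongr
  have he0 : 0 < e := by positivity
  set Y0 := (Λ + 3 + c2 + 2 * Λ) * d with hY0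
  have hY00 : 0 < Y0 := by positivity
  have key2 : |uJ - u0 - A * k * f0| ≤ M / 2 * ((2 + Λ) ^ 2 * (ξ * d) / κ + κ)
      + 2 * d * (e + M / (2 * κ) * (2 * e * Y0 + Λ * ξ)) := by
    refine key.trans (add_le_add ?_ (mul_le_mul (by linarith) ?_ (by positivity)
      (by positivity)))
    · gcongr
    · gcongr
  have e3 : |(A * k - d) * f0| ≤ ξ * (2 * Lc * δ) := by
    rw [abs_mul]
    have q1 : |A * k - d| ≤ ξ := by rw [abs_le]; constructor <;> linarith
    have q2 : |f0| ≤ 2 * Lc * δ := hf0.trans (by nlinarith)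
    gcongr
  calc |r1 - ri - d * f0|
      = |(uJ - u0 - A * k * f0) - (uJ - r1) + (u0 - ri) + (A * k - d) * f0| := by
        congr 1; ring
    _ ≤ (M / 2 * ((2 + Λ) ^ 2 * (ξ * d) / κ + κ)
      + 2 * d * (e + M / (2 * κ) * (2 * e * Y0 + Λ * ξ))) + ξ + ξ + ξ * (2 * Lc * δ) :=
      (abs_add_le _ _).trans (add_le_add ((abs_add_le _ _).trans (add_le_add
        ((abs_sub _ _).trans (add_le_add key2 h3)) h1)) e3)
    _ = _ := by field_simp; ring

end Limit

/-! ### Existence of Lipschitz solutions -/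

open Filter Topology

section Existence

variable {δ a0 Λ Lc : ℝ} {lam f : Bool → ℝ → ℝ → ℝ} {σ : Bool → ℝ}
  {L T E : ℝ} {w β : Bool → ℝ → ℝ}

/-- Projection of the line onto `[0, T]`. -/
noncomputable def clamp (T t : ℝ) : ℝ := max 0 (min T t)

theorem clamp_mem {T : ℝ} (hT : 0 ≤ T) (t : ℝ) : clamp T t ∈ Icc 0 T :=
  ⟨le_max_left _ _, max_le hT (min_le_left _ _)⟩

theorem clamp_of_mem {T t : ℝ} (ht : t ∈ Icc 0 T) : clamp T t = t := by
  simp [clamp, ht.1, ht.2]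

theorem clamp_lip (T s t : ℝ) : |clamp T s - clamp T t| ≤ |s - t| := by
  unfold clamp
  rw [max_comm 0, max_comm 0, min_comm T, min_comm T]
  refine (abs_max_sub_max_le_abs _ _ _).trans ?_
  refine (abs_min_sub_min_le_max _ _ _ _).trans ?_
  simp

theorem cons_const_le {M ce cY c2 d κ : ℝ} (hM : 0 ≤ M) (hce : 0 ≤ ce) (hcY : 0 ≤ cY)
    (hc2 : 0 < c2) (hd : 0 < d) (hκ : 0 < κ) :
    M / 2 * κ + 2 * d * (ce * d + M / κ * (ce * d) * (cY * d)) ≤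
      (M / 2 + 2 * ce + 2 * M * ce * cY + c2) * (κ + d ^ 2 + d ^ 3 / κ) := by
  have p1 : M / 2 * κ + 2 * d * (ce * d + M / κ * (ce * d) * (cY * d)) =
      M / 2 * κ + 2 * ce * d ^ 2 + 2 * M * ce * cY * (d ^ 3 / κ) := by
    field_simp
    ring
  rw [p1]
  have z3 : 0 ≤ M * ce * cY := by positivity
  have w1 : M / 2 * κ ≤ (M / 2 + 2 * ce + 2 * M * ce * cY + c2) * κ := by
    gcongr; linarith
  have w2 : 2 * ce * d ^ 2 ≤ (M / 2 + 2 * ce + 2 * M * ce * cY + c2) * d ^ 2 := by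
    gcongr; linarith
  have w3 : 2 * M * ce * cY * (d ^ 3 / κ) ≤
      (M / 2 + 2 * ce + 2 * M * ce * cY + c2) * (d ^ 3 / κ) := by
    gcongr; linarith
  linarith

set_option maxHeartbeats 800000 in
/-- Existence of a Lipschitz solution for small data, as a limit of the upwind scheme along an
ultrafilter. -/
theorem exists_broad (S : DiagSys δ a0 Λ Lc lam f σ) (hL : 0 < L) (hT : 0 < T) :
    ∃ C > 0, ∃ ε > 0, ∀ E w β, DiagData L E σ w β → E ≤ ε →
      ∃ r Cc, 0 < Cc ∧ Broad T L (C * E) δ Cc lam f σ w β r := by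
  classical
  have hΛ := S.Λ_pos
  have hA := upA_pos (L := L) (T := T) S
  have hC := upC_pos (L := L) (T := T) S hT
  have hδ := S.hδ
  have hLc := S.hLc
  refine ⟨upC δ a0 Λ Lc L T, hC, min (δ / 4) (δ / 4 / (upA δ a0 Λ Lc L T * T)), by positivity, ?_⟩
  intro E w β D hE
  have hE0 := D.hE
  have hE1 : E ≤ δ / 4 := hE.trans (min_le_left _ _)
  have hE2 : upA δ a0 Λ Lc L T * E * T ≤ δ / 4 := by
    have h1 : E ≤ δ / 4 / (upA δ a0 Λ Lc L T * T) := hE.trans (min_le_right _ _)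
    rw [le_div_iff₀ (by positivity)] at h1
    linarith
  obtain ⟨p, hp⟩ := exists_nat_ge (T * Λ / L)
  have hp0 : (0:ℝ) < p := lt_of_lt_of_le (by positivity) hp
  have hp1 : (1:ℝ) ≤ p := by
    have : 0 < p := by exact_mod_cast hp0
    exact_mod_cast this
  set χ : ℝ := T / (p * L) with hχd
  have hχ0 : 0 < χ := by positivity
  have hχ : χ * Λ ≤ 1 := by
    rw [hχd, div_mul_eq_mul_div, div_le_one (by positivity)]
    rwa [div_le_iff₀ hL] at hp
  let h : ℕ → ℝ := fun N => L * (1 / ((N:ℝ) + 1))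
  let k : ℕ → ℝ := fun N => χ * h N
  have hh : ∀ N, 0 < h N := fun N => by positivity
  have hk : ∀ N, 0 < k N := fun N => mul_pos hχ0 (hh N)
  have hNh : ∀ N : ℕ, ((N + 1 : ℕ) : ℝ) * h N = L := fun N => by
    simp only [h]; push_cast; field_simp
  have hkT : ∀ N, k N ≤ T := fun N => by
    have : h N ≤ L := by
      simp only [h]
      rw [mul_one_div, div_le_iff₀ (by positivity)]
      have : (0:ℝ) ≤ N := by positivity
      nlinarith
    calc χ * h N ≤ χ * L := by gcongr
      _ = T / p := by rw [hχd]; field_simp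
      _ ≤ T := div_le_self hT.le hp1
  let U : ℕ → ℕ → Bool → ℕ → ℝ := fun N => upwind χ (k N) (h N) lam f σ (N + 1) w β
  set M := upC δ a0 Λ Lc L T * E with hMd
  have hM : 0 ≤ M := by positivity
  have G : ∀ N, GridBounds M δ (k N) (h N) T (N + 1) (U N) := fun N =>
    upwind_gridBounds S D hL hT (hk N) (hh N) (by omega) (hNh N) rfl hχ (hkT N) hE1 hE2
  let V : ℕ → Bool → ℝ → ℝ → ℝ := fun N i t x => U N ⌊t / k N⌋₊ i ⌊x / h N⌋₊
  have hn : ∀ N, ∀ t ∈ Icc 0 T, (⌊t / k N⌋₊ : ℝ) * k N ≤ 2 * T := fun N t ht =>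
    (floor_div_mul_le ht.1 (hk N)).trans (by linarith [ht.2])
  have hj : ∀ N, ∀ x ∈ Icc 0 L, ⌊x / h N⌋₊ ≤ N + 1 := fun N x hx =>
    floor_div_le_of_le hx.2 (hh N) (hNh N)
  let 𝒰 : Ultrafilter ℕ := hyperfilter ℕ
  have h𝒰 : (𝒰 : Filter ℕ) ≤ atTop := Nat.hyperfilter_le_atTop
  have hht : Tendsto h 𝒰 (𝓝 0) := by
    have : Tendsto h atTop (𝓝 (L * 0)) :=
      (tendsto_one_div_add_atTop_nhds_zero_nat (𝕜 := ℝ)).const_mul L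
    rw [mul_zero] at this
    exact this.mono_left h𝒰
  have hkt : Tendsto k 𝒰 (𝓝 0) := by
    have := hht.const_mul χ
    rwa [mul_zero] at this
  have hlim : ∀ i t x, ∃ y, t ∈ Icc 0 T → x ∈ Icc 0 L →
      Tendsto (fun N => V N i t x) 𝒰 (𝓝 y) := by
    intro i t x
    by_cases htx : t ∈ Icc 0 T ∧ x ∈ Icc 0 L
    · have hb : ∀ N, V N i t x ∈ Icc (-M) M := fun N =>
        abs_le.1 ((G N).bd _ (hn N t htx.1) i _ (hj N x htx.2))
      obtain ⟨y, -, hy⟩ := isCompact_Icc.ultrafilter_le_nhds' (𝒰.map fun N => V N i t x)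
        (Ultrafilter.mem_map.2 (Filter.univ_mem' hb))
      exact ⟨y, fun _ _ => hy⟩
    · exact ⟨0, fun h1 h2 => absurd ⟨h1, h2⟩ htx⟩
  choose R hR using hlim
  -- bounds for `R` on the rectangle
  have Rbd : ∀ i, ∀ t ∈ Icc 0 T, ∀ x ∈ Icc 0 L, |R i t x| ≤ M := fun i t ht x hx =>
    le_of_tendsto (hR i t x ht hx).abs (Eventually.of_forall fun N =>
      (G N).bd _ (hn N t ht) i _ (hj N x hx))
  have Rbδ : ∀ i, ∀ t ∈ Icc 0 T, ∀ x ∈ Icc 0 L, |R i t x| ≤ δ := fun i t ht x hx =>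
    le_of_tendsto (hR i t x ht hx).abs (Eventually.of_forall fun N =>
      (G N).bdδ _ (hn N t ht) i _ (hj N x hx))
  have fldiff : ∀ κ : ℝ, 0 < κ → ∀ s t : ℝ, 0 ≤ s → 0 ≤ t →
      |(⌊s / κ⌋₊ : ℝ) * κ - ⌊t / κ⌋₊ * κ| ≤ |s - t| + κ := by
    intro κ hκ s t hs ht
    have a1 := floor_div_mul_le hs hκ
    have a2 := floor_div_mul_le ht hκ
    have b1 := lt_floor_div_mul (t := s) hκ
    have b2 := lt_floor_div_mul (t := t) hκ
    have c1 := le_abs_self (s - t)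
    have c2 := neg_abs_le (s - t)
    rw [abs_le]
    constructor <;> linarith
  have Rlip : ∀ i, ∀ t ∈ Icc 0 T, ∀ t' ∈ Icc 0 T, ∀ x ∈ Icc 0 L, ∀ x' ∈ Icc 0 L,
      |R i t x - R i t' x'| ≤ M * (|t - t'| + |x - x'|) := by
    intro i t ht t' ht' x hx x' hx'
    have hb : Tendsto (fun N => M * ((|t - t'| + k N) + (|x - x'| + h N))) 𝒰
        (𝓝 (M * ((|t - t'| + 0) + (|x - x'| + 0)))) :=
      (((hkt.const_add _).add (hht.const_add _)).const_mul M)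
    rw [add_zero, add_zero] at hb
    refine le_of_tendsto_of_tendsto ((hR i t x ht hx).sub (hR i t' x' ht' hx')).abs hb
      (Eventually.of_forall fun N => ?_)
    refine ((G N).lip (hk N) (hn N t ht) (hn N t' ht') i (hj N x hx) (hj N x' hx')).trans ?_
    have q1 := fldiff (k N) (hk N) t t' ht.1 ht'.1
    have q2 := fldiff (h N) (hh N) x x' hx.1 hx'.1
    exact mul_le_mul_of_nonneg_left (add_le_add q1 q2) hM
  have hLmem : L ∈ Icc 0 L := ⟨hL.le, le_rfl⟩
  have h0mem : (0:ℝ) ∈ Icc 0 L := ⟨le_rfl, hL.le⟩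
  have h0T : (0:ℝ) ∈ Icc 0 T := ⟨le_rfl, hT.le⟩
  have flN : ∀ N, ⌊L / h N⌋₊ = N + 1 := fun N => by
    rw [← hNh N, mul_div_assoc, div_self (hh N).ne', mul_one, Nat.floor_natCast]
  have Rinit : ∀ i, ∀ x ∈ Icc 0 L, R i 0 x = w i x := by
    intro i x hx
    refine tendsto_nhds_unique (hR i 0 x h0T hx) ?_
    have h1 : Tendsto (fun N => E * h N) 𝒰 (𝓝 (E * 0)) := hht.const_mul E
    rw [mul_zero] at h1
    rw [tendsto_iff_dist_tendsto_zero]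
    refine squeeze_zero (fun _ => dist_nonneg) (fun N => ?_) h1
    have e1 : V N i 0 x = w i (⌊x / h N⌋₊ * h N) := by
      simp [V, U, upwind]
    rw [e1, Real.dist_eq]
    have a1 := floor_div_mul_le hx.1 (hh N)
    have b1 := lt_floor_div_mul (t := x) (hh N)
    refine (D.w_lip i _ _ ⟨by have := hh N; positivity, a1.trans hx.2⟩ hx).trans ?_
    gcongr
    rw [abs_le]
    constructor <;> linarith
  have Rbdry : ∀ i, ∀ t ∈ Icc 0 T, R i t 0 = β i t + σ i * R (!i) t L := by
    intro i t ht
    refine tendsto_nhds_unique (hR i t 0 ht h0mem) ?_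
    have h1 : Tendsto (fun N => E * k N) 𝒰 (𝓝 (E * 0)) := hkt.const_mul E
    rw [mul_zero] at h1
    have h2 : Tendsto (fun N => β i (⌊t / k N⌋₊ * k N)) 𝒰 (𝓝 (β i t)) := by
      rw [tendsto_iff_dist_tendsto_zero]
      refine squeeze_zero (fun _ => dist_nonneg) (fun N => ?_) h1
      have a1 := floor_div_mul_le ht.1 (hk N)
      have b1 := lt_floor_div_mul (t := t) (hk N)
      rw [Real.dist_eq]
      refine (D.β_lip i _ _).trans ?_
      gcongr
      rw [abs_le]
      constructor <;> linarith
    refine (h2.add ((hR (!i) t L ht hLmem).const_mul (σ i))).congr fun N => ?_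
    have e1 : V N i t 0 = U N ⌊t / k N⌋₊ i 0 := by simp [V]
    have e2 : V N (!i) t L = U N ⌊t / k N⌋₊ (!i) (N + 1) := by simp only [V, flN]
    rw [e1, e2]
    exact (upwind_bdry D (by omega) (hNh N) _ i).symm
  have cL := fun x => clamp_mem hL.le x
  have cT := fun t => clamp_mem hT.le t
  -- constants in the consistency estimate
  have hce : 0 ≤ Lc * (M * (6 + 2 * (Λ + 3 + 2 / χ)) + 2) := by positivity
  set ce := Lc * (M * (6 + 2 * (Λ + 3 + 2 / χ)) + 2) with hced
  have hcY : 0 ≤ Λ + 3 + 2 / χ + 2 * Λ := by positivity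
  set cY := Λ + 3 + 2 / χ + 2 * Λ with hcYd
  have hc2 : 0 < 1 + 2 / χ := by positivity
  set c2 := 1 + 2 / χ with hc2d
  refine ⟨fun i t x => R i (clamp T t) (clamp L x), M / 2 + 2 * ce + 2 * M * ce * cY + c2,
    by positivity, ⟨hM, fun i t x => Rbd i _ (cT t) _ (cL x), fun i t x => Rbδ i _ (cT t) _ (cL x),
    ?_, ?_, ?_, ?_⟩⟩
  · intro i t t' x x'
    refine (Rlip i _ (cT t) _ (cT t') _ (cL x) _ (cL x')).trans ?_
    exact mul_le_mul_of_nonneg_left (add_le_add (clamp_lip _ _ _) (clamp_lip _ _ _)) hM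
  · intro i x hx
    simp only [clamp_of_mem hx, clamp_of_mem h0T]
    exact Rinit i x hx
  · intro i t ht
    simp only [clamp_of_mem ht, clamp_of_mem hLmem, clamp_of_mem h0mem]
    exact Rbdry i t ht
  · intro i t x d κ ht hd hκ htd hx hxL
    have hx' : c2 * d < x := by
      refine lt_of_le_of_lt ?_ hx
      gcongr
      have : 0 ≤ M / 2 + 2 * ce + 2 * M * ce * cY := by positivity
      linarith
    have hx0 : 0 < x := lt_trans (by positivity) hx'
    have ht' : t ∈ Icc 0 T := ⟨ht, by linarith⟩
    have hl0 := S.lam_ge i _ _ (Rbδ i _ (cT t) _ (cL x)) (Rbδ (!i) _ (cT t) _ (cL (L - x)))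
    have hl0' := S.ha0.trans_le hl0
    have hld : 0 < lam i (R i (clamp T t) (clamp L x)) (R (!i) (clamp T t) (clamp L (L - x))) * d :=
      mul_pos hl0' hd
    have hxm : x ∈ Icc 0 L := ⟨hx0.le, by linarith⟩
    have hxm' : L - x ∈ Icc 0 L := ⟨by linarith [hxm.2], by linarith⟩
    simp only [clamp_of_mem ht', clamp_of_mem hxm, clamp_of_mem hxm'] at hxL hld ⊢
    have hxd : x + lam i (R i t x) (R (!i) t (L - x)) * d ∈ Icc 0 L := ⟨by linarith, hxL⟩
    have htd' : t + d ∈ Icc 0 T := ⟨by linarith, htd⟩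
    rw [clamp_of_mem htd', clamp_of_mem hxd]
    have main : ∀ ξ : ℝ, 0 < ξ → ξ ≤ d → |R i (t + d) (x + lam i (R i t x) (R (!i) t (L - x)) * d)
        - R i t x - d * f i (R i t x) (R (!i) t (L - x))| ≤ M / 2 * κ
          + 2 * d * (ce * d + M / κ * (ce * d) * (cY * d))
          + ξ * (2 + 2 * Lc * δ + M / 2 * ((2 + Λ) ^ 2 * d / κ) + d * M * Λ / κ) := by
      intro ξ hξ hξd
      have ev1 : ∀ᶠ N in (𝒰 : Filter ℕ), h N ≤ ξ := hht.eventually (ge_mem_nhds hξ)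
      have ev2 : ∀ᶠ N in (𝒰 : Filter ℕ), k N ≤ ξ := hkt.eventually (ge_mem_nhds hξ)
      have evc : ∀ i, ∀ t ∈ Icc 0 T, ∀ x ∈ Icc 0 L,
          ∀ᶠ N in (𝒰 : Filter ℕ), |V N i t x - R i t x| ≤ ξ := fun i t ht x hx => by
        have := (tendsto_iff_dist_tendsto_zero.1 (hR i t x ht hx)).eventually (ge_mem_nhds hξ)
        simpa only [Real.dist_eq] using this
      obtain ⟨N, g1, g2, g3, g4, g5⟩ := (ev1.and (ev2.and ((evc i t ht' x hxm).and
        ((evc (!i) t ht' _ hxm').and (evc i _ htd' _ hxd))))).exists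
      exact upwind_cons_step i S hM (hk N) (hh N) hχ0 rfl hχ (hNh N) (G N) hξd g1 g2 hκ ht htd
        hx' (Rbδ i t ht' x hxm) (Rbδ (!i) t ht' _ hxm') hxL g3 g4 g5
    set Q := |R i (t + d) (x + lam i (R i t x) (R (!i) t (L - x)) * d)
        - R i t x - d * f i (R i t x) (R (!i) t (L - x))|
    have hlimQ : Q ≤ M / 2 * κ + 2 * d * (ce * d + M / κ * (ce * d) * (cY * d)) := by
      set X := 2 + 2 * Lc * δ + M / 2 * ((2 + Λ) ^ 2 * d / κ) + d * M * Λ / κ with hX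
      have hX0 : 0 < X := by positivity
      refine le_of_forall_pos_le_add fun η hη => ?_
      refine (main (min d (η / X)) (by positivity) (min_le_left _ _)).trans ?_
      gcongr
      have := min_le_right d (η / X)
      rwa [le_div_iff₀ hX0] at this
    exact hlimQ.trans (cons_const_le hM hce hcY hc2 hd hκ)

end Existence

/-! ### Characteristics as graphs over the space interval -/

section Characteristics

/-- Comparison of `|g|` with a barrier, using one-sided derivatives in the open interval only. -/
theorem barrier_le {g g' B B' : ℝ → ℝ} {a b : ℝ} (hg : ContinuousOn g (Icc a b))
    (hg' : ∀ y ∈ Ioo a b, HasDerivWithinAt g (g' y) (Ici y) y) (hB : ContinuousOn B (Icc a b))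
    (hB' : ∀ y ∈ Ioo a b, HasDerivWithinAt B (B' y) (Ici y) y) (ha : |g a| < B a)
    (h : ∀ y ∈ Ioo a b, |g y| = B y → |g' y| < B' y) : ∀ y ∈ Icc a b, |g y| ≤ B y := by
  intro y hy
  rcases hy.1.eq_or_lt with rfl | hay
  · exact ha.le
  have hab : a ≤ b := hy.1.trans hy.2
  have hev : ∀ᶠ z in 𝓝[Icc a b] a, |g z| < B z :=
    (hg a (left_mem_Icc.2 hab)).abs.eventually_lt (hB a (left_mem_Icc.2 hab)) ha
  have hev2 : ∀ᶠ z in 𝓝[>] a, |g z| < B z :=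
    (hev.filter_mono (nhdsWithin_le_iff.2 (Icc_mem_nhdsGT (hay.trans_le hy.2))))
  obtain ⟨z, hz, hzI⟩ := (hev2.and (Ioo_mem_nhdsGT hay)).exists
  have hsub : Icc z b ⊆ Icc a b := Icc_subset_Icc_left hzI.1.le
  have := image_norm_le_of_norm_deriv_right_lt_deriv_boundary' (f := g) (f' := g') (B := B)
    (B' := B') (a := z) (b := b) (hg.mono hsub)
    (fun u hu => hg' u ⟨hzI.1.trans_le hu.1, hu.2⟩) hz.le (hB.mono hsub)
    (fun u hu => hB' u ⟨hzI.1.trans_le hu.1, hu.2⟩)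
    (fun u hu he => h u ⟨hzI.1.trans_le hu.1, hu.2⟩ he)
  exact this ⟨hzI.2.le, hy.2⟩

theorem increment_le {g g' : ℝ → ℝ} {a b c M : ℝ} (hab : a ≤ b) (hg : ContinuousOn g (Icc a b))
    (hg' : ∀ y ∈ Ioo a b, HasDerivWithinAt g (g' y) (Ici y) y)
    (h : ∀ y ∈ Ioo a b, |g' y - c| ≤ M) : |g b - g a - (b - a) * c| ≤ M * (b - a) := by
  have key : ∀ ε > 0, |g b - g a - (b - a) * c| ≤ ε + (M + ε) * (b - a) := by
    intro ε hε
    refine barrier_le (g := fun y => g y - g a - (y - a) * c) (g' := fun y => g' y - c)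
      (B := fun y => ε + (M + ε) * (y - a)) (B' := fun _ => M + ε) ?_ ?_ ?_ ?_ ?_ ?_ b
      (right_mem_Icc.2 hab)
    · fun_prop
    · intro y hy
      have h1 : HasDerivWithinAt (fun y => (y - a) * c) c (Ici y) y := by
        simpa using ((hasDerivWithinAt_id y (Ici y)).sub_const a).mul_const c
      exact ((hg' y hy).sub_const (g a)).sub h1
    · fun_prop
    · intro y hy
      simpa using (((hasDerivWithinAt_id y (Ici y)).sub_const a).const_mul (M + ε)).const_add ε
    · simpa using hε
    · intro y hy _
      exact (h y hy).trans_lt (by linarith)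
  refine le_of_forall_pos_le_add fun η hη => ?_
  have h1 : 0 < 1 + (b - a) := by linarith
  refine (key (η / (1 + (b - a))) (by positivity)).trans (le_of_eq ?_)
  field_simp
  ring

/-- `τ` is a characteristic, written as a graph `t = τ(y)` over the space interval `[0, L]`;
`m` is the reciprocal speed. -/
def IsChar (L : ℝ) (m : ℝ → ℝ → ℝ) (τ : ℝ → ℝ) : Prop :=
  ∀ y ∈ Icc 0 L, HasDerivAt τ (m (τ y) y) y

theorem exists_char {L C : ℝ} (hL : 0 < L) (hC : 0 < C) {m : ℝ → ℝ → ℝ} (bd : ∀ t y, |m t y| ≤ C)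
    (lip : ∀ t y t' y', |m t y - m t' y'| ≤ C * (|t - t'| + |y - y'|)) (t : ℝ) {x : ℝ}
    (hx : x ∈ Icc 0 L) : ∃ τ, τ x = t ∧ IsChar L m τ := by
  have hx' : x ∈ Icc (-1) (L + 1) := ⟨by linarith [hx.1], by linarith [hx.2]⟩
  have hP : IsPicardLindelof (fun y τ => m τ y) (⟨x, hx'⟩ : Icc (-1) (L + 1)) t
      ⟨C * (L + 2), by positivity⟩ 0 ⟨C, hC.le⟩ ⟨C, hC.le⟩ := by
    constructor
    · intro y _
      refine LipschitzWith.lipschitzOnWith (LipschitzWith.of_dist_le_mul fun a b => ?_)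
      have h := lip a y b y
      rw [sub_self, abs_zero, add_zero] at h
      exact h
    · intro τ _
      have : LipschitzWith ⟨C, hC.le⟩ (fun y => m τ y) := LipschitzWith.of_dist_le_mul fun a b => by
        have h := lip τ a τ b
        rw [sub_self, abs_zero, zero_add] at h
        exact h
      exact this.continuous.continuousOn
    · intro y _ τ _
      exact bd τ y
    · simp only [NNReal.coe_mk, NNReal.coe_zero, sub_zero]
      refine mul_le_mul_of_nonneg_left (max_le ?_ ?_) hC.le <;> linarith [hx.1, hx.2]
  obtain ⟨τ, h0, h1⟩ := hP.exists_eq_forall_mem_Icc_hasDerivWithinAt₀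
  refine ⟨τ, h0, fun y hy => (h1 y ⟨by linarith [hy.1], by linarith [hy.2]⟩).hasDerivAt ?_⟩
  exact Icc_mem_nhds (by linarith [hy.1]) (by linarith [hy.2])

namespace IsChar

variable {L C m0 : ℝ} {m : ℝ → ℝ → ℝ} {τ τ₁ τ₂ : ℝ → ℝ}

theorem continuousOn (h : IsChar L m τ) : ContinuousOn τ (Icc 0 L) :=
  fun y hy => (h y hy).continuousAt.continuousWithinAt

theorem sub_mem (h : IsChar L m τ) (hm : ∀ t y, m0 ≤ m t y) (hm' : ∀ t y, m t y ≤ C) {y x : ℝ}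
    (hy : y ∈ Icc 0 L) (hx : x ∈ Icc 0 L) (hyx : y ≤ x) :
    m0 * (x - y) ≤ τ x - τ y ∧ τ x - τ y ≤ C * (x - y) := by
  rcases hyx.eq_or_lt with rfl | hyx
  · simp
  obtain ⟨c, hc, h1⟩ := exists_hasDerivAt_eq_slope τ (fun y => m (τ y) y) hyx
    (h.continuousOn.mono (Icc_subset_Icc hy.1 hx.2))
    (fun z hz => h z ⟨hy.1.trans hz.1.le, hz.2.le.trans hx.2⟩)
  have hp : 0 < x - y := by linarith
  rw [eq_div_iff hp.ne'] at h1
  rw [← h1]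
  exact ⟨mul_le_mul_of_nonneg_right (hm _ _) hp.le, mul_le_mul_of_nonneg_right (hm' _ _) hp.le⟩

/-- Gronwall for two characteristics. -/
theorem abs_sub_le (h₁ : IsChar L m τ₁) (h₂ : IsChar L m τ₂) (hC : 0 < C)
    (lip : ∀ t y t' y', |m t y - m t' y'| ≤ C * (|t - t'| + |y - y'|)) {x y : ℝ}
    (hx : x ∈ Icc 0 L) (hy : y ∈ Icc 0 L) :
    |τ₂ y - τ₁ y| ≤ Real.exp (C * L) * |τ₂ x - τ₁ x| := by
  have hd : ∀ s : ℝ, ∀ z ∈ Icc 0 L, HasDerivAt (fun z => (τ₂ z - τ₁ z) ^ 2 * Real.exp (s * (2 * C * z)))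
      ((2 * (τ₂ z - τ₁ z) * (m (τ₂ z) z - m (τ₁ z) z) + s * (2 * C) * (τ₂ z - τ₁ z) ^ 2)
        * Real.exp (s * (2 * C * z))) z := by
    intro s z hz
    have e1 : HasDerivAt (fun z => Real.exp (s * (2 * C * z)))
        (Real.exp (s * (2 * C * z)) * (s * (2 * C * 1))) z :=
      (((hasDerivAt_id z).const_mul (2 * C)).const_mul s).exp
    refine ((((h₂ z hz).sub (h₁ z hz)).pow 2).mul e1).congr_deriv ?_
    simp only [Pi.sub_apply, Nat.cast_ofNat, Pi.pow_apply]
    ring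
  have hq : ∀ z, |2 * (τ₂ z - τ₁ z) * (m (τ₂ z) z - m (τ₁ z) z)| ≤ 2 * C * (τ₂ z - τ₁ z) ^ 2 := by
    intro z
    have := lip (τ₂ z) z (τ₁ z) z
    rw [sub_self, abs_zero, add_zero] at this
    rw [abs_mul, abs_mul, abs_two, ← sq_abs (τ₂ z - τ₁ z)]
    have := mul_le_mul_of_nonneg_left this (abs_nonneg (τ₂ z - τ₁ z))
    linarith [this]
  have hIcc : interior (Icc 0 L) ⊆ Icc (0:ℝ) L := interior_subset
  have main : (τ₂ y - τ₁ y) ^ 2 ≤ Real.exp (2 * C * |x - y|) * (τ₂ x - τ₁ x) ^ 2 := by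
    rcases le_total y x with hyx | hxy
    · have mono : MonotoneOn (fun z => (τ₂ z - τ₁ z) ^ 2 * Real.exp (1 * (2 * C * z))) (Icc 0 L) := by
        refine monotoneOn_of_deriv_nonneg (convex_Icc 0 L)
          (fun z hz => (hd 1 z hz).continuousAt.continuousWithinAt)
          (fun z hz => (hd 1 z (hIcc hz)).differentiableAt.differentiableWithinAt) fun z hz => ?_
        rw [(hd 1 z (hIcc hz)).deriv]
        have := neg_le_of_abs_le (hq z)
        exact mul_nonneg (by linarith) (Real.exp_pos _).le
      have h1 := mono hy hx hyx
      simp only [one_mul] at h1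
      rw [abs_of_nonneg (by linarith), show 2 * C * (x - y) = 2 * C * x + -(2 * C * y) by ring,
        Real.exp_add, Real.exp_neg]
      have he := Real.exp_pos (2 * C * y)
      rw [← le_div_iff₀ he] at h1
      refine h1.trans (le_of_eq ?_)
      field_simp
    · have mono : AntitoneOn (fun z => (τ₂ z - τ₁ z) ^ 2 * Real.exp ((-1) * (2 * C * z))) (Icc 0 L) := by
        refine antitoneOn_of_deriv_nonpos (convex_Icc 0 L)
          (fun z hz => (hd (-1) z hz).continuousAt.continuousWithinAt)
          (fun z hz => (hd (-1) z (hIcc hz)).differentiableAt.differentiableWithinAt) fun z hz => ?_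
        rw [(hd (-1) z (hIcc hz)).deriv]
        have := le_of_abs_le (hq z)
        exact mul_nonpos_of_nonpos_of_nonneg (by linarith) (Real.exp_pos _).le
      have h1 := mono hx hy hxy
      simp only [neg_mul, one_mul] at h1
      rw [abs_of_nonpos (by linarith), show 2 * C * -(x - y) = 2 * C * y + -(2 * C * x) by ring,
        Real.exp_add]
      rw [Real.exp_neg (2 * C * y), ← div_eq_mul_inv, div_le_iff₀ (Real.exp_pos _)] at h1
      refine h1.trans (le_of_eq ?_)
      ring
  have hxy : |x - y| ≤ L := abs_le.2 ⟨by linarith [hx.1, hy.2], by linarith [hx.2, hy.1]⟩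
  have h2 : (τ₂ y - τ₁ y) ^ 2 ≤ (Real.exp (C * L) * |τ₂ x - τ₁ x|) ^ 2 := by
    rw [mul_pow, sq_abs, ← Real.exp_nat_mul]
    refine main.trans (mul_le_mul_of_nonneg_right (Real.exp_le_exp.2 ?_) (sq_nonneg _))
    have := mul_le_mul_of_nonneg_left hxy hC.le
    push_cast
    linarith
  exact abs_le_of_sq_le_sq h2 (by positivity)

/-- Characteristics do not cross. -/
theorem sub_pos (h₁ : IsChar L m τ₁) (h₂ : IsChar L m τ₂) (hC : 0 < C)
    (lip : ∀ t y t' y', |m t y - m t' y'| ≤ C * (|t - t'| + |y - y'|)) {x y : ℝ}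
    (hx : x ∈ Icc 0 L) (hy : y ∈ Icc 0 L) (h : 0 < τ₂ x - τ₁ x) : 0 < τ₂ y - τ₁ y := by
  by_contra! hn
  have hcont : ContinuousOn (fun z => τ₂ z - τ₁ z) (uIcc y x) :=
    (h₂.continuousOn.sub h₁.continuousOn).mono (uIcc_subset_Icc hy hx)
  obtain ⟨z, hz, hz0⟩ := intermediate_value_uIcc hcont (mem_uIcc.2 (Or.inl ⟨hn, h.le⟩))
  have := h₁.abs_sub_le h₂ hC lip (uIcc_subset_Icc hy hx hz) hx
  simp only at hz0
  rw [hz0, abs_zero, mul_zero] at this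
  exact h.ne' (abs_nonpos_iff.1 this)

theorem gap (h₁ : IsChar L m τ₁) (h₂ : IsChar L m τ₂) (hC : 0 < C)
    (lip : ∀ t y t' y', |m t y - m t' y'| ≤ C * (|t - t'| + |y - y'|)) {x y : ℝ}
    (hx : x ∈ Icc 0 L) (hy : y ∈ Icc 0 L) (h : 0 < τ₂ x - τ₁ x) :
    0 < τ₂ y - τ₁ y ∧ τ₂ y - τ₁ y ≤ Real.exp (C * L) * (τ₂ x - τ₁ x) := by
  have h1 := h₁.sub_pos h₂ hC lip hx hy h
  have h2 := h₁.abs_sub_le h₂ hC lip hx hy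
  rw [abs_of_pos h1, abs_of_pos h] at h2
  exact ⟨h1, h2⟩

/-- Followed backwards from a point with `t ≥ 0`, a characteristic meets `{x = 0}` or `{t = 0}`. -/
theorem hit (h : IsChar L m τ) {x : ℝ} (hx : x ∈ Icc 0 L) (hm0 : 0 < m0) (hm : ∀ t y, m0 ≤ m t y)
    (hm' : ∀ t y, m t y ≤ C) (ht : 0 ≤ τ x) :
    ∃ y ∈ Icc 0 x, (∀ z ∈ Icc y x, 0 ≤ τ z) ∧ (y = 0 ∨ τ y = 0) := by
  have mono : ∀ z ∈ Icc 0 L, ∀ z' ∈ Icc 0 L, z ≤ z' → τ z ≤ τ z' := fun z hz z' hz' hzz => by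
    have := (h.sub_mem hm hm' hz hz' hzz).1
    have := mul_nonneg hm0.le (sub_nonneg.2 hzz)
    linarith
  have h0 : (0:ℝ) ∈ Icc 0 L := ⟨le_rfl, hx.1.trans hx.2⟩
  rcases le_total 0 (τ 0) with h1 | h1
  · exact ⟨0, ⟨le_rfl, hx.1⟩, fun z hz => h1.trans (mono 0 h0 z ⟨hz.1, hz.2.trans hx.2⟩ hz.1), Or.inl rfl⟩
  · obtain ⟨y, hy, hy0⟩ := intermediate_value_Icc hx.1
      (h.continuousOn.mono (Icc_subset_Icc_right hx.2)) ⟨h1, ht⟩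
    exact ⟨y, hy, fun z hz => hy0.symm.le.trans
      (mono y ⟨hy.1, hy.2.trans hx.2⟩ z ⟨hy.1.trans hz.1, hz.2.trans hx.2⟩ hz.1), Or.inr hy0⟩

end IsChar

end Characteristics

/-! ### Increments of a solution along characteristics -/

/-- Uniform differentiability on `[0, a]` with derivative `g'`, in three-point form. -/
def UnifDiff (a : ℝ) (g g' : Bool → ℝ → ℝ) : Prop :=
  ∀ γ > 0, ∃ h > 0, ∀ i, ∀ s ∈ Icc 0 a, ∀ t₁ ∈ Icc 0 a, ∀ t₂ ∈ Icc 0 a,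
    |t₁ - s| ≤ h → |t₂ - s| ≤ h → |g i t₂ - g i t₁ - (t₂ - t₁) * g' i s| ≤ γ * |t₂ - t₁|

/-- A Lipschitz solution of the diagonal system, viewed with `x` as evolution variable:
`mm` is the reciprocal speed and `pp` the source divided by the speed, both evaluated along the
solution.  `cons` says that `r i` has one-sided derivative `pp` along characteristics, `usd` that
increments of `mm` and `pp` are, uniformly, linear in the increments of `r`; `w'`, `β'` are the
derivatives of the data and `compat1` is the first-order compatibility condition at the corner. -/
structure CharSys (T L C m0 : ℝ) (σ : Bool → ℝ) (r mm pp : Bool → ℝ → ℝ → ℝ)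
    (w w' β β' : Bool → ℝ → ℝ) : Prop where
  hT : 0 < T
  hL : 0 < L
  hC : 0 < C
  hm0 : 0 < m0
  mm_ge : ∀ i t x, m0 ≤ mm i t x
  mm_le : ∀ i t x, mm i t x ≤ C
  mm_lip : ∀ i t x t' x', |mm i t x - mm i t' x'| ≤ C * (|t - t'| + |x - x'|)
  pp_bd : ∀ i t x, |pp i t x| ≤ C
  pp_lip : ∀ i t x t' x', |pp i t x - pp i t' x'| ≤ C * (|t - t'| + |x - x'|)
  r_lip : ∀ i t x t' x', |r i t x - r i t' x'| ≤ C * (|t - t'| + |x - x'|)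
  cons : ∀ i, ∀ t ∈ Ico 0 T, ∀ x ∈ Ioo 0 L, ∀ η > 0, ∃ d0 > 0, ∀ d ∈ Ioo 0 d0,
    |r i (t + d * mm i t x) (x + d) - r i t x - d * pp i t x| ≤ η * d
  init : ∀ i, ∀ x ∈ Icc 0 L, r i 0 x = w i x
  bdry : ∀ i, ∀ t ∈ Icc 0 T, r i t 0 = β i t + σ i * r (!i) t L
  hσ : ∀ i, |σ i| ≤ 1
  w_diff : UnifDiff L w w'
  β_diff : UnifDiff T β β'
  w'_bd : ∀ i, ∀ x ∈ Icc 0 L, |w' i x| ≤ C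
  compat1 : ∀ i, (pp i 0 0 - w' i 0) / mm i 0 0
    = β' i 0 + σ i * ((pp (!i) 0 L - w' (!i) L) / mm (!i) 0 L)
  usd : ∀ γ > 0, ∃ h > 0, ∀ i s x, ∃ ma mb pa pb : ℝ, |ma| ≤ C ∧ |mb| ≤ C ∧ |pa| ≤ C ∧ |pb| ≤ C ∧
    ∀ t₁ t₂, |t₁ - s| ≤ h → |t₂ - s| ≤ h →
      |mm i t₂ x - mm i t₁ x - (ma * (r i t₂ x - r i t₁ x)
        + mb * (r (!i) t₂ (L - x) - r (!i) t₁ (L - x)))| ≤ γ * |t₂ - t₁| ∧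
      |pp i t₂ x - pp i t₁ x - (pa * (r i t₂ x - r i t₁ x)
        + pb * (r (!i) t₂ (L - x) - r (!i) t₁ (L - x)))| ≤ γ * |t₂ - t₁|

namespace CharSys

variable {T L C m0 : ℝ} {σ : Bool → ℝ} {r mm pp : Bool → ℝ → ℝ → ℝ} {w w' β β' : Bool → ℝ → ℝ}
  {τ τ₁ τ₂ : ℝ → ℝ} {i : Bool}

theorem mm_abs_le (S : CharSys T L C m0 σ r mm pp w w' β β') (i : Bool) (t x : ℝ) :
    |mm i t x| ≤ C :=
  abs_le.2 ⟨by linarith [S.mm_ge i t x, S.hm0, S.hC], S.mm_le i t x⟩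

theorem exists_char (S : CharSys T L C m0 σ r mm pp w w' β β') (i : Bool) (t : ℝ) {x : ℝ}
    (hx : x ∈ Icc 0 L) : ∃ τ, τ x = t ∧ IsChar L (mm i) τ :=
  _root_.exists_char S.hL S.hC (S.mm_abs_le i) (S.mm_lip i) t hx

theorem sub_mem (S : CharSys T L C m0 σ r mm pp w w' β β') (h : IsChar L (mm i) τ) {y x : ℝ}
    (hy : 0 ≤ y) (hyx : y ≤ x) (hx : x ≤ L) :
    m0 * (x - y) ≤ τ x - τ y ∧ τ x - τ y ≤ C * (x - y) :=
  h.sub_mem (S.mm_ge i) (S.mm_le i) ⟨hy, hyx.trans hx⟩ ⟨hy.trans hyx, hx⟩ hyx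

theorem mono (S : CharSys T L C m0 σ r mm pp w w' β β') (h : IsChar L (mm i) τ) {y x : ℝ}
    (hy : 0 ≤ y) (hyx : y ≤ x) (hx : x ≤ L) : τ y ≤ τ x := by
  have := (S.sub_mem h hy hyx hx).1
  have := mul_nonneg S.hm0.le (sub_nonneg.2 hyx)
  linarith

theorem len_le (S : CharSys T L C m0 σ r mm pp w w' β β') (h : IsChar L (mm i) τ) {y x t : ℝ}
    (hy : 0 ≤ y) (hyx : y ≤ x) (hx : x ≤ L) (ht : τ x ≤ t) (h0 : 0 ≤ τ y) :
    x - y ≤ t / m0 := by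
  rw [le_div_iff₀ S.hm0]
  linarith [(S.sub_mem h hy hyx hx).1]

/-- The solution is right-differentiable along its characteristics. -/
theorem rderiv (S : CharSys T L C m0 σ r mm pp w w' β β') (h : IsChar L (mm i) τ) {y : ℝ}
    (hy : y ∈ Ioo 0 L) (ht : τ y ∈ Ico 0 T) :
    HasDerivWithinAt (fun z => r i (τ z) z) (pp i (τ y) y) (Ici y) y := by
  rw [hasDerivWithinAt_iff_isLittleO, Asymptotics.isLittleO_iff]
  intro c hc
  have hC := S.hC
  obtain ⟨d0, hd0, hcons⟩ := S.cons i (τ y) ht y hy (c / 2) (by positivity)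
  have h1 := (h y ⟨hy.1.le, hy.2.le⟩)
  rw [hasDerivAt_iff_isLittleO, Asymptotics.isLittleO_iff] at h1
  have h2 := (h1 (show 0 < c / (2 * C) by positivity)).filter_mono
    (nhdsWithin_le_nhds (s := Ici y))
  have h3 : ∀ᶠ z in 𝓝[Ici y] y, z < y + d0 :=
    (eventually_lt_nhds (by linarith)).filter_mono nhdsWithin_le_nhds
  filter_upwards [h2, h3, self_mem_nhdsWithin] with z hz1 hz2 hz3
  rcases (mem_Ici.1 hz3).eq_or_lt with rfl | hyz
  · simp
  have e1 := hcons (z - y) ⟨by linarith, by linarith⟩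
  have e2 := S.r_lip i (τ z) z (τ y + (z - y) * mm i (τ y) y) z
  simp only [Real.norm_eq_abs, smul_eq_mul, abs_of_pos (sub_pos.2 hyz)] at hz1 ⊢
  rw [sub_self, abs_zero, add_zero, ← sub_sub] at e2
  have e3 := mul_le_mul_of_nonneg_left hz1 hC.le
  rw [show C * (c / (2 * C) * (z - y)) = c / 2 * (z - y) by field_simp] at e3
  rw [add_sub_cancel] at e1
  have := abs_add_le (r i (τ z) z - r i (τ y + (z - y) * mm i (τ y) y) z)
    (r i (τ y + (z - y) * mm i (τ y) y) z - r i (τ y) y - (z - y) * pp i (τ y) y)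
  rw [show (r i (τ z) z - r i (τ y + (z - y) * mm i (τ y) y) z) +
    (r i (τ y + (z - y) * mm i (τ y) y) z - r i (τ y) y - (z - y) * pp i (τ y) y)
    = r i (τ z) z - r i (τ y) y - (z - y) * pp i (τ y) y by ring] at this
  linarith

theorem continuousOn_r (S : CharSys T L C m0 σ r mm pp w w' β β') (i : Bool) :
    Continuous (Function.uncurry (r i)) := by
  have : LipschitzWith ⟨2 * C, by linarith [S.hC]⟩ (Function.uncurry (r i)) := by
    refine LipschitzWith.of_dist_le_mul fun a b => ?_
    have h1 := S.r_lip i a.1 a.2 b.1 b.2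
    rw [Real.dist_eq, Prod.dist_eq, Real.dist_eq, Real.dist_eq]
    refine h1.trans ?_
    have h2 := mul_le_mul_of_nonneg_left (add_le_add (le_max_left |a.1 - b.1| |a.2 - b.2|)
      (le_max_right |a.1 - b.1| |a.2 - b.2|)) S.hC.le
    refine h2.trans (le_of_eq ?_)
    change _ = 2 * C * max |a.1 - b.1| |a.2 - b.2|
    ring
  exact this.continuous

theorem cont_along (S : CharSys T L C m0 σ r mm pp w w' β β') (h : IsChar L (mm i) τ) (j : Bool)
    {y x : ℝ} (hy : 0 ≤ y) (hx : x ≤ L) : ContinuousOn (fun z => r j (τ z) z) (Icc y x) :=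
  (S.continuousOn_r j).comp_continuousOn
    ((h.continuousOn.mono (Icc_subset_Icc hy hx)).prodMk continuousOn_id)

theorem time_mem (S : CharSys T L C m0 σ r mm pp w w' β β') (h : IsChar L (mm i) τ) {y x : ℝ}
    (hy : 0 ≤ y) (hx : x ≤ L) (hty : 0 ≤ τ y) (htx : τ x ≤ T) {z : ℝ} (hz : z ∈ Ioo y x) :
    τ z ∈ Ico 0 T := by
  refine ⟨hty.trans (S.mono h hy hz.1.le (hz.2.le.trans hx)), ?_⟩
  have h1 := (S.sub_mem h (hy.trans hz.1.le) hz.2.le hx).1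
  have := mul_pos S.hm0 (sub_pos.2 hz.2)
  linarith

theorem charInc (S : CharSys T L C m0 σ r mm pp w w' β β') (h : IsChar L (mm i) τ) {y x c M : ℝ}
    (hy : 0 ≤ y) (hyx : y ≤ x) (hx : x ≤ L) (hty : 0 ≤ τ y) (htx : τ x ≤ T)
    (hM : ∀ z ∈ Ioo y x, |pp i (τ z) z - c| ≤ M) :
    |r i (τ x) x - r i (τ y) y - (x - y) * c| ≤ M * (x - y) :=
  increment_le hyx (S.cont_along h i hy hx)
    (fun _ hz => S.rderiv h ⟨hy.trans_lt hz.1, hz.2.trans_le hx⟩ (S.time_mem h hy hx hty htx hz)) hM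

theorem timeInc (_S : CharSys T L C m0 σ r mm pp w w' β β') (h : IsChar L (mm i) τ) {y x c M : ℝ}
    (hy : 0 ≤ y) (hyx : y ≤ x) (hx : x ≤ L) (hM : ∀ z ∈ Ioo y x, |mm i (τ z) z - c| ≤ M) :
    |τ x - τ y - (x - y) * c| ≤ M * (x - y) :=
  increment_le hyx (h.continuousOn.mono (Icc_subset_Icc hy hx))
    (fun z hz => (h z ⟨hy.trans hz.1.le, hz.2.le.trans hx⟩).hasDerivWithinAt) hM

/-- The increment of the solution between two characteristics of the same family varies slowly. -/
theorem pairInc (S : CharSys T L C m0 σ r mm pp w w' β β') (h₁ : IsChar L (mm i) τ₁)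
    (h₂ : IsChar L (mm i) τ₂) {y x : ℝ} (hy : 0 ≤ y) (hyx : y ≤ x) (hx : x ≤ L)
    (hty : 0 ≤ τ₁ y) (htx : τ₂ x ≤ T) (hlt : τ₁ x < τ₂ x) :
    |(r i (τ₂ x) x - r i (τ₁ x) x) - (r i (τ₂ y) y - r i (τ₁ y) y)|
      ≤ C * (Real.exp (C * L) * (τ₂ x - τ₁ x)) * (x - y) ∧
    |(τ₂ x - τ₁ x) - (τ₂ y - τ₁ y)| ≤ C * (Real.exp (C * L) * (τ₂ x - τ₁ x)) * (x - y) := by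
  have hx' : x ∈ Icc 0 L := ⟨hy.trans hyx, hx⟩
  have gap : ∀ z ∈ Icc y x, 0 < τ₂ z - τ₁ z ∧ τ₂ z - τ₁ z ≤ Real.exp (C * L) * (τ₂ x - τ₁ x) :=
    fun z hz => h₁.gap h₂ S.hC (S.mm_lip i) hx' ⟨hy.trans hz.1, hz.2.trans hx⟩ (by linarith)
  have hgy := (gap y ⟨le_rfl, hyx⟩).1
  have bd : ∀ z ∈ Ioo y x, C * (|τ₂ z - τ₁ z| + |z - z|)
      ≤ C * (Real.exp (C * L) * (τ₂ x - τ₁ x)) := fun z hz => by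
    have hg := gap z ⟨hz.1.le, hz.2.le⟩
    rw [sub_self, abs_zero, add_zero, abs_of_pos hg.1]
    exact mul_le_mul_of_nonneg_left hg.2 S.hC.le
  constructor
  · have := increment_le (g := fun z => r i (τ₂ z) z - r i (τ₁ z) z)
      (g' := fun z => pp i (τ₂ z) z - pp i (τ₁ z) z) (c := 0)
      (M := C * (Real.exp (C * L) * (τ₂ x - τ₁ x))) hyx
      ((S.cont_along h₂ i hy hx).sub (S.cont_along h₁ i hy hx))
      (fun z hz => (S.rderiv h₂ ⟨hy.trans_lt hz.1, hz.2.trans_le hx⟩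
        (S.time_mem h₂ hy hx (by linarith) htx hz)).sub
        (S.rderiv h₁ ⟨hy.trans_lt hz.1, hz.2.trans_le hx⟩
        (S.time_mem h₁ hy hx hty (by linarith) hz)))
      (fun z hz => by
        rw [sub_zero]
        exact (S.pp_lip i _ _ _ _).trans (bd z hz))
    rwa [mul_zero, sub_zero] at this
  · have := increment_le (g := fun z => τ₂ z - τ₁ z)
      (g' := fun z => mm i (τ₂ z) z - mm i (τ₁ z) z) (c := 0)
      (M := C * (Real.exp (C * L) * (τ₂ x - τ₁ x))) hyx
      ((h₂.continuousOn.sub h₁.continuousOn).mono (Icc_subset_Icc hy hx))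
      (fun z hz => ((h₂ z ⟨hy.trans hz.1.le, hz.2.le.trans hx⟩).sub
        (h₁ z ⟨hy.trans hz.1.le, hz.2.le.trans hx⟩)).hasDerivWithinAt)
      (fun z hz => by
        rw [sub_zero]
        exact (S.mm_lip i _ _ _ _).trans (bd z hz))
    rwa [mul_zero, sub_zero] at this

end CharSys

/-! ### First-order expansion at the initial time -/

/-- Uniform differentiability makes the derivative uniformly continuous. -/
theorem UnifDiff.deriv_osc {a : ℝ} {g g' : Bool → ℝ → ℝ} (H : UnifDiff a g g') {γ : ℝ} (hγ : 0 < γ) :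
    ∃ h > 0, ∀ i, ∀ s ∈ Icc 0 a, ∀ t ∈ Icc 0 a, |s - t| ≤ h → |g' i s - g' i t| ≤ γ := by
  obtain ⟨h, hh, H⟩ := H (γ / 2) (by positivity)
  refine ⟨h, hh, fun i s hs t ht hst => ?_⟩
  rcases eq_or_ne s t with rfl | hne
  · simpa using hγ.le
  have h1 := H i s hs s hs t ht (by simpa using hh.le) (by rwa [abs_sub_comm])
  have h2 := H i t ht s hs t ht hst (by simpa using hh.le)
  have hp : 0 < |t - s| := abs_pos.2 (sub_ne_zero.2 hne.symm)
  have h3 := abs_sub (g i t - g i s - (t - s) * g' i t) (g i t - g i s - (t - s) * g' i s)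
  rw [show g i t - g i s - (t - s) * g' i t - (g i t - g i s - (t - s) * g' i s)
    = (t - s) * (g' i s - g' i t) by ring, abs_mul] at h3
  refine le_of_mul_le_mul_left ?_ hp
  linarith

/-- The algebra of transporting a first-order expansion along a short characteristic arc of length
`ξ`. -/
theorem expansion_transport {rx ry tx ty wx wy p m w' qx qy ξ M γ Q m0 : ℝ} (hm0 : 0 < m0)
    (hγ : 0 ≤ γ) (hM : 0 ≤ M) (hξt : ξ ≤ tx / m0) (hty : 0 ≤ ty) (htyx : ty ≤ tx)
    (hA : |rx - ry - ξ * p| ≤ M * ξ) (hB : |tx - ty - ξ * m| ≤ M * ξ)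
    (hW : |wx - wy - ξ * w'| ≤ γ * ξ) (hq : |qx - qy| ≤ γ) (hQ : |qx| ≤ Q) (hpm : p - w' = m * qx)
    (hH : |ry - wy - ty * qy| ≤ γ * ty) :
    |rx - wx - tx * qx| ≤ ((M * (1 + Q) + γ) / m0 + 2 * γ) * tx := by
  have hQ0 := (abs_nonneg _).trans hQ
  have e : rx - wx - tx * qx = (rx - ry - ξ * p) - (wx - wy - ξ * w') + (ry - wy - ty * qy)
      - ty * (qx - qy) - (tx - ty - ξ * m) * qx := by
    linear_combination ξ * hpm
  have b4 : |ty * (qx - qy)| ≤ ty * γ := by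
    rw [abs_mul, abs_of_nonneg hty]; exact mul_le_mul_of_nonneg_left hq hty
  have b5 : |(tx - ty - ξ * m) * qx| ≤ M * ξ * Q := by
    rw [abs_mul]
    exact mul_le_mul hB hQ (abs_nonneg _) ((abs_nonneg _).trans hB)
  have b6 : (M * (1 + Q) + γ) * ξ ≤ (M * (1 + Q) + γ) * (tx / m0) :=
    mul_le_mul_of_nonneg_left hξt (by positivity)
  have b7 : γ * ty ≤ γ * tx := mul_le_mul_of_nonneg_left htyx hγ
  have b8 : ((M * (1 + Q) + γ) / m0 + 2 * γ) * tx = (M * (1 + Q) + γ) * (tx / m0) + 2 * (γ * tx) := by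
    ring
  rw [b8, e]
  rw [abs_le] at *
  constructor <;> linarith [hA.1, hA.2, hW.1, hW.2, hH.1, hH.2, b4.1, b4.2, b5.1, b5.2]

/-- Transports a first-order expansion from one pair of arrival times, at distance `dy`, to another,
at distance `dx`, along the two characteristics joining them. -/
theorem pair_transport {Rx Ry dx dy qx qy γ k Q N : ℝ} (hγ : 0 ≤ γ)
    (hdx : 0 < dx) (hdy : 0 < dy) (hdk : dy ≤ k * dx)
    (hR : |Rx - Ry| ≤ N * dx) (hd : |dx - dy| ≤ N * dx) (hq : |qx - qy| ≤ γ) (hQ : |qx| ≤ Q)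
    (hH : |Ry - dy * qy| ≤ γ * dy) :
    |Rx - dx * qx| ≤ (N * (1 + Q) + 2 * γ * k) * dx := by
  have hQ0 := (abs_nonneg _).trans hQ
  have e : Rx - dx * qx = (Rx - Ry) + (Ry - dy * qy) - (dx - dy) * qx - dy * (qx - qy) := by ring
  have b4 : |dy * (qx - qy)| ≤ dy * γ := by
    rw [abs_mul, abs_of_pos hdy]; exact mul_le_mul_of_nonneg_left hq hdy.le
  have b5 : |(dx - dy) * qx| ≤ N * dx * Q := by
    rw [abs_mul]
    exact mul_le_mul hd hQ (abs_nonneg _) ((abs_nonneg _).trans hd)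
  have b6 := mul_le_mul_of_nonneg_left hdk hγ
  rw [e]
  rw [abs_le] at *
  constructor <;> linarith [hR.1, hR.2, hH.1, hH.2, b4.1, b4.2, b5.1, b5.2]

namespace CharSys

variable {T L C m0 : ℝ} {σ : Bool → ℝ} {r mm pp : Bool → ℝ → ℝ → ℝ} {w w' β β' : Bool → ℝ → ℝ}
  {τ τ₁ τ₂ : ℝ → ℝ} {i : Bool}

/-- The initial time derivative, as prescribed by the differential equation. -/
noncomputable def q0 (mm pp : Bool → ℝ → ℝ → ℝ) (w' : Bool → ℝ → ℝ) (i : Bool) (x : ℝ) : ℝ :=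
  (pp i 0 x - w' i x) / mm i 0 x

theorem mm_mul_q0 (S : CharSys T L C m0 σ r mm pp w w' β β') (i : Bool) (x : ℝ) :
    pp i 0 x - w' i x = mm i 0 x * q0 mm pp w' i x :=
  (mul_div_cancel₀ _ (S.hm0.trans_le (S.mm_ge i 0 x)).ne').symm

theorem q0_bd (S : CharSys T L C m0 σ r mm pp w w' β β') (i : Bool) {x : ℝ} (hx : x ∈ Icc 0 L) :
    |q0 mm pp w' i x| ≤ 2 * C / m0 := by
  rw [le_div_iff₀ S.hm0]
  have h1 := S.mm_mul_q0 i x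
  have h2 := mul_le_mul_of_nonneg_left (S.mm_ge i 0 x) (abs_nonneg (q0 mm pp w' i x))
  have h3 : |q0 mm pp w' i x| * mm i 0 x = |pp i 0 x - w' i x| := by
    rw [h1, abs_mul, abs_of_pos (S.hm0.trans_le (S.mm_ge i 0 x)), mul_comm]
  have := abs_sub (pp i 0 x) (w' i x)
  linarith [S.pp_bd i 0 x, S.w'_bd i x hx]

/-- The candidate time derivative at time `0` is uniformly continuous in `x`. -/
theorem q0_osc (S : CharSys T L C m0 σ r mm pp w w' β β') {γ : ℝ} (hγ : 0 < γ) :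
    ∃ h > 0, ∀ i, ∀ x ∈ Icc 0 L, ∀ y ∈ Icc 0 L, |x - y| ≤ h →
      |q0 mm pp w' i x - q0 mm pp w' i y| ≤ γ := by
  have hC := S.hC
  have hm0 := S.hm0
  obtain ⟨h1, hh1, H1⟩ := S.w_diff.deriv_osc (show 0 < γ * m0 / 2 by positivity)
  have hQ : 0 < 1 + 2 * C / m0 := by positivity
  refine ⟨min h1 (γ * m0 / 2 / (C * (1 + 2 * C / m0))), by positivity, fun i x hx y hy hxy => ?_⟩
  have a1 := H1 i x hx y hy (hxy.trans (min_le_left _ _))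
  have a2 := hxy.trans (min_le_right _ _)
  rw [le_div_iff₀ (by positivity)] at a2
  have a3 := S.pp_lip i 0 x 0 y
  have a4 := S.mm_lip i 0 x 0 y
  rw [sub_self, abs_zero, zero_add] at a3 a4
  have a5 := S.q0_bd i hy
  have e : mm i 0 x * (q0 mm pp w' i x - q0 mm pp w' i y) = (pp i 0 x - pp i 0 y)
      - (w' i x - w' i y) - (mm i 0 x - mm i 0 y) * q0 mm pp w' i y := by
    linear_combination (S.mm_mul_q0 i y) - (S.mm_mul_q0 i x)
  have a6 : |(mm i 0 x - mm i 0 y) * q0 mm pp w' i y| ≤ C * |x - y| * (2 * C / m0) := by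
    rw [abs_mul]; exact mul_le_mul a4 a5 (abs_nonneg _) (by positivity)
  have a7 : |mm i 0 x * (q0 mm pp w' i x - q0 mm pp w' i y)| ≤ γ * m0 := by
    rw [e]
    rw [abs_le] at a1 a3 a6 ⊢
    constructor <;> linarith [a1.1, a1.2, a3.1, a3.2, a6.1, a6.2]
  rw [abs_mul, abs_of_pos (hm0.trans_le (S.mm_ge i 0 x))] at a7
  have a8 := mul_le_mul_of_nonneg_right (S.mm_ge i 0 x) (abs_nonneg (q0 mm pp w' i x - q0 mm pp w' i y))
  refine le_of_mul_le_mul_left ?_ hm0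
  linarith

theorem w_zero (S : CharSys T L C m0 σ r mm pp w w' β β') (i : Bool) :
    w i 0 = β i 0 + σ i * w (!i) L := by
  rw [← S.init i 0 ⟨le_rfl, S.hL.le⟩, ← S.init (!i) L ⟨S.hL.le, le_rfl⟩,
    S.bdry i 0 ⟨le_rfl, S.hT.le⟩]

/-- The expansion at time `0` is transported along characteristics: it starts from the initial data
if the characteristic reaches `t = 0`, and from the inflow boundary `x = 0` otherwise. For `x = L`
and short times only the first case occurs, so no assumption at `x = 0` is needed there. -/
theorem expansion_step (S : CharSys T L C m0 σ r mm pp w w' β β') {γ : ℝ} (hγ : 0 < γ) :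
    ∃ γ₁ > 0, ∃ h0 > 0, ∀ h ≤ h0, ∀ i, ∀ x ∈ Icc 0 L,
      (x = L ∨ ∀ t ∈ Icc 0 h, |r i t 0 - w i 0 - t * q0 mm pp w' i 0| ≤ γ₁ * t) →
      ∀ t ∈ Icc 0 h, |r i t x - w i x - t * q0 mm pp w' i x| ≤ γ * t := by
  have hC := S.hC
  have hm0 := S.hm0
  have hL := S.hL
  have hT := S.hT
  set Q := 2 * C / m0 with hQdef
  have hQ : 0 < Q := by positivity
  set γ₁ := min (γ / 8) (γ * m0 / 4) with hγ₁
  have hγ₁0 : 0 < γ₁ := by positivity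
  obtain ⟨h1, hh1, H1⟩ := S.q0_osc hγ₁0
  obtain ⟨h2, hh2, H2⟩ := S.w_diff γ₁ hγ₁0
  set M0 := γ * m0 / 4 / (1 + Q) with hM0
  have hM0' : 0 < M0 := by positivity
  set κ := M0 / C / (1 + 1 / m0) with hκ
  refine ⟨γ₁, hγ₁0, min (min (h1 * m0) (h2 * m0)) (min (min T (L * m0 / 2)) κ), by positivity, ?_⟩
  intro h hh i x hx hxb t ht
  have hth := ht.2.trans hh
  have k1 : t / m0 ≤ h1 := by
    rw [div_le_iff₀ hm0]; exact hth.trans ((min_le_left _ _).trans (min_le_left _ _))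
  have k2 : t / m0 ≤ h2 := by
    rw [div_le_iff₀ hm0]; exact hth.trans ((min_le_left _ _).trans (min_le_right _ _))
  have k3 : t ≤ T := hth.trans ((min_le_right _ _).trans ((min_le_left _ _).trans (min_le_left _ _)))
  have k4 : t ≤ L * m0 / 2 :=
    hth.trans ((min_le_right _ _).trans ((min_le_left _ _).trans (min_le_right _ _)))
  have k5 : t ≤ κ := hth.trans ((min_le_right _ _).trans (min_le_right _ _))
  have k6 : C * (t + t / m0) ≤ M0 := by
    rw [hκ, le_div_iff₀ (by positivity), le_div_iff₀ hC] at k5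
    refine le_trans (le_of_eq ?_) k5
    field_simp
  obtain ⟨τ, hτx, hτ⟩ := S.exists_char i t hx
  obtain ⟨y, hy, hpos, hhit⟩ := hτ.hit hx hm0 (S.mm_ge i) (S.mm_le i) (by rw [hτx]; exact ht.1)
  have hτy := hpos y ⟨le_rfl, hy.2⟩
  have hlen := S.len_le hτ hy.1 hy.2 hx.2 hτx.le hτy
  have hyL : y ∈ Icc 0 L := ⟨hy.1, hy.2.trans hx.2⟩
  have hτyt : τ y ≤ t := hτx ▸ S.mono hτ hy.1 hy.2 hx.2
  have hξ : |x - y| ≤ t / m0 := by rwa [abs_of_nonneg (by linarith [hy.2])]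
  have near : ∀ z ∈ Ioo y x, C * (|τ z - 0| + |z - x|) ≤ M0 := fun z hz => by
    have a1 := hpos z ⟨hz.1.le, hz.2.le⟩
    have a2 := S.mono hτ (hy.1.trans hz.1.le) hz.2.le hx.2
    rw [sub_zero, abs_of_nonneg a1, abs_of_nonpos (by linarith [hz.2])]
    exact (mul_le_mul_of_nonneg_left (by linarith [hz.1]) hC.le).trans k6
  have A := S.charInc (c := pp i 0 x) (M := M0) hτ hy.1 hy.2 hx.2 hτy (by rw [hτx]; exact k3)
    (fun z hz => (S.pp_lip i _ _ _ _).trans (near z hz))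
  have B := S.timeInc (c := mm i 0 x) (M := M0) hτ hy.1 hy.2 hx.2
    (fun z hz => (S.mm_lip i _ _ _ _).trans (near z hz))
  have W := H2 i x hx y hyL x hx (by rw [abs_sub_comm]; exact hξ.trans k2) (by simpa using hh2.le)
  rw [abs_of_nonneg (by linarith [hy.2] : 0 ≤ x - y)] at W
  have H : |r i (τ y) y - w i y - τ y * q0 mm pp w' i y| ≤ γ₁ * τ y := by
    rcases hhit with h0 | h0
    · rcases hxb with rfl | hb
      · exfalso
        rw [h0, sub_zero, le_div_iff₀ hm0] at hlen
        have := mul_pos hL hm0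
        linarith
      · rw [h0]
        rw [h0] at hτy hτyt
        exact hb (τ 0) ⟨hτy, hτyt.trans ht.2⟩
    · rw [h0, S.init i y hyL]; simp
  rw [hτx] at A B
  have fin := expansion_transport hm0 hγ₁0.le hM0'.le hlen hτy hτyt A B W
    (H1 i x hx y hyL (hξ.trans k1)) (S.q0_bd i hx) (S.mm_mul_q0 i x) H
  refine fin.trans (mul_le_mul_of_nonneg_right ?_ ht.1)
  have g1 : M0 * (1 + Q) = γ * m0 / 4 := by rw [hM0]; field_simp
  have g2 : (M0 * (1 + Q) + γ₁) / m0 ≤ γ / 2 := by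
    rw [g1, div_le_iff₀ hm0]
    linarith [min_le_right (γ / 8) (γ * m0 / 4)]
  linarith [min_le_left (γ / 8) (γ * m0 / 4)]

/-- First-order expansion in time at `t = 0`, uniformly in `x`. -/
theorem expansion (S : CharSys T L C m0 σ r mm pp w w' β β') {γ : ℝ} (hγ : 0 < γ) :
    ∃ h > 0, ∀ i, ∀ x ∈ Icc 0 L, ∀ t ∈ Icc 0 h,
      |r i t x - w i x - t * q0 mm pp w' i x| ≤ γ * t := by
  obtain ⟨γ₁, hγ₁, h0, hh0, H0⟩ := S.expansion_step hγ
  obtain ⟨_, _, h1, hh1, H1⟩ := S.expansion_step (show 0 < γ₁ / 2 by positivity)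
  obtain ⟨h2, hh2, H2⟩ := S.β_diff (γ₁ / 2) (by positivity)
  have hT := S.hT
  have hL := S.hL
  refine ⟨min (min h0 h1) (min h2 T), by positivity, fun i x hx => ?_⟩
  refine H0 _ ((min_le_left _ _).trans (min_le_left _ _)) i x hx (Or.inr fun t ht => ?_)
  have a1 := H1 _ ((min_le_left _ _).trans (min_le_right _ _)) (!i) L ⟨hL.le, le_rfl⟩ (Or.inl rfl) t ht
  have htT : t ≤ T := ht.2.trans ((min_le_right _ _).trans (min_le_right _ _))
  have hth : t ≤ h2 := ht.2.trans ((min_le_right _ _).trans (min_le_left _ _))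
  have a2 := H2 i 0 ⟨le_rfl, hT.le⟩ 0 ⟨le_rfl, hT.le⟩ t ⟨ht.1, htT⟩ (by simpa using hh2.le)
    (by rwa [sub_zero, abs_of_nonneg ht.1])
  rw [sub_zero, abs_of_nonneg ht.1] at a2
  have e : r i t 0 - w i 0 - t * q0 mm pp w' i 0 = (β i t - β i 0 - t * β' i 0)
      + σ i * (r (!i) t L - w (!i) L - t * q0 mm pp w' (!i) L) := by
    have h3 : q0 mm pp w' i 0 = β' i 0 + σ i * q0 mm pp w' (!i) L := S.compat1 i
    rw [S.bdry i t ⟨ht.1, htT⟩, S.w_zero i, h3]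
    ring
  rw [e]
  refine (abs_add_le _ _).trans ?_
  rw [abs_mul]
  have := mul_le_mul (S.hσ i) a1 (abs_nonneg _) zero_le_one
  linarith

/-- The analogue of `expansion_step` for increments between two positive times. -/
theorem pair_step (S : CharSys T L C m0 σ r mm pp w w' β β') {γ : ℝ} (hγ : 0 < γ) :
    ∃ γ₁ > 0, ∃ h0 > 0, ∀ h ≤ h0, ∀ i, ∀ x ∈ Icc 0 L,
      (x = L ∨ ∀ t₁ t₂, 0 ≤ t₁ → t₁ < t₂ → t₂ ≤ h →
        |r i t₂ 0 - r i t₁ 0 - (t₂ - t₁) * q0 mm pp w' i 0| ≤ γ₁ * (t₂ - t₁)) →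
      ∀ t₁ t₂, 0 ≤ t₁ → t₁ < t₂ → t₂ ≤ h →
        |r i t₂ x - r i t₁ x - (t₂ - t₁) * q0 mm pp w' i x| ≤ γ * (t₂ - t₁) := by
  have hC := S.hC
  have hm0 := S.hm0
  have hL := S.hL
  have hT := S.hT
  set Q := 2 * C / m0 with hQdef
  have hQ : 0 < Q := by positivity
  set k := Real.exp (C * L) with hk
  have hk0 : 0 < k := Real.exp_pos _
  set γ₁ := γ / 4 / k with hγ₁
  have hγ₁0 : 0 < γ₁ := by positivity
  obtain ⟨h1, hh1, H1⟩ := S.q0_osc hγ₁0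
  obtain ⟨h2, hh2, H2⟩ := S.expansion hγ₁0
  refine ⟨γ₁, hγ₁0, min (min (h1 * m0) h2) (min (min T (L * m0 / 2))
    (γ / 2 * m0 / (C * k * (1 + Q)))), by positivity, ?_⟩
  intro h hh i x hx hxb t₁ t₂ ht₁ ht₁₂ ht₂
  have hth := ht₂.trans hh
  have k1 : t₂ / m0 ≤ h1 := by
    rw [div_le_iff₀ hm0]; exact hth.trans ((min_le_left _ _).trans (min_le_left _ _))
  have k2 : t₂ ≤ h2 := hth.trans ((min_le_left _ _).trans (min_le_right _ _))
  have k3 : t₂ ≤ T := hth.trans ((min_le_right _ _).trans ((min_le_left _ _).trans (min_le_left _ _)))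
  have k4 : t₂ ≤ L * m0 / 2 :=
    hth.trans ((min_le_right _ _).trans ((min_le_left _ _).trans (min_le_right _ _)))
  have k5 : C * k * (t₂ / m0) * (1 + Q) ≤ γ / 2 := by
    have := hth.trans ((min_le_right _ _).trans (min_le_right _ _))
    rw [le_div_iff₀ (by positivity)] at this
    have e : C * k * (t₂ / m0) * (1 + Q) = t₂ * (C * k * (1 + Q)) / m0 := by ring
    rwa [e, div_le_iff₀ hm0]
  obtain ⟨τ₁, hτ₁x, hτ₁⟩ := S.exists_char i t₁ hx
  obtain ⟨τ₂, hτ₂x, hτ₂⟩ := S.exists_char i t₂ hx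
  obtain ⟨y, hy, hpos, hhit⟩ := hτ₁.hit hx hm0 (S.mm_ge i) (S.mm_le i) (by rw [hτ₁x]; exact ht₁)
  have hτy := hpos y ⟨le_rfl, hy.2⟩
  have hlen := S.len_le hτ₁ hy.1 hy.2 hx.2 (hτ₁x.le.trans ht₁₂.le) hτy
  have hyL : y ∈ Icc 0 L := ⟨hy.1, hy.2.trans hx.2⟩
  have hτ₂yt : τ₂ y ≤ t₂ := hτ₂x ▸ S.mono hτ₂ hy.1 hy.2 hx.2
  have hξ : |x - y| ≤ t₂ / m0 := by rwa [abs_of_nonneg (by linarith [hy.2])]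
  have gap := hτ₁.gap hτ₂ hC (S.mm_lip i) hx hyL (by rw [hτ₁x, hτ₂x]; linarith)
  obtain ⟨P1, P2⟩ := S.pairInc hτ₁ hτ₂ hy.1 hy.2 hx.2 hτy (by rw [hτ₂x]; exact k3)
    (by rw [hτ₁x, hτ₂x]; exact ht₁₂)
  rw [hτ₁x, hτ₂x] at P1 P2 gap
  have hd : 0 < t₂ - t₁ := by linarith
  have hN : C * (k * (t₂ - t₁)) * (x - y) ≤ C * k * (t₂ / m0) * (t₂ - t₁) := by
    have := mul_le_mul_of_nonneg_left hlen (show 0 ≤ C * (k * (t₂ - t₁)) by positivity)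
    linarith [this]
  have H : |r i (τ₂ y) y - r i (τ₁ y) y - (τ₂ y - τ₁ y) * q0 mm pp w' i y| ≤ γ₁ * (τ₂ y - τ₁ y) := by
    rcases hhit with h0 | h0
    · rcases hxb with rfl | hb
      · exfalso
        rw [h0, sub_zero, le_div_iff₀ hm0] at hlen
        have := mul_pos hL hm0
        linarith
      · subst h0
        exact hb _ _ hτy (by linarith [gap.1]) (hτ₂yt.trans ht₂)
    · rw [h0, S.init i y hyL, sub_zero]
      have := gap.1
      exact H2 i y hyL _ ⟨by linarith, hτ₂yt.trans k2⟩
  have fin := pair_transport hγ₁0.le hd gap.1 gap.2 (P1.trans hN) (P2.trans hN)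
    (H1 i x hx y hyL (hξ.trans k1)) (S.q0_bd i hx) H
  refine fin.trans (mul_le_mul_of_nonneg_right ?_ hd.le)
  have g1 : 2 * γ₁ * k = γ / 2 := by rw [hγ₁]; field_simp; norm_num
  rw [← hk, g1]
  linarith

/-- Near `t = 0` all time difference quotients of the solution are close to `q0`. -/
theorem pair (S : CharSys T L C m0 σ r mm pp w w' β β') {γ : ℝ} (hγ : 0 < γ) :
    ∃ h > 0, ∀ i, ∀ x ∈ Icc 0 L, ∀ t₁ t₂, 0 ≤ t₁ → t₁ < t₂ → t₂ ≤ h →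
      |r i t₂ x - r i t₁ x - (t₂ - t₁) * q0 mm pp w' i x| ≤ γ * (t₂ - t₁) := by
  obtain ⟨γ₁, hγ₁, h0, hh0, H0⟩ := S.pair_step hγ
  obtain ⟨_, _, h1, hh1, H1⟩ := S.pair_step (show 0 < γ₁ / 2 by positivity)
  obtain ⟨h2, hh2, H2⟩ := S.β_diff (γ₁ / 2) (by positivity)
  have hT := S.hT
  have hL := S.hL
  refine ⟨min (min h0 h1) (min h2 T), by positivity, fun i x hx => ?_⟩
  refine H0 _ ((min_le_left _ _).trans (min_le_left _ _)) i x hx (Or.inr fun t₁ t₂ ht₁ ht₁₂ ht₂ => ?_)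
  have a1 := H1 _ ((min_le_left _ _).trans (min_le_right _ _)) (!i) L ⟨hL.le, le_rfl⟩ (Or.inl rfl)
    t₁ t₂ ht₁ ht₁₂ ht₂
  have htT : t₂ ≤ T := ht₂.trans ((min_le_right _ _).trans (min_le_right _ _))
  have hth : t₂ ≤ h2 := ht₂.trans ((min_le_right _ _).trans (min_le_left _ _))
  have a2 := H2 i 0 ⟨le_rfl, hT.le⟩ t₁ ⟨ht₁, by linarith⟩ t₂ ⟨by linarith, htT⟩
    (by rw [sub_zero, abs_of_nonneg ht₁]; linarith)
    (by rw [sub_zero, abs_of_nonneg (by linarith)]; linarith)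
  rw [abs_of_nonneg (by linarith : 0 ≤ t₂ - t₁)] at a2
  have e : r i t₂ 0 - r i t₁ 0 - (t₂ - t₁) * q0 mm pp w' i 0 = (β i t₂ - β i t₁ - (t₂ - t₁) * β' i 0)
      + σ i * (r (!i) t₂ L - r (!i) t₁ L - (t₂ - t₁) * q0 mm pp w' (!i) L) := by
    have h3 : q0 mm pp w' i 0 = β' i 0 + σ i * q0 mm pp w' (!i) L := S.compat1 i
    rw [S.bdry i t₂ ⟨by linarith, htT⟩, S.bdry i t₁ ⟨ht₁, by linarith⟩, h3]
    ring
  rw [e]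
  refine (abs_add_le _ _).trans ?_
  rw [abs_mul]
  have := mul_le_mul (S.hσ i) a1 (abs_nonneg _) zero_le_one
  linarith

end CharSys

/-! ### Oscillation of time difference quotients -/

/-- Difference quotient. -/
noncomputable def dquot (g : ℝ → ℝ) (t₁ t₂ : ℝ) : ℝ := (g t₂ - g t₁) / (t₂ - t₁)

theorem abs_dquot_sub_le {g : ℝ → ℝ} {t₁ t₂ c γ : ℝ} (h : t₁ < t₂)
    (H : |g t₂ - g t₁ - (t₂ - t₁) * c| ≤ γ * (t₂ - t₁)) : |dquot g t₁ t₂ - c| ≤ γ := by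
  have hp : 0 < t₂ - t₁ := by linarith
  have e : dquot g t₁ t₂ - c = (g t₂ - g t₁ - (t₂ - t₁) * c) / (t₂ - t₁) := by
    unfold dquot; field_simp
  rw [e, abs_div, abs_of_pos hp, div_le_iff₀ hp]
  exact H

/-- Stability of the equation `D' = p - D m` satisfied by difference quotients along a pair of
characteristics, when `p` and `m` are almost linear in the quotients `D`, `E`. -/
theorem quotient_stability {D₁ D₂ E₁ E₂ p₁ p₂ m₁ m₂ ma mb pa pb C γ : ℝ}
    (hC : 0 ≤ C) (hma : |ma| ≤ C) (hmb : |mb| ≤ C)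
    (hpa : |pa| ≤ C) (hpb : |pb| ≤ C) (hD₁ : |D₁| ≤ C) (hD₂ : |D₂| ≤ C) (hE₂ : |E₂| ≤ C)
    (hp₁ : |p₁ - (pa * D₁ + pb * E₁)| ≤ γ) (hp₂ : |p₂ - (pa * D₂ + pb * E₂)| ≤ γ)
    (hm₁ : |m₁ - (ma * D₁ + mb * E₁)| ≤ γ) (hm₂ : |m₂ - (ma * D₂ + mb * E₂)| ≤ γ) :
    |(p₁ - D₁ * m₁) - (p₂ - D₂ * m₂)|
      ≤ (C + 3 * C ^ 2) * |D₁ - D₂| + (C + 3 * C ^ 2) * |E₁ - E₂| + 2 * γ * (1 + C) := by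
  have e : (p₁ - D₁ * m₁) - (p₂ - D₂ * m₂) = (p₁ - (pa * D₁ + pb * E₁)) - (p₂ - (pa * D₂ + pb * E₂))
      - D₁ * (m₁ - (ma * D₁ + mb * E₁)) + D₂ * (m₂ - (ma * D₂ + mb * E₂))
      + pa * (D₁ - D₂) + pb * (E₁ - E₂) - ma * D₁ * (D₁ - D₂) - ma * D₂ * (D₁ - D₂)
      - mb * D₁ * (E₁ - E₂) - mb * E₂ * (D₁ - D₂) := by ring
  have c0 : ∀ {a b u v : ℝ}, |a| ≤ u → |b| ≤ v → |a * b| ≤ u * v := fun {a b u v} ha hb => by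
    rw [abs_mul]; exact mul_le_mul ha hb (abs_nonneg _) ((abs_nonneg _).trans ha)
  have c1 := c0 hD₁ hm₁
  have c2 := c0 hD₂ hm₂
  have c3 := c0 hpa le_rfl (b := D₁ - D₂)
  have c4 := c0 hpb le_rfl (b := E₁ - E₂)
  have c5 := c0 (c0 hma hD₁) le_rfl (b := D₁ - D₂)
  have c6 := c0 (c0 hma hD₂) le_rfl (b := D₁ - D₂)
  have c7 := c0 (c0 hmb hD₁) le_rfl (b := E₁ - E₂)
  have c8 := c0 (c0 hmb hE₂) le_rfl (b := D₁ - D₂)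
  have c9 : 0 ≤ C ^ 2 * |E₁ - E₂| := by positivity
  rw [e]
  rw [abs_le] at hp₁ hp₂ c1 c2 c3 c4 c5 c6 c7 c8 ⊢
  constructor <;> linarith [hp₁.1, hp₁.2, hp₂.1, hp₂.2, c1.1, c1.2, c2.1, c2.2, c3.1, c3.2, c4.1,
    c4.2, c5.1, c5.2, c6.1, c6.2, c7.1, c7.2, c8.1, c8.2]

/-- The differential inequality for the barrier at a contact point. -/
theorem barrier_contact {A K m m0 L z e ω u γ G' B : ℝ} (hA : 0 < A) (hL : 0 < L) (hm0 : 0 < m0)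
    (hK : K * m0 = 1 / L + 6 * A) (hm : m0 ≤ m) (hz0 : 0 ≤ z) (hz : z ≤ L) (he : 0 < e) (hω : 0 < ω)
    (hu : 1 ≤ u) (hγ : 0 < γ)
    (hB : B = 3 / 4 * ω * (e * (1 - z / (2 * L))) + γ * u)
    (hG : G' ≤ A * B + A * (ω * e) + A * γ / 2) :
    G' < 3 / 4 * ω * (e * (K * m) * (1 - z / (2 * L)) + e * (-(1 / (2 * L)))) + γ * (u * (2 * A)) := by
  have hK0 : 0 < K := by
    have : 0 < K * m0 := by rw [hK]; positivity
    exact pos_of_mul_pos_left this hm0.le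
  have hζ : 1 / 2 ≤ 1 - z / (2 * L) := by
    have : z / (2 * L) ≤ 1 / 2 := by rw [div_le_iff₀ (by positivity)]; linarith
    linarith
  have hζ1 : 1 - z / (2 * L) ≤ 1 := by
    have : 0 ≤ z / (2 * L) := div_nonneg hz0 (by positivity)
    linarith
  generalize 1 - z / (2 * L) = ζ at *
  have hKm : 1 / L + 6 * A ≤ K * m := hK ▸ mul_le_mul_of_nonneg_left hm hK0.le
  have h1 : (1 / L + 6 * A) * (1 / 2) ≤ K * m * ζ :=
    mul_le_mul hKm hζ (by norm_num) (by have := hm0.le.trans hm; positivity)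
  have h2 : (1 / L : ℝ) * (1 / 2) = 1 / (2 * L) := by field_simp
  have h3 : 3 * A ≤ K * m * ζ - 1 / (2 * L) := by linarith
  have hωe : 0 < ω * e := by positivity
  have h4 := mul_le_mul_of_nonneg_left h3 hωe.le
  have h5 := mul_le_mul_of_nonneg_left hζ1 (show 0 ≤ A * (ω * e) by positivity)
  have h6 := mul_le_mul_of_nonneg_left hu (show 0 ≤ A * γ by positivity)
  have h7 : 0 < A * γ := by positivity
  have h8 : 0 < A * (ω * e) := by positivity
  have h9 : A * B = 3 / 4 * (A * (ω * e) * ζ) + A * γ * u := by rw [hB]; ring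
  rw [h9] at hG
  have h10 : 3 / 4 * ω * (e * (K * m) * ζ + e * (-(1 / (2 * L)))) + γ * (u * (2 * A))
    = 3 / 4 * (ω * e * (K * m * ζ - 1 / (2 * L))) + 2 * (A * γ * u) := by ring
  rw [h10]
  linarith

namespace CharSys

variable {T L C m0 : ℝ} {σ : Bool → ℝ} {r mm pp : Bool → ℝ → ℝ → ℝ} {w w' β β' : Bool → ℝ → ℝ}
  {τ τ₁ τ₂ : ℝ → ℝ} {i : Bool}

/-- The time difference quotients of `r` over windows of length `h` oscillate by at most `ω`, up to
the weight `e^{K s} (1 - x / 2 L)`. -/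
def Osc (T L K : ℝ) (r : Bool → ℝ → ℝ → ℝ) (ω h : ℝ) : Prop :=
  ∀ i, ∀ x ∈ Icc 0 L, ∀ s ∈ Icc 0 T, ∀ t₁ t₂ t₃ t₄, s ≤ t₁ → t₁ < t₂ → t₂ ≤ T → t₂ ≤ s + h →
    s ≤ t₃ → t₃ < t₄ → t₄ ≤ T → t₄ ≤ s + h →
    |dquot (fun t => r i t x) t₁ t₂ - dquot (fun t => r i t x) t₃ t₄|
      ≤ ω * (Real.exp (K * s) * (1 - x / (2 * L)))

theorem dquot_bd (S : CharSys T L C m0 σ r mm pp w w' β β') (i : Bool) (x : ℝ) {t₁ t₂ : ℝ}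
    (h : t₁ < t₂) : |dquot (fun t => r i t x) t₁ t₂| ≤ C := by
  have hp : 0 < t₂ - t₁ := by linarith
  have := S.r_lip i t₂ x t₁ x
  rw [sub_self, abs_zero, add_zero, abs_of_pos hp] at this
  unfold dquot
  rw [abs_div, abs_of_pos hp, div_le_iff₀ hp]
  exact this

/-- Characteristics which start in a time window of length `h` stay ordered, within a window of
length `e^{C L} h`. -/
theorem order (S : CharSys T L C m0 σ r mm pp w w' β β') (h₁ : IsChar L (mm i) τ₁)
    (h₂ : IsChar L (mm i) τ₂) {x y h : ℝ} (hx : x ∈ Icc 0 L) (hy : y ∈ Icc 0 L) (hle : τ₁ x ≤ τ₂ x)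
    (hh : τ₂ x ≤ τ₁ x + h) : τ₁ y ≤ τ₂ y ∧ τ₂ y ≤ τ₁ y + Real.exp (C * L) * h := by
  have hk := Real.exp_pos (C * L)
  have hb := h₁.abs_sub_le h₂ S.hC (S.mm_lip i) hx hy
  rw [abs_of_nonneg (by linarith : 0 ≤ τ₂ x - τ₁ x)] at hb
  have h3 : Real.exp (C * L) * (τ₂ x - τ₁ x) ≤ Real.exp (C * L) * h :=
    mul_le_mul_of_nonneg_left (by linarith) hk.le
  refine ⟨?_, by linarith [le_of_abs_le hb]⟩
  rcases hle.eq_or_lt with he | hlt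
  · rw [he, sub_self, mul_zero] at hb
    linarith [abs_nonpos_iff.1 hb]
  · linarith [(h₁.gap h₂ S.hC (S.mm_lip i) hx hy (by linarith)).1]

/-- The difference quotient between two characteristics has right derivative `p - D m`. -/
theorem dquot_rderiv (S : CharSys T L C m0 σ r mm pp w w' β β') (h₁ : IsChar L (mm i) τ₁)
    (h₂ : IsChar L (mm i) τ₂) {z : ℝ} (hz : z ∈ Ioo 0 L) (h1 : τ₁ z ∈ Ico 0 T)
    (h2 : τ₂ z ∈ Ico 0 T) (hlt : τ₁ z < τ₂ z) :
    HasDerivWithinAt (fun z => dquot (fun t => r i t z) (τ₁ z) (τ₂ z))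
      (dquot (fun t => pp i t z) (τ₁ z) (τ₂ z) - dquot (fun t => r i t z) (τ₁ z) (τ₂ z)
        * dquot (fun t => mm i t z) (τ₁ z) (τ₂ z)) (Ici z) z := by
  have hz' : z ∈ Icc 0 L := ⟨hz.1.le, hz.2.le⟩
  have hp : τ₂ z - τ₁ z ≠ 0 := by linarith
  have hd := ((S.rderiv h₂ hz h2).sub (S.rderiv h₁ hz h1)).div
    ((h₂ z hz').sub (h₁ z hz')).hasDerivWithinAt (s := Ici z) hp
  refine hd.congr_deriv ?_
  unfold dquot
  simp only [Pi.sub_apply]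
  field_simp

theorem osc_base (S : CharSys T L C m0 σ r mm pp w w' β β') {K : ℝ} (hK : 0 ≤ K) :
    Osc T L K r (4 * C) 1 := by
  intro i x hx s hs t₁ t₂ t₃ t₄ _ h12 _ _ _ h34 _ _
  have hL := S.hL
  have hC := S.hC
  have h1 := S.dquot_bd i x h12
  have h2 := S.dquot_bd i x h34
  have h3 := abs_sub (dquot (fun t => r i t x) t₁ t₂) (dquot (fun t => r i t x) t₃ t₄)
  have h4 : 1 ≤ Real.exp (K * s) := Real.one_le_exp (mul_nonneg hK hs.1)
  have h5 : 1 / 2 ≤ 1 - x / (2 * L) := by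
    have : x / (2 * L) ≤ 1 / 2 := by rw [div_le_iff₀ (by positivity)]; linarith [hx.2]
    linarith
  have h6 : 1 * (1 / 2) ≤ Real.exp (K * s) * (1 - x / (2 * L)) :=
    mul_le_mul h4 h5 (by norm_num) (by positivity)
  have h7 := mul_le_mul_of_nonneg_left h6 (show 0 ≤ 4 * C by positivity)
  linarith

/-- Where a characteristic enters the domain, oscillations are controlled either by the initial
data or, through the boundary coupling, by half of the oscillations at `x = L`. -/
theorem osc_entry (S : CharSys T L C m0 σ r mm pp w w' β β') {γ : ℝ} (hγ : 0 < γ) :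
    ∃ h0 > 0, ∀ K ω h, 0 ≤ ω → Osc T L K r ω h → ∀ h' ≤ h0, h' ≤ h → ∀ i, ∀ y ∈ Icc 0 L,
      ∀ s ∈ Icc 0 T, (y = 0 ∨ s = 0) → ∀ t₁ t₂ t₃ t₄, s ≤ t₁ → t₁ < t₂ → t₂ ≤ T → t₂ ≤ s + h' →
      s ≤ t₃ → t₃ < t₄ → t₄ ≤ T → t₄ ≤ s + h' →
      |dquot (fun t => r i t y) t₁ t₂ - dquot (fun t => r i t y) t₃ t₄|
        ≤ γ / 2 + 1 / 2 * ω * (Real.exp (K * s) * (1 - y / (2 * L))) := by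
  obtain ⟨h1, hh1, H1⟩ := S.pair (show 0 < γ / 4 by positivity)
  obtain ⟨h2, hh2, H2⟩ := S.β_diff (γ / 4) (by positivity)
  have hL := S.hL
  refine ⟨min h1 h2, by positivity, ?_⟩
  intro K ω h hω hO h' hh' hh i y hy s hs hys t₁ t₂ t₃ t₄ a1 a12 a2 a2' a3 a34 a4 a4'
  have hle1 := hh'.trans (min_le_left _ _)
  have hle2 := hh'.trans (min_le_right _ _)
  have hcomb : ∀ {a b c : ℝ}, |a - c| ≤ γ / 4 → |b - c| ≤ γ / 4 → |a - b| ≤ γ / 2 :=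
    fun {a b c} ha hb => by
      rw [abs_le] at *; constructor <;> linarith [ha.1, ha.2, hb.1, hb.2]
  rcases hys with rfl | rfl
  · have hB : ∀ u v, s ≤ u → u < v → v ≤ T → v ≤ s + h' → |dquot (β i) u v - β' i s| ≤ γ / 4 := by
      intro u v hu huv hvT hv
      have := H2 i s hs u ⟨hs.1.trans hu, by linarith⟩ v ⟨by linarith [hs.1], hvT⟩
        (by rw [abs_of_nonneg (by linarith)]; linarith)
        (by rw [abs_of_nonneg (by linarith)]; linarith)
      rw [abs_of_pos (by linarith : 0 < v - u)] at this
      exact abs_dquot_sub_le huv this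
    have hD : ∀ u v, s ≤ u → u < v → v ≤ T → dquot (fun t => r i t 0) u v
        = dquot (β i) u v + σ i * dquot (fun t => r (!i) t L) u v := by
      intro u v hu huv hvT
      unfold dquot
      simp only
      rw [S.bdry i u ⟨hs.1.trans hu, by linarith⟩, S.bdry i v ⟨by linarith [hs.1], hvT⟩]
      ring
    rw [hD _ _ a1 a12 a2, hD _ _ a3 a34 a4]
    have b1 := hcomb (hB _ _ a1 a12 a2 a2') (hB _ _ a3 a34 a4 a4')
    have b2 := hO (!i) L ⟨hL.le, le_rfl⟩ s hs t₁ t₂ t₃ t₄ a1 a12 a2 (by linarith) a3 a34 a4 (by linarith)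
    have e1 : (1 : ℝ) - L / (2 * L) = 1 / 2 := by field_simp; norm_num
    have e2 : (1 : ℝ) - 0 / (2 * L) = 1 := by simp
    rw [e1] at b2
    rw [e2]
    have b3 := mul_le_mul (S.hσ i) b2 (abs_nonneg _) zero_le_one
    rw [← abs_mul] at b3
    refine le_trans (le_of_eq ?_) ((abs_add_le (dquot (β i) t₁ t₂ - dquot (β i) t₃ t₄)
      (σ i * (dquot (fun t => r (!i) t L) t₁ t₂ - dquot (fun t => r (!i) t L) t₃ t₄))).trans ?_)
    · congr 1; ring
    · linarith
  · have b1 := abs_dquot_sub_le (g := fun t => r i t y) a12 (H1 i y hy t₁ t₂ a1 a12 (by linarith))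
    have b2 := abs_dquot_sub_le (g := fun t => r i t y) a34 (H1 i y hy t₃ t₄ a3 a34 (by linarith))
    have e1 : 0 ≤ 1 - y / (2 * L) := by
      have : y / (2 * L) ≤ 1 := by rw [div_le_iff₀ (by positivity)]; linarith [hy.2]
      linarith
    have : 0 ≤ 1 / 2 * ω * (Real.exp (K * 0) * (1 - y / (2 * L))) := by positivity
    linarith [hcomb b1 b2]

/-- A first-order expansion divided by the time increment. -/
theorem dquot_linear (S : CharSys T L C m0 σ r mm pp w w' β β') {γ a b : ℝ} {g : ℝ → ℝ}
    {t₁ t₂ x : ℝ} (h : t₁ < t₂) (H : |g t₂ - g t₁ - (a * (r i t₂ x - r i t₁ x)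
        + b * (r (!i) t₂ (L - x) - r (!i) t₁ (L - x)))| ≤ γ * |t₂ - t₁|) :
    |dquot g t₁ t₂ - (a * dquot (fun t => r i t x) t₁ t₂
      + b * dquot (fun t => r (!i) t (L - x)) t₁ t₂)| ≤ γ := by
  have _ := S.hC
  have hp : 0 < t₂ - t₁ := by linarith
  rw [abs_of_pos hp] at H
  have e : dquot g t₁ t₂ - (a * dquot (fun t => r i t x) t₁ t₂
      + b * dquot (fun t => r (!i) t (L - x)) t₁ t₂) = (g t₂ - g t₁ - (a * (r i t₂ x - r i t₁ x)
        + b * (r (!i) t₂ (L - x) - r (!i) t₁ (L - x)))) / (t₂ - t₁) := by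
    unfold dquot; field_simp
  rw [e, abs_div, abs_of_pos hp, div_le_iff₀ hp]
  exact H

/-- Contraction of the oscillation of the time difference quotients. Along the characteristic `τ`
through the given point, `3/4 ω e^{K τ} (1 - z / 2 L) + γ e^{2 A z}` is a barrier: the characteristic
enters the domain below it by `osc_entry`, and the choice of `K` excludes contact. -/
theorem osc_step (S : CharSys T L C m0 σ r mm pp w w' β β') {K : ℝ}
    (hK : K * m0 = 1 / L + 6 * (C + 3 * C ^ 2)) {ω h : ℝ} (hω : 0 < ω) (hh : 0 < h)
    (hO : Osc T L K r ω h) : ∃ h' > 0, Osc T L K r (7 / 8 * ω) h' := by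
  have hC := S.hC
  have hm0 := S.hm0
  have hL := S.hL
  have hK0 : 0 ≤ K := by
    have : 0 < K * m0 := by rw [hK]; positivity
    exact (pos_of_mul_pos_left this hm0.le).le
  set A := C + 3 * C ^ 2 with hA
  have hA0 : 0 < A := by positivity
  set γ := ω / 16 / Real.exp (2 * A * L) with hγ
  have hγ0 : 0 < γ := by positivity
  set γ' := A * γ / 4 / (1 + C) with hγ'
  have hγ'0 : 0 < γ' := by positivity
  obtain ⟨h1, hh1, H1⟩ := S.osc_entry hγ0
  obtain ⟨h2, hh2, H2⟩ := S.usd γ' hγ'0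
  set k := Real.exp (C * L) with hk
  have hk0 : 0 < k := Real.exp_pos _
  refine ⟨min h (min h1 h2) / k, by positivity, ?_⟩
  intro i x hx s hs t₁ t₂ t₃ t₄ a1 a12 a2 a2' a3 a34 a4 a4'
  set h' := min h (min h1 h2) with hh'
  have l0 : h' ≤ h := min_le_left _ _
  have l1 : h' ≤ h1 := (min_le_right _ _).trans (min_le_left _ _)
  have l2 : h' ≤ h2 := (min_le_right _ _).trans (min_le_right _ _)
  have hkh : k * (h' / k) = h' := mul_div_cancel₀ _ hk0.ne'
  obtain ⟨τ, hτx, hτ⟩ := S.exists_char i s hx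
  obtain ⟨τ₁, hτ₁x, hτ₁⟩ := S.exists_char i t₁ hx
  obtain ⟨τ₂, hτ₂x, hτ₂⟩ := S.exists_char i t₂ hx
  obtain ⟨τ₃, hτ₃x, hτ₃⟩ := S.exists_char i t₃ hx
  obtain ⟨τ₄, hτ₄x, hτ₄⟩ := S.exists_char i t₄ hx
  obtain ⟨y, hy, hpos, hhit⟩ := hτ.hit hx hm0 (S.mm_ge i) (S.mm_le i) (by rw [hτx]; exact hs.1)
  have sub : ∀ z ∈ Icc y x, z ∈ Icc 0 L := fun z hz => ⟨hy.1.trans hz.1, hz.2.trans hx.2⟩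
  have ord : ∀ {τ' : ℝ → ℝ} {t : ℝ}, IsChar L (mm i) τ' → τ' x = t → s ≤ t → t ≤ s + h' / k → t ≤ T →
      ∀ z ∈ Icc y x, τ z ≤ τ' z ∧ τ' z ≤ τ z + h' ∧ τ' z ≤ T := by
    intro τ' t hτ' ht hst hth htT z hz
    have := S.order hτ hτ' hx (sub z hz) (by rw [hτx, ht]; exact hst) (by rw [hτx, ht]; exact hth)
    rw [← hk, hkh] at this
    exact ⟨this.1, this.2, (S.mono hτ' (sub z hz).1 hz.2 hx.2).trans (ht.le.trans htT)⟩
  have o1 := ord hτ₁ hτ₁x a1 (by linarith) (by linarith)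
  have o2 := ord hτ₂ hτ₂x (by linarith) a2' a2
  have o3 := ord hτ₃ hτ₃x a3 (by linarith) (by linarith)
  have o4 := ord hτ₄ hτ₄x (by linarith) a4' a4
  have g12 : ∀ z ∈ Icc y x, τ₁ z < τ₂ z := fun z hz => by
    linarith [(hτ₁.gap hτ₂ hC (S.mm_lip i) hx (sub z hz) (by rw [hτ₁x, hτ₂x]; linarith)).1]
  have g34 : ∀ z ∈ Icc y x, τ₃ z < τ₄ z := fun z hz => by
    linarith [(hτ₃.gap hτ₄ hC (S.mm_lip i) hx (sub z hz) (by rw [hτ₃x, hτ₄x]; linarith)).1]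
  have hτT : ∀ z ∈ Icc y x, τ z ∈ Icc 0 T := fun z hz => ⟨hpos z hz, (o1 z hz).1.trans (o1 z hz).2.2⟩
  have qcont : ∀ {τ τ' : ℝ → ℝ}, IsChar L (mm i) τ → IsChar L (mm i) τ' →
      (∀ z ∈ Icc y x, τ z < τ' z) →
      ContinuousOn (fun z => dquot (fun t => r i t z) (τ z) (τ' z)) (Icc y x) := by
    intro τ τ' hτ hτ' hlt
    refine ContinuousOn.div ((S.cont_along hτ' i hy.1 hx.2).sub (S.cont_along hτ i hy.1 hx.2))
      ((hτ'.continuousOn.sub hτ.continuousOn).mono (Icc_subset_Icc hy.1 hx.2)) fun z hz => ?_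
    linarith [hlt z hz]
  have qder : ∀ {τ' τ'' : ℝ → ℝ}, IsChar L (mm i) τ' → IsChar L (mm i) τ'' →
      (∀ z ∈ Icc y x, τ z ≤ τ' z ∧ τ' z ≤ τ z + h' ∧ τ' z ≤ T) →
      (∀ z ∈ Icc y x, τ z ≤ τ'' z ∧ τ'' z ≤ τ z + h' ∧ τ'' z ≤ T) →
      (∀ z ∈ Icc y x, τ' z < τ'' z) → ∀ z ∈ Ioo y x,
      HasDerivWithinAt (fun z => dquot (fun t => r i t z) (τ' z) (τ'' z))
      (dquot (fun t => pp i t z) (τ' z) (τ'' z) - dquot (fun t => r i t z) (τ' z) (τ'' z)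
        * dquot (fun t => mm i t z) (τ' z) (τ'' z)) (Ici z) z := by
    intro τ' τ'' hτ' hτ'' ho' ho'' hlt z hz
    have hyI : y ∈ Icc y x := ⟨le_rfl, hy.2⟩
    have hxI : x ∈ Icc y x := ⟨hy.2, le_rfl⟩
    exact S.dquot_rderiv hτ' hτ'' ⟨hy.1.trans_lt hz.1, hz.2.trans_le hx.2⟩
      (S.time_mem hτ' hy.1 hx.2 ((hpos y hyI).trans (ho' y hyI).1) (ho' x hxI).2.2 hz)
      (S.time_mem hτ'' hy.1 hx.2 ((hpos y hyI).trans (ho'' y hyI).1) (ho'' x hxI).2.2 hz)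
      (hlt z ⟨hz.1.le, hz.2.le⟩)
  have hBd : ∀ z ∈ Icc 0 L, HasDerivAt (fun z => 3 / 4 * ω * (Real.exp (K * τ z) * (1 - z / (2 * L)))
      + γ * Real.exp (z * (2 * A))) (3 / 4 * ω * (Real.exp (K * τ z) * (K * mm i (τ z) z)
        * (1 - z / (2 * L)) + Real.exp (K * τ z) * (-(1 / (2 * L))))
        + γ * (Real.exp (z * (2 * A)) * (2 * A))) z := by
    intro z hz
    have e1 := ((hτ z hz).const_mul K).exp
    have e2 := ((hasDerivAt_id z).div_const (2 * L)).const_sub 1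
    have e3 := ((hasDerivAt_id z).mul_const (2 * A)).exp
    have := ((e1.mul e2).const_mul (3 / 4 * ω)).add (e3.const_mul γ)
    refine this.congr_deriv ?_
    simp only [id_eq, one_mul]
  have main := barrier_le
    (g := fun z => dquot (fun t => r i t z) (τ₁ z) (τ₂ z) - dquot (fun t => r i t z) (τ₃ z) (τ₄ z))
    (g' := fun z => (dquot (fun t => pp i t z) (τ₁ z) (τ₂ z) - dquot (fun t => r i t z) (τ₁ z) (τ₂ z)
        * dquot (fun t => mm i t z) (τ₁ z) (τ₂ z)) - (dquot (fun t => pp i t z) (τ₃ z) (τ₄ z)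
        - dquot (fun t => r i t z) (τ₃ z) (τ₄ z) * dquot (fun t => mm i t z) (τ₃ z) (τ₄ z)))
    (B := fun z => 3 / 4 * ω * (Real.exp (K * τ z) * (1 - z / (2 * L))) + γ * Real.exp (z * (2 * A)))
    (a := y) (b := x)
    ((qcont hτ₁ hτ₂ g12).sub (qcont hτ₃ hτ₄ g34))
    (fun z hz => (qder hτ₁ hτ₂ o1 o2 g12 z hz).sub (qder hτ₃ hτ₄ o3 o4 g34 z hz))
    (fun z hz => (hBd z (sub z hz)).continuousAt.continuousWithinAt)
    (fun z hz => (hBd z (sub z ⟨hz.1.le, hz.2.le⟩)).hasDerivWithinAt) ?_ ?_ x ⟨hy.2, le_rfl⟩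
  · simp only [hτx, hτ₁x, hτ₂x, hτ₃x, hτ₄x] at main
    refine main.trans ?_
    have e1 : 1 / 2 ≤ 1 - x / (2 * L) := by
      have : x / (2 * L) ≤ 1 / 2 := by rw [div_le_iff₀ (by positivity)]; linarith [hx.2]
      linarith
    have e2 : 1 ≤ Real.exp (K * s) := Real.one_le_exp (mul_nonneg hK0 hs.1)
    have e3 : 1 * (1 / 2) ≤ Real.exp (K * s) * (1 - x / (2 * L)) :=
      mul_le_mul e2 e1 (by norm_num) (by positivity)
    have e4 := mul_le_mul_of_nonneg_left e3 hω.le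
    have e5 : γ * Real.exp (x * (2 * A)) ≤ ω / 16 := by
      rw [hγ, div_mul_eq_mul_div, div_le_iff₀ (Real.exp_pos _)]
      refine mul_le_mul_of_nonneg_left (Real.exp_le_exp.2 ?_) (by positivity)
      have := mul_le_mul_of_nonneg_left hx.2 (show 0 ≤ 2 * A by positivity)
      linarith
    linarith
  · have hyI : y ∈ Icc y x := ⟨le_rfl, hy.2⟩
    have := H1 K ω h hω.le hO h' l1 l0 i y (sub y hyI) (τ y) (hτT y hyI) hhit
      (τ₁ y) (τ₂ y) (τ₃ y) (τ₄ y) (o1 y hyI).1 (g12 y hyI) (o2 y hyI).2.2 (o2 y hyI).2.1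
      (o3 y hyI).1 (g34 y hyI) (o4 y hyI).2.2 (o4 y hyI).2.1
    refine this.trans_lt ?_
    have e1 : 0 < 1 - y / (2 * L) := by
      have : y / (2 * L) ≤ 1 / 2 := by rw [div_le_iff₀ (by positivity)]; linarith [(sub y hyI).2]
      linarith
    have e2 : 0 < ω * (Real.exp (K * τ y) * (1 - y / (2 * L))) := by positivity
    have e3 : 1 ≤ Real.exp (y * (2 * A)) := Real.one_le_exp (by have := hy.1; positivity)
    have e4 := mul_le_mul_of_nonneg_left e3 hγ0.le
    linarith
  · -- at a contact point the coupling to the other component is estimated by `hO`, with weight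
    -- evaluated at `L - z`
    intro z hz hcontact
    have hzI : z ∈ Icc y x := ⟨hz.1.le, hz.2.le⟩
    have hzL := sub z hzI
    obtain ⟨ma, mb, pa, pb, hma, hmb, hpa, hpb, hu⟩ := H2 i (τ z) z
    have near : ∀ {u : ℝ}, τ z ≤ u ∧ u ≤ τ z + h' ∧ u ≤ T → |u - τ z| ≤ h2 := fun {u} hu => by
      rw [abs_of_nonneg (by linarith [hu.1])]; linarith [hu.2.1]
    obtain ⟨u1, v1⟩ := hu (τ₁ z) (τ₂ z) (near (o1 z hzI)) (near (o2 z hzI))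
    obtain ⟨u2, v2⟩ := hu (τ₃ z) (τ₄ z) (near (o3 z hzI)) (near (o4 z hzI))
    have st := quotient_stability hC.le hma hmb hpa hpb (S.dquot_bd i z (g12 z hzI))
      (S.dquot_bd i z (g34 z hzI)) (S.dquot_bd (!i) (L - z) (g34 z hzI))
      (S.dquot_linear (g := fun t => pp i t z) (g12 z hzI) v1)
      (S.dquot_linear (g := fun t => pp i t z) (g34 z hzI) v2)
      (S.dquot_linear (g := fun t => mm i t z) (g12 z hzI) u1)
      (S.dquot_linear (g := fun t => mm i t z) (g34 z hzI) u2)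
    have hE := hO (!i) (L - z) ⟨by linarith [hzL.2], by linarith [hzL.1]⟩ (τ z) (hτT z hzI)
      (τ₁ z) (τ₂ z) (τ₃ z) (τ₄ z) (o1 z hzI).1 (g12 z hzI) (o2 z hzI).2.2
      ((o2 z hzI).2.1.trans (by linarith)) (o3 z hzI).1 (g34 z hzI) (o4 z hzI).2.2
      ((o4 z hzI).2.1.trans (by linarith))
    have hE' : ω * (Real.exp (K * τ z) * (1 - (L - z) / (2 * L))) ≤ ω * Real.exp (K * τ z) := by
      have e1 : 0 ≤ (L - z) / (2 * L) := div_nonneg (by linarith [hzL.2]) (by positivity)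
      refine mul_le_mul_of_nonneg_left ?_ hω.le
      exact mul_le_of_le_one_right (Real.exp_pos _).le (by linarith)
    rw [hcontact] at st
    have hE2 := mul_le_mul_of_nonneg_left (hE.trans hE') hA0.le
    have eγ : 2 * γ' * (1 + C) = A * γ / 2 := by rw [hγ']; field_simp; norm_num
    rw [eγ] at st
    refine barrier_contact hA0 hL hm0 hK (S.mm_ge i (τ z) z) hzL.1 hzL.2 (Real.exp_pos _) hω
      (Real.one_le_exp (by have := hzL.1; positivity)) hγ0 rfl ?_
    refine st.trans ?_
    linarith

/-- Iterating `osc_step`, the oscillation tends to `0` with the window length. -/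
theorem exists_osc (S : CharSys T L C m0 σ r mm pp w w' β β') :
    ∃ K, 0 ≤ K ∧ ∀ ω > 0, ∃ h > 0, Osc T L K r ω h := by
  have hC := S.hC
  have hm0 := S.hm0
  have hL := S.hL
  refine ⟨(1 / L + 6 * (C + 3 * C ^ 2)) / m0, by positivity, ?_⟩
  set K := (1 / L + 6 * (C + 3 * C ^ 2)) / m0 with hKdef
  have hK : K * m0 = 1 / L + 6 * (C + 3 * C ^ 2) := div_mul_cancel₀ _ hm0.ne'
  have hK0 : 0 ≤ K := by positivity
  have iter : ∀ n : ℕ, ∃ h > 0, Osc T L K r ((7 / 8) ^ n * (4 * C)) h := by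
    intro n
    induction n with
    | zero => exact ⟨1, one_pos, by simpa using S.osc_base hK0⟩
    | succ n ih =>
      obtain ⟨h, hh, hO⟩ := ih
      obtain ⟨h', hh', hO'⟩ := S.osc_step hK (by positivity) hh hO
      exact ⟨h', hh', by rw [pow_succ']; simpa [mul_assoc] using hO'⟩
  intro ω hω
  obtain ⟨n, hn⟩ := exists_pow_lt_of_lt_one (show 0 < ω / (4 * C) by positivity)
    (show (7 / 8 : ℝ) < 1 by norm_num)
  rw [lt_div_iff₀ (by positivity)] at hn
  obtain ⟨h, hh, hO⟩ := iter n
  refine ⟨h, hh, ?_⟩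
  intro i x hx s hs t₁ t₂ t₃ t₄ a1 a12 a2 a2' a3 a34 a4 a4'
  refine (hO i x hx s hs t₁ t₂ t₃ t₄ a1 a12 a2 a2' a3 a34 a4 a4').trans
    (mul_le_mul_of_nonneg_right hn.le (mul_nonneg (Real.exp_pos _).le ?_))
  have : x / (2 * L) ≤ 1 := by rw [div_le_iff₀ (by positivity)]; linarith [hx.2]
  linarith

end CharSys

/-! ### Continuous differentiability -/

theorem hasDerivWithinAt_of_forall {g : ℝ → ℝ} {s : Set ℝ} {x c : ℝ}
    (H : ∀ γ > 0, ∃ h > 0, ∀ y ∈ s, |y - x| ≤ h → |g y - g x - (y - x) * c| ≤ γ * |y - x|) :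
    HasDerivWithinAt g c s x := by
  rw [hasDerivWithinAt_iff_isLittleO, Asymptotics.isLittleO_iff]
  intro γ hγ
  obtain ⟨h, hh, H⟩ := H γ hγ
  have h1 : ∀ᶠ y in 𝓝[s] x, |y - x| ≤ h := by
    have : ∀ᶠ y in 𝓝 x, |y - x| < h :=
      Metric.eventually_nhds_iff.2 ⟨h, hh, fun y hy => by rwa [Real.dist_eq] at hy⟩
    exact (this.filter_mono nhdsWithin_le_nhds).mono fun y hy => hy.le
  filter_upwards [h1, self_mem_nhdsWithin] with y hy hys
  simpa only [Real.norm_eq_abs, smul_eq_mul] using H y hys hy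

namespace CharSys

variable {T L C m0 : ℝ} {σ : Bool → ℝ} {r mm pp : Bool → ℝ → ℝ → ℝ} {w w' β β' : Bool → ℝ → ℝ}
  {τ : ℝ → ℝ} {i : Bool}

/-- Uniform control of the oscillation on windows centred at `t`, without weights. -/
theorem osc_window (S : CharSys T L C m0 σ r mm pp w w' β β') {ω : ℝ} (hω : 0 < ω) :
    ∃ h > 0, ∀ i, ∀ x ∈ Icc 0 L, ∀ t ∈ Icc 0 T, ∀ t₁ ∈ Icc 0 T, ∀ t₂ ∈ Icc 0 T, ∀ t₃ ∈ Icc 0 T,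
      ∀ t₄ ∈ Icc 0 T, t₁ < t₂ → t₃ < t₄ → |t₁ - t| ≤ h → |t₂ - t| ≤ h → |t₃ - t| ≤ h →
      |t₄ - t| ≤ h →
      |dquot (fun t => r i t x) t₁ t₂ - dquot (fun t => r i t x) t₃ t₄| ≤ ω := by
  obtain ⟨K, hK, H⟩ := S.exists_osc
  have hL := S.hL
  obtain ⟨h, hh, H⟩ := H (ω / Real.exp (K * T)) (by positivity)
  refine ⟨h / 2, by positivity, fun i x hx t ht t₁ h1 t₂ h2 t₃ h3 t₄ h4 h12 h34 a1 a2 a3 a4 => ?_⟩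
  have hs : max 0 (t - h / 2) ∈ Icc 0 T := ⟨le_max_left _ _, max_le (ht.1.trans ht.2) (by linarith [ht.2])⟩
  have lo : ∀ u ∈ Icc 0 T, |u - t| ≤ h / 2 → max 0 (t - h / 2) ≤ u := fun u hu hut =>
    max_le hu.1 (by linarith [(abs_le.1 hut).1])
  have hi : ∀ u, |u - t| ≤ h / 2 → u ≤ max 0 (t - h / 2) + h := fun u hut => by
    linarith [(abs_le.1 hut).2, le_max_right 0 (t - h / 2)]
  refine (H i x hx _ hs t₁ t₂ t₃ t₄ (lo _ h1 a1) h12 h2.2 (hi _ a2) (lo _ h3 a3) h34 h4.2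
    (hi _ a4)).trans ?_
  have e1 : Real.exp (K * max 0 (t - h / 2)) ≤ Real.exp (K * T) :=
    Real.exp_le_exp.2 (mul_le_mul_of_nonneg_left hs.2 hK)
  have e2 : 1 - x / (2 * L) ≤ 1 := by
    have : 0 ≤ x / (2 * L) := div_nonneg hx.1 (by positivity)
    linarith
  have e3 : Real.exp (K * max 0 (t - h / 2)) * (1 - x / (2 * L)) ≤ Real.exp (K * T) :=
    (mul_le_of_le_one_right (Real.exp_pos _).le e2).trans e1
  refine (mul_le_mul_of_nonneg_left e3 (by positivity)).trans (le_of_eq ?_)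
  exact div_mul_cancel₀ _ (Real.exp_pos _).ne'

/-- A nondegenerate time interval of length `η ≤ T` inside `[0, T]` that contains `t`. -/
theorem window_mem {T t η : ℝ} (hT : 0 < T) (ht : t ∈ Icc 0 T) (hη : 0 < η) (hηT : η ≤ T) :
    t - η * (t / T) ∈ Icc 0 T ∧ t - η * (t / T) + η ∈ Icc 0 T ∧
      |t - η * (t / T) - t| ≤ η ∧ |t - η * (t / T) + η - t| ≤ η := by
  have h0 : 0 ≤ t / T := div_nonneg ht.1 hT.le
  have h1 : t / T ≤ 1 := (div_le_one hT).2 ht.2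
  have h2 : t / T * T = t := div_mul_cancel₀ _ hT.ne'
  have h3 : 0 ≤ η * (t / T) := by positivity
  have h4 : η * (t / T) ≤ η := mul_le_of_le_one_right hη.le h1
  have h5 : η * (t / T) ≤ T * (t / T) := mul_le_mul_of_nonneg_right hηT h0
  have h6 : η * (1 - t / T) ≤ T * (1 - t / T) := mul_le_mul_of_nonneg_right hηT (by linarith)
  refine ⟨⟨by linarith, by linarith [ht.2]⟩, ⟨by linarith, by linarith⟩, ?_, ?_⟩
  · rw [abs_le]; constructor <;> linarith
  · rw [abs_le]; constructor <;> linarith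

/-- The time derivative of the solution, with uniform differentiability. -/
theorem exists_q (S : CharSys T L C m0 σ r mm pp w w' β β') :
    ∃ q : Bool → ℝ → ℝ → ℝ, (∀ i, ∀ t ∈ Icc 0 T, ∀ x ∈ Icc 0 L, |q i t x| ≤ C) ∧
      ∀ γ > 0, ∃ h > 0, ∀ i, ∀ x ∈ Icc 0 L, ∀ t ∈ Icc 0 T, ∀ t₁ ∈ Icc 0 T, ∀ t₂ ∈ Icc 0 T,
        t₁ < t₂ → |t₁ - t| ≤ h → |t₂ - t| ≤ h →
        |r i t₂ x - r i t₁ x - (t₂ - t₁) * q i t x| ≤ γ * (t₂ - t₁) := by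
  have hT := S.hT
  let η : ℕ → ℝ := fun n => T * (1 / ((n : ℝ) + 1))
  have hη : ∀ n, 0 < η n ∧ η n ≤ T := fun n => by
    refine ⟨by positivity, mul_le_of_le_one_right hT.le ?_⟩
    rw [div_le_one (by positivity)]
    linarith [Nat.cast_nonneg (α := ℝ) n]
  have hη0 : Tendsto η atTop (𝓝 0) := by
    have := (tendsto_one_div_add_atTop_nhds_zero_nat (𝕜 := ℝ)).const_mul T
    simpa only [mul_zero] using this
  let u : Bool → ℝ → ℝ → ℕ → ℝ := fun i t x n =>
    dquot (fun t => r i t x) (t - η n * (t / T)) (t - η n * (t / T) + η n)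
  have hlim : ∀ i t x, ∃ q, t ∈ Icc 0 T → x ∈ Icc 0 L → Tendsto (u i t x) atTop (𝓝 q) := by
    intro i t x
    by_cases hmem : t ∈ Icc 0 T ∧ x ∈ Icc 0 L
    swap
    · exact ⟨0, fun a b => absurd ⟨a, b⟩ hmem⟩
    obtain ⟨ht, hx⟩ := hmem
    have hc : CauchySeq (u i t x) := by
      rw [Metric.cauchySeq_iff']
      intro ε hε
      obtain ⟨h, hh, H⟩ := S.osc_window (half_pos hε)
      obtain ⟨N, hN⟩ := eventually_atTop.1 (hη0.eventually (ge_mem_nhds hh))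
      refine ⟨N, fun n hn => ?_⟩
      obtain ⟨a1, a2, a3, a4⟩ := window_mem hT ht (hη n).1 (hη n).2
      obtain ⟨b1, b2, b3, b4⟩ := window_mem hT ht (hη N).1 (hη N).2
      rw [Real.dist_eq]
      refine (H i x hx t ht _ a1 _ a2 _ b1 _ b2 (by linarith [(hη n).1]) (by linarith [(hη N).1])
        (a3.trans (hN n hn)) (a4.trans (hN n hn)) (b3.trans (hN N le_rfl))
        (b4.trans (hN N le_rfl))).trans_lt (by linarith)
    obtain ⟨q, hq⟩ := cauchySeq_tendsto_of_complete hc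
    exact ⟨q, fun _ _ => hq⟩
  choose q hq using hlim
  refine ⟨q, fun i t ht x hx => ?_, fun γ hγ => ?_⟩
  · exact le_of_tendsto (hq i t x ht hx).abs
      (Eventually.of_forall fun n => S.dquot_bd i x (by linarith [(hη n).1]))
  · obtain ⟨h, hh, H⟩ := S.osc_window hγ
    refine ⟨h, hh, fun i x hx t ht t₁ h1 t₂ h2 h12 d1 d2 => ?_⟩
    have hp : 0 < t₂ - t₁ := by linarith
    have key : |dquot (fun t => r i t x) t₁ t₂ - q i t x| ≤ γ := by
      refine le_of_tendsto ((tendsto_const_nhds.sub (hq i t x ht hx)).abs) ?_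
      filter_upwards [hη0.eventually (ge_mem_nhds hh)] with n hn
      obtain ⟨a1, a2, a3, a4⟩ := window_mem hT ht (hη n).1 (hη n).2
      exact H i x hx t ht _ h1 _ h2 _ a1 _ a2 h12 (by linarith [(hη n).1]) d1 d2
        (a3.trans hn) (a4.trans hn)
    have e : r i t₂ x - r i t₁ x - (t₂ - t₁) * q i t x
        = (dquot (fun t => r i t x) t₁ t₂ - q i t x) * (t₂ - t₁) := by
      unfold dquot; field_simp
    rw [e, abs_mul, abs_of_pos hp]
    exact mul_le_mul_of_nonneg_right key hp.le

/-- The algebra which turns an expansion in time and along a characteristic into one in space, with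
derivative `p - m * q`. -/
theorem space_algebra {r2 r1 rb ξ θ p m q qx M γ C : ℝ} (hC : 0 ≤ C) (hγ : 0 ≤ γ)
    (hθ0 : 0 ≤ θ) (hθ : θ ≤ C * ξ) (hA : |r2 - rb - ξ * p| ≤ M * ξ) (hB : |θ - ξ * m| ≤ M * ξ)
    (hD : |r1 - rb - θ * qx| ≤ γ * θ) (hq : |qx - q| ≤ γ) (hQ : |q| ≤ C) :
    |r2 - r1 - ξ * (p - m * q)| ≤ (M * (1 + C) + 2 * γ * C) * ξ := by
  have e : r2 - r1 - ξ * (p - m * q) = (r2 - rb - ξ * p) - (r1 - rb - θ * qx) - θ * (qx - q)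
    - (θ - ξ * m) * q := by ring
  have b4 : |θ * (qx - q)| ≤ θ * γ := by
    rw [abs_mul, abs_of_nonneg hθ0]; exact mul_le_mul_of_nonneg_left hq hθ0
  have b5 : |(θ - ξ * m) * q| ≤ M * ξ * C := by
    rw [abs_mul]
    exact mul_le_mul hB hQ (abs_nonneg _) ((abs_nonneg _).trans hB)
  have b6 := mul_le_mul_of_nonneg_left hθ hγ
  rw [e]
  rw [abs_le] at *
  constructor <;> linarith [hA.1, hA.2, hD.1, hD.2, b4.1, b4.2, b5.1, b5.2]

/-- A Lipschitz solution with `C¹` data satisfying the first-order compatibility conditions is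
`C¹`. -/
theorem regularity (S : CharSys T L C m0 σ r mm pp w w' β β') :
    ∃ q : Bool → ℝ → ℝ → ℝ,
      (∀ i, ContinuousOn (Function.uncurry (q i)) (Icc 0 T ×ˢ Icc 0 L)) ∧
      (∀ i, ∀ t ∈ Icc 0 T, ∀ x ∈ Icc 0 L, HasDerivWithinAt (fun s => r i s x) (q i t x) (Icc 0 T) t) ∧
      (∀ i, ∀ t ∈ Icc 0 T, ∀ x ∈ Icc 0 L,
        HasDerivWithinAt (fun y => r i t y) (pp i t x - mm i t x * q i t x) (Icc 0 L) x) := by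
  obtain ⟨q, hqb, H⟩ := S.exists_q
  have hT := S.hT
  have hC := S.hC
  have hL := S.hL
  have hcont : ∀ i, ContinuousOn (Function.uncurry (q i)) (Icc 0 T ×ˢ Icc 0 L) := by
    intro i
    rw [Metric.continuousOn_iff]
    rintro ⟨t, x⟩ ⟨ht, hx⟩ ε hε
    obtain ⟨h, hh, H⟩ := H (ε / 8) (by positivity)
    set η := min (h / 2) T with hη
    have hη0 : 0 < η := by positivity
    refine ⟨min (h / 2) (ε * η / (8 * C)), by positivity, ?_⟩
    rintro ⟨t', x'⟩ ⟨ht', hx'⟩ hd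
    rw [Prod.dist_eq, max_lt_iff, Real.dist_eq, Real.dist_eq] at hd
    simp only at hd ht hx ht' hx'
    obtain ⟨a1, a2, a3, a4⟩ := window_mem hT ht hη0 (min_le_right _ _)
    set t₁ := t - η * (t / T)
    have hηh : η ≤ h / 2 := min_le_left _ _
    have hdt := hd.1.trans_le (min_le_left _ _)
    have hdx := hd.2.trans_le (min_le_right _ _)
    rw [lt_div_iff₀ (by positivity)] at hdx
    have tri : ∀ u, |u - t| ≤ η → |u - t'| ≤ h := fun u hu => by
      rw [abs_le] at hu ⊢; rw [abs_lt] at hdt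
      constructor <;> linarith [hu.1, hu.2, hdt.1, hdt.2]
    have c1 := H i x hx t ht t₁ a1 (t₁ + η) a2 (by linarith) (by linarith) (by linarith)
    have c2 := H i x' hx' t' ht' t₁ a1 (t₁ + η) a2 (by linarith) (tri _ a3) (tri _ a4)
    rw [add_sub_cancel_left] at c1 c2
    have c3 := S.r_lip i (t₁ + η) x (t₁ + η) x'
    have c4 := S.r_lip i t₁ x t₁ x'
    rw [sub_self, abs_zero, zero_add, abs_sub_comm x x'] at c3 c4
    rw [Real.dist_eq]
    simp only [Function.uncurry_apply_pair]
    have c5 : |η * (q i t' x' - q i t x)| < η * ε := by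
      rw [abs_le] at c1 c2 c3 c4
      rw [abs_lt]
      constructor <;> linarith [c1.1, c1.2, c2.1, c2.2, c3.1, c3.2, c4.1, c4.2]
    rw [abs_mul, abs_of_pos hη0] at c5
    exact lt_of_mul_lt_mul_left c5 hη0.le
  refine ⟨q, hcont, fun i t ht x hx => hasDerivWithinAt_of_forall fun γ hγ => ?_,
    fun i t ht x hx => ?_⟩
  · obtain ⟨h, hh, H⟩ := H γ hγ
    refine ⟨h, hh, fun y hy hyt => ?_⟩
    rcases lt_trichotomy y t with hlt | rfl | hlt
    · have := H i x hx t ht y hy t ht hlt hyt (by simpa using hh.le)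
      rw [abs_sub_comm, abs_sub_comm y t, abs_of_pos (sub_pos.2 hlt)]
      refine le_trans (le_of_eq ?_) this
      congr 1; ring
    · simp
    · have := H i x hx t ht t ht y hy hlt (by simpa using hh.le) hyt
      rwa [abs_of_pos (sub_pos.2 hlt)]
  · rcases ht.1.eq_or_lt with rfl | ht0
    · -- at `t = 0` the equation holds because `q(0, ·)` is the compatible initial derivative
      have hq0 : q i 0 x = q0 mm pp w' i x := by
        refine eq_of_forall_dist_le fun ε hε => ?_
        rw [Real.dist_eq]
        obtain ⟨h, hh, H⟩ := H (ε / 2) (by positivity)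
        obtain ⟨h', hh', H'⟩ := S.pair (half_pos hε)
        have hm : 0 < min (min h h') T := by positivity
        set s := min (min h h') T
        have l1 : s ≤ h := (min_le_left _ _).trans (min_le_left _ _)
        have l2 : s ≤ h' := (min_le_left _ _).trans (min_le_right _ _)
        have l3 : s ≤ T := min_le_right _ _
        have c1 := H i x hx 0 ht 0 ht s ⟨hm.le, l3⟩ hm (by simpa using hh.le)
          (by rwa [sub_zero, abs_of_pos hm])
        have c2 := H' i x hx 0 s le_rfl hm l2
        have c3 : |s * (q i 0 x - q0 mm pp w' i x)| ≤ s * ε := by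
          rw [abs_le] at c1 c2 ⊢
          constructor <;> linarith [c1.1, c1.2, c2.1, c2.2]
        rw [abs_mul, abs_of_pos hm] at c3
        exact le_of_mul_le_mul_left c3 hm
      rw [hq0, ← S.mm_mul_q0 i x, sub_sub_cancel]
      refine hasDerivWithinAt_of_forall fun γ hγ => ?_
      obtain ⟨h, hh, H⟩ := S.w_diff γ hγ
      refine ⟨h, hh, fun y hy hyx => ?_⟩
      rw [S.init i x hx, S.init i y hy]
      exact H i x hx x hx y hy (by simpa using hh.le) hyx
    · refine hasDerivWithinAt_of_forall fun γ hγ => ?_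
      set γ₁ := γ / (4 * C) with hγ₁
      have hγ₁0 : 0 < γ₁ := by positivity
      obtain ⟨h1, hh1, H1⟩ := H γ₁ hγ₁0
      have hc := hcont i (t, x) ⟨ht, hx⟩
      rw [Metric.continuousWithinAt_iff] at hc
      obtain ⟨h2, hh2, H2⟩ := hc γ₁ hγ₁0
      set M := γ / 2 / (1 + C) with hM
      have hM0 : 0 < M := by positivity
      refine ⟨min (min (h1 / C) (h2 / 2)) (min (t / C) (M / C / (C + 1))), by positivity, ?_⟩
      have key : ∀ x₁ ∈ Icc 0 L, ∀ x₂ ∈ Icc 0 L, x₁ < x₂ → (x₁ = x ∨ x₂ = x) →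
          x₂ - x₁ ≤ min (min (h1 / C) (h2 / 2)) (min (t / C) (M / C / (C + 1))) →
          |r i t x₂ - r i t x₁ - (x₂ - x₁) * (pp i t x - mm i t x * q i t x)| ≤ γ * (x₂ - x₁) := by
        intro x₁ hx₁ x₂ hx₂ h12 hxx hle
        have hξ : 0 < x₂ - x₁ := by linarith
        have l1 := hle.trans ((min_le_left _ _).trans (min_le_left _ _))
        have l2 := hle.trans ((min_le_left _ _).trans (min_le_right _ _))
        have l3 := hle.trans ((min_le_right _ _).trans (min_le_left _ _))
        have l4 := hle.trans ((min_le_right _ _).trans (min_le_right _ _))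
        rw [le_div_iff₀ hC] at l1 l3
        rw [le_div_iff₀ (by positivity), le_div_iff₀ hC] at l4
        have hnear : ∀ z ∈ Icc x₁ x₂, |z - x| ≤ x₂ - x₁ := fun z hz => by
          rw [abs_le]
          rcases hxx with rfl | rfl <;> constructor <;> linarith [hz.1, hz.2]
        obtain ⟨τ, hτx, hτ⟩ := S.exists_char i t hx₂
        have hs := S.sub_mem hτ hx₁.1 h12.le hx₂.2
        rw [hτx] at hs
        have hθ0 : 0 < t - τ x₁ := lt_of_lt_of_le (mul_pos S.hm0 hξ) hs.1
        have hτ0 : 0 ≤ τ x₁ := by linarith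
        have near : ∀ z ∈ Ioo x₁ x₂, C * (|τ z - t| + |z - x|) ≤ M := fun z hz => by
          have b1 := S.mono hτ hx₁.1 hz.1.le (hz.2.le.trans hx₂.2)
          have b2 := S.mono hτ (hx₁.1.trans hz.1.le) hz.2.le hx₂.2
          rw [hτx] at b2
          have b3 : |τ z - t| ≤ C * (x₂ - x₁) := by
            rw [abs_le]; constructor <;> linarith
          have b4 := hnear z ⟨hz.1.le, hz.2.le⟩
          refine (mul_le_mul_of_nonneg_left (add_le_add b3 b4) hC.le).trans ?_
          linarith
        have A := S.charInc (c := pp i t x) (M := M) hτ hx₁.1 h12.le hx₂.2 hτ0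
          (by rw [hτx]; exact ht.2) (fun z hz => (S.pp_lip i _ _ _ _).trans (near z hz))
        have B := S.timeInc (c := mm i t x) (M := M) hτ hx₁.1 h12.le hx₂.2
          (fun z hz => (S.mm_lip i _ _ _ _).trans (near z hz))
        rw [hτx] at A B
        have D := H1 i x₁ hx₁ t ht (τ x₁) ⟨hτ0, by linarith [ht.2]⟩ t ht (by linarith)
          (by rw [abs_sub_comm, abs_of_pos hθ0]; linarith) (by simpa using hh1.le)
        have hqq : |q i t x₁ - q i t x| ≤ γ₁ := by
          have := H2 (x := (t, x₁)) ⟨ht, hx₁⟩ (by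
            rw [Prod.dist_eq, dist_self, Real.dist_eq]
            refine max_lt hh2 ((hnear x₁ ⟨le_rfl, h12.le⟩).trans_lt ?_)
            linarith)
          rw [Real.dist_eq] at this
          exact this.le
        have fin := space_algebra hC.le hγ₁0.le hθ0.le hs.2 A B D hqq (hqb i t ht x hx)
        refine fin.trans (mul_le_mul_of_nonneg_right (le_of_eq ?_) hξ.le)
        rw [hM, hγ₁]
        field_simp
        ring
      intro y hy hyx
      rcases lt_trichotomy y x with hlt | rfl | hlt
      · rw [abs_of_neg (sub_neg.2 hlt), neg_sub] at hyx ⊢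
        have := key y hy x hx hlt (Or.inr rfl) hyx
        rw [abs_sub_comm] at this ⊢
        refine le_trans (le_of_eq ?_) this
        rw [abs_sub_comm]
        congr 1; ring
      · simp
      · rw [abs_of_pos (sub_pos.2 hlt)] at hyx ⊢
        exact key x hx y hy hlt (Or.inl rfl) hyx

end CharSys

/-! ### Uniform estimates for continuously differentiable functions -/

/-- A `C¹` function on a compact convex set is Lipschitz and uniformly differentiable there. -/
theorem unif_c1 {E : Type*} [NormedAddCommGroup E] [NormedSpace ℝ E] {s : Set E} (hs : IsCompact s)
    (hcv : Convex ℝ s) (hu : UniqueDiffOn ℝ s) {g : E → ℝ} (hg : ContDiffOn ℝ 1 g s) :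
    (∃ K > 0, (∀ z ∈ s, ‖fderivWithin ℝ g s z‖ ≤ K) ∧
      ∀ z ∈ s, ∀ z' ∈ s, |g z' - g z| ≤ K * ‖z' - z‖) ∧
    ∀ γ > 0, ∃ η > 0, ∀ z ∈ s, ∀ z₁ ∈ s, ∀ z₂ ∈ s, ‖z₁ - z‖ ≤ η → ‖z₂ - z‖ ≤ η →
      |g z₂ - g z₁ - fderivWithin ℝ g s z (z₂ - z₁)| ≤ γ * ‖z₂ - z₁‖ := by
  have hc : ContinuousOn (fderivWithin ℝ g s) s := hg.continuousOn_fderivWithin hu le_rfl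
  have hd : ∀ z ∈ s, HasFDerivWithinAt g (fderivWithin ℝ g s z) s z := fun z hz =>
    ((hg.differentiableOn one_ne_zero) z hz).hasFDerivWithinAt
  constructor
  · obtain ⟨K, hK⟩ := hs.exists_bound_of_continuousOn hc
    refine ⟨max K 1, lt_max_of_lt_right one_pos, fun z hz => (hK z hz).trans (le_max_left _ _),
      fun z hz z' hz' => ?_⟩
    exact hcv.norm_image_sub_le_of_norm_hasFDerivWithin_le hd
      (fun z hz => (hK z hz).trans (le_max_left _ _)) hz hz'
  · intro γ hγ
    have huc := hs.uniformContinuousOn_of_continuous hc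
    rw [Metric.uniformContinuousOn_iff] at huc
    obtain ⟨η, hη, H⟩ := huc γ hγ
    refine ⟨η / 2, by positivity, fun z hz z₁ hz₁ z₂ hz₂ h1 h2 => ?_⟩
    have hcv' : Convex ℝ (s ∩ Metric.closedBall z (η / 2)) := hcv.inter (convex_closedBall _ _)
    refine hcv'.norm_image_sub_le_of_norm_hasFDerivWithin_le'
      (f' := fderivWithin ℝ g s) (fun y hy => (hd y hy.1).mono inter_subset_left) (fun y hy => ?_)
      ⟨hz₁, by rwa [mem_closedBall_iff_norm]⟩ ⟨hz₂, by rwa [mem_closedBall_iff_norm]⟩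
    have hy2 := hy.2
    rw [Metric.mem_closedBall] at hy2
    have := H y hy.1 z hz (by linarith)
    rw [dist_eq_norm] at this
    exact this.le

/-- A `C¹` pair of functions on `[0, a]` is uniformly differentiable. -/
theorem unifDiff_of_contDiffOn {a : ℝ} (ha : 0 < a) {g : Bool → ℝ → ℝ}
    (hg : ∀ i, ContDiffOn ℝ 1 (g i) (Icc 0 a)) :
    UnifDiff a g fun i => derivWithin (g i) (Icc 0 a) := by
  intro γ hγ
  have H := fun i => (unif_c1 isCompact_Icc (convex_Icc 0 a) (uniqueDiffOn_Icc ha) (hg i)).2 γ hγ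
  choose h hh H using H
  refine ⟨min (h true) (h false), lt_min (hh _) (hh _), fun i s hs t₁ h1 t₂ h2 l1 l2 => ?_⟩
  have hi : min (h true) (h false) ≤ h i := by cases i <;> simp
  have := H i s hs t₁ h1 t₂ h2 (l1.trans hi) (l2.trans hi)
  rw [Real.norm_eq_abs] at this
  convert this using 3
  change (t₂ - t₁) * derivWithin (g i) (Icc 0 a) s = _
  rw [← fderivWithin_derivWithin]
  conv_rhs => rw [← mul_one (t₂ - t₁), ← smul_eq_mul (t₂ - t₁), map_smul, smul_eq_mul]

/-- The `C¹` three-point estimate on the square `[-δ, δ]²`, with explicit partial derivatives. -/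
theorem square_c1 {δ : ℝ} (hδ : 0 < δ) {g : Bool → ℝ → ℝ → ℝ}
    (hg : ∀ i, ContDiffOn ℝ 1 (Function.uncurry (g i)) (Icc (-δ) δ ×ˢ Icc (-δ) δ)) :
    ∃ K > 0, (∀ i a b, |a| ≤ δ → |b| ≤ δ → |g i a b| ≤ K) ∧
      (∀ i a b a' b', |a| ≤ δ → |b| ≤ δ → |a'| ≤ δ → |b'| ≤ δ →
        |g i a b - g i a' b'| ≤ K * (|a - a'| + |b - b'|)) ∧
      ∃ ga gb : Bool → ℝ → ℝ → ℝ,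
        (∀ i a b, |a| ≤ δ → |b| ≤ δ → |ga i a b| ≤ K ∧ |gb i a b| ≤ K) ∧
        ∀ γ > 0, ∃ η > 0, ∀ i a b a₁ b₁ a₂ b₂, |a| ≤ δ → |b| ≤ δ → |a₁| ≤ δ → |b₁| ≤ δ →
          |a₂| ≤ δ → |b₂| ≤ δ → |a₁ - a| ≤ η → |b₁ - b| ≤ η → |a₂ - a| ≤ η → |b₂ - b| ≤ η →
          |g i a₂ b₂ - g i a₁ b₁ - (ga i a b * (a₂ - a₁) + gb i a b * (b₂ - b₁))|
            ≤ γ * (|a₂ - a₁| + |b₂ - b₁|) := by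
  set s : Set (ℝ × ℝ) := Icc (-δ) δ ×ˢ Icc (-δ) δ with hs
  have hlt : -δ < δ := by linarith
  have hsc : IsCompact s := isCompact_Icc.prod isCompact_Icc
  have H := fun i => unif_c1 hsc ((convex_Icc _ _).prod (convex_Icc _ _))
    ((uniqueDiffOn_Icc hlt).prod (uniqueDiffOn_Icc hlt)) (hg i)
  choose H1 H2 using H
  choose K hK Kf KL using H1
  have H0 := fun i => hsc.exists_bound_of_continuousOn (hg i).continuousOn
  choose B HB using H0
  have mem : ∀ a b : ℝ, |a| ≤ δ → |b| ≤ δ → (a, b) ∈ s := fun a b ha hb => ⟨abs_le.1 ha, abs_le.1 hb⟩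
  have le1 : ∀ a b : ℝ, ‖((a, b) : ℝ × ℝ)‖ ≤ |a| + |b| := fun a b => by
    rw [Prod.norm_mk]
    exact max_le (le_add_of_nonneg_right (abs_nonneg _)) (le_add_of_nonneg_left (abs_nonneg _))
  set K0 := K true + K false + |B true| + |B false| with hK0
  have hp : 0 ≤ |B true| ∧ 0 ≤ |B false| := ⟨abs_nonneg _, abs_nonneg _⟩
  have kt := hK true
  have kf := hK false
  have kle : ∀ i, K i ≤ K0 := fun i => by cases i <;> simp only [hK0] <;> linarith [hp.1, hp.2]
  refine ⟨K0, by linarith [hp.1, hp.2], fun i a b ha hb => ?_, fun i a b a' b' ha hb ha' hb' => ?_,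
    fun i a b => fderivWithin ℝ (Function.uncurry (g i)) s (a, b) (1, 0),
    fun i a b => fderivWithin ℝ (Function.uncurry (g i)) s (a, b) (0, 1), fun i a b ha hb => ?_,
    fun γ hγ => ?_⟩
  · have := HB i (a, b) (mem a b ha hb)
    have h2 : |g i a b| ≤ B i := this
    cases i <;> simp only [hK0] <;>
      linarith [hp.1, hp.2, le_abs_self (B true), le_abs_self (B false)]
  · have := KL i (a', b') (mem _ _ ha' hb') (a, b) (mem _ _ ha hb)
    refine this.trans (mul_le_mul (kle i) (le1 _ _) (norm_nonneg _) ?_)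
    linarith [hp.1, hp.2]
  · have := Kf i (a, b) (mem a b ha hb)
    refine ⟨?_, ?_⟩
    · have h2 := (fderivWithin ℝ (Function.uncurry (g i)) s (a, b)).le_opNorm (1, 0)
      have h3 : ‖((1, 0) : ℝ × ℝ)‖ = 1 := by simp [Prod.norm_mk]
      rw [h3, mul_one] at h2
      exact h2.trans (this.trans (kle i))
    · have h2 := (fderivWithin ℝ (Function.uncurry (g i)) s (a, b)).le_opNorm (0, 1)
      have h3 : ‖((0, 1) : ℝ × ℝ)‖ = 1 := by simp [Prod.norm_mk]
      rw [h3, mul_one] at h2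
      exact h2.trans (this.trans (kle i))
  · have H := fun i => H2 i γ hγ
    choose h hh H using H
    refine ⟨min (h true) (h false), lt_min (hh _) (hh _),
      fun i a b a₁ b₁ a₂ b₂ ha hb ha1 hb1 ha2 hb2 l1 l2 l3 l4 => ?_⟩
    have hi : min (h true) (h false) ≤ h i := by cases i <;> simp
    have := H i (a, b) (mem _ _ ha hb) (a₁, b₁) (mem _ _ ha1 hb1) (a₂, b₂) (mem _ _ ha2 hb2)
      (by rw [Prod.mk_sub_mk, Prod.norm_mk]; exact (max_le l1 l2).trans hi)
      (by rw [Prod.mk_sub_mk, Prod.norm_mk]; exact (max_le l3 l4).trans hi)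
    refine le_trans (le_of_eq ?_) (this.trans (mul_le_mul_of_nonneg_left (le1 _ _) hγ.le))
    congr 2
    have e : ((a₂, b₂) - (a₁, b₁) : ℝ × ℝ) = (a₂ - a₁) • (1, 0) + (b₂ - b₁) • (0, 1) := by
      simp
    rw [e, map_add, map_smul, map_smul, smul_eq_mul, smul_eq_mul, mul_comm (a₂ - a₁),
      mul_comm (b₂ - b₁)]

theorem abs_deriv_le_of_lip {g : ℝ → ℝ} {g' M a x : ℝ} (ha : 0 < a) (hx : x ∈ Icc 0 a)
    (hd : HasDerivWithinAt g g' (Icc 0 a) x) (hl : ∀ y, |g y - g x| ≤ M * |y - x|) :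
    |g'| ≤ M := by
  have hne : (𝓝[Icc 0 a \ {x}] x).NeBot := by
    have := (uniqueDiffOn_Icc ha) x hx
    rwa [uniqueDiffWithinAt_iff_accPt, accPt_principal_iff_nhdsWithin] at this
  rw [hasDerivWithinAt_iff_tendsto_slope] at hd
  refine le_of_tendsto hd.abs ?_
  filter_upwards [self_mem_nhdsWithin] with y hy
  have hyx : 0 < |y - x| := abs_pos.2 (sub_ne_zero.2 hy.2)
  rw [slope_def_field, abs_div, div_le_iff₀ hyx]
  exact hl y

/-! ### Classical solutions of the diagonal system -/

/-- After division by the speed, the system takes `x` as the evolution variable; its coefficients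
are still `C¹`. -/
theorem mm_square {δ a0 : ℝ} (hδ : 0 < δ) (ha0 : 0 < a0) {lam f : Bool → ℝ → ℝ → ℝ}
    (hlam : ∀ i, ContDiffOn ℝ 1 (Function.uncurry (lam i)) (Icc (-δ) δ ×ˢ Icc (-δ) δ))
    (hf : ∀ i, ContDiffOn ℝ 1 (Function.uncurry (f i)) (Icc (-δ) δ ×ˢ Icc (-δ) δ))
    (hpos : ∀ i a b, |a| ≤ δ → |b| ≤ δ → a0 ≤ lam i a b) :
    (∀ i, ContDiffOn ℝ 1 (Function.uncurry fun a b => 1 / lam i a b)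
      (Icc (-δ) δ ×ˢ Icc (-δ) δ)) ∧
    (∀ i, ContDiffOn ℝ 1 (Function.uncurry fun a b => f i a b / lam i a b)
      (Icc (-δ) δ ×ˢ Icc (-δ) δ)) := by
  have h0 : ∀ i, ∀ z ∈ Icc (-δ) δ ×ˢ Icc (-δ) δ, Function.uncurry (lam i) z ≠ 0 := fun i z hz =>
    (ha0.trans_le (hpos i z.1 z.2 (abs_le.2 hz.1) (abs_le.2 hz.2))).ne'
  refine ⟨fun i => ?_, fun i => ?_⟩
  · exact contDiffOn_const.div (hlam i) (h0 i)
  · exact (hf i).div (hlam i) (h0 i)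

/-- The step estimate of a broad solution, rewritten with `x` as the evolution variable: a step of
length `d` in `x` takes the time `d / lam`; the free parameter `κ` is taken proportional to `d`. -/
theorem Broad.cons_space {T L M δ Cc a0 C : ℝ} {lam f : Bool → ℝ → ℝ → ℝ} {σ : Bool → ℝ}
    {w β : Bool → ℝ → ℝ} {r : Bool → ℝ → ℝ → ℝ} (B : Broad T L M δ Cc lam f σ w β r)
    (hCc : 0 < Cc) (ha0 : 0 < a0) (hC : 0 < C)
    (hge : ∀ i a b, |a| ≤ δ → |b| ≤ δ → a0 ≤ lam i a b)
    (hmm : ∀ i a b, |a| ≤ δ → |b| ≤ δ → 1 / lam i a b ≤ C) (i : Bool) {t x η : ℝ}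
    (ht : t ∈ Ico 0 T) (hx : x ∈ Ioo 0 L) (hη : 0 < η) : ∃ d0 > 0, ∀ d ∈ Ioo 0 d0,
    |r i (t + d * (1 / lam i (r i t x) (r (!i) t (L - x)))) (x + d) - r i t x
      - d * (f i (r i t x) (r (!i) t (L - x)) / lam i (r i t x) (r (!i) t (L - x)))| ≤ η * d := by
  set l := lam i (r i t x) (r (!i) t (L - x)) with hl
  have hl0 : 0 < l := ha0.trans_le (hge i _ _ (B.bdδ ..) (B.bdδ ..))
  have hm : 1 / l ≤ C := hmm i _ _ (B.bdδ ..) (B.bdδ ..)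
  have hm0 : 0 < 1 / l := by positivity
  have hη' : 0 < η / (2 * Cc) := by positivity
  set η' := η / (2 * Cc) with hη'd
  have ht2 := sub_pos.2 ht.2
  have hx1 := hx.1
  have hx2 := sub_pos.2 hx.2
  set Q := Cc * (C ^ 2 + C ^ 3 / η') with hQ
  have hQ0 : 0 < Q := by positivity
  refine ⟨min (min ((T - t) / C) (x / (Cc * C))) (min (L - x) (η / (2 * Q))), by positivity,
    fun d hd => ?_⟩
  have hd0 := hd.1
  have l1 := hd.2.le.trans ((min_le_left _ _).trans (min_le_left _ _))
  have l2 := hd.2.trans_le ((min_le_left _ _).trans (min_le_right _ _))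
  have l3 := hd.2.le.trans ((min_le_right _ _).trans (min_le_left _ _))
  have l4 := hd.2.le.trans ((min_le_right _ _).trans (min_le_right _ _))
  rw [le_div_iff₀ hC] at l1
  rw [lt_div_iff₀ (by positivity)] at l2
  rw [le_div_iff₀ (by positivity)] at l4
  have hD : d * (1 / l) ≤ d * C := mul_le_mul_of_nonneg_left hm hd0.le
  have hD0 : 0 < d * (1 / l) := by positivity
  have e1 : l * (d * (1 / l)) = d := by field_simp
  have hCD : Cc * (d * (1 / l)) ≤ Cc * (d * C) := mul_le_mul_of_nonneg_left hD hCc.le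
  have H := B.cons i t x (d * (1 / l)) (η' * d) ht.1 hD0 (by positivity) (by linarith)
    (by linarith) (by rw [← hl, e1]; linarith)
  rw [← hl, e1] at H
  have e2 : d * (1 / l) * f i (r i t x) (r (!i) t (L - x))
      = d * (f i (r i t x) (r (!i) t (L - x)) / l) := by ring
  rw [e2] at H
  refine H.trans ?_
  have p2 : (d * (1 / l)) ^ 2 ≤ (d * C) ^ 2 := pow_le_pow_left₀ hD0.le hD 2
  have p3 : (d * (1 / l)) ^ 3 ≤ (d * C) ^ 3 := pow_le_pow_left₀ hD0.le hD 3
  have p4 : (d * (1 / l)) ^ 3 / (η' * d) ≤ (d * C) ^ 3 / (η' * d) := by gcongr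
  have p5 : η' * d + (d * (1 / l)) ^ 2 + (d * (1 / l)) ^ 3 / (η' * d)
      ≤ η' * d + (d * C) ^ 2 + (d * C) ^ 3 / (η' * d) := by linarith
  refine (mul_le_mul_of_nonneg_left p5 hCc.le).trans ?_
  have e3 : Cc * (η' * d + (d * C) ^ 2 + (d * C) ^ 3 / (η' * d)) = η / 2 * d + (d * Q) * d := by
    rw [hQ, hη'd]; field_simp; ring
  rw [e3]
  have : d * Q * d ≤ η / 2 * d := mul_le_mul_of_nonneg_right (by linarith) hd0.le
  linarith

theorem abs_comp_lip {K M L : ℝ} (hK : 0 ≤ K) {r : Bool → ℝ → ℝ → ℝ}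
    (lip : ∀ i t t' x x', |r i t x - r i t' x'| ≤ M * (|t - t'| + |x - x'|)) (i : Bool)
    (t x t' x' : ℝ) : K * (|r i t x - r i t' x'| + |r (!i) t (L - x) - r (!i) t' (L - x')|)
      ≤ K * (2 * M) * (|t - t'| + |x - x'|) := by
  have h1 := lip i t t' x x'
  have h2 := lip (!i) t t' (L - x) (L - x')
  rw [show L - x - (L - x') = -(x - x') by ring, abs_neg] at h2
  rw [mul_assoc]
  exact mul_le_mul_of_nonneg_left (by linarith) hK

/-- A broad solution with `C¹` coefficients, whose data satisfy the first-order compatibility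
conditions, is a `CharSys`. -/
theorem exists_charSys {T L M δ Cc a0 E : ℝ} (hδ : 0 < δ) (hL : 0 < L) (hT : 0 < T) (hCc : 0 < Cc)
    (ha0 : 0 < a0) {lam f : Bool → ℝ → ℝ → ℝ} {σ : Bool → ℝ}
    (hlam : ∀ i, ContDiffOn ℝ 1 (Function.uncurry (lam i)) (Icc (-δ) δ ×ˢ Icc (-δ) δ))
    (hf : ∀ i, ContDiffOn ℝ 1 (Function.uncurry (f i)) (Icc (-δ) δ ×ˢ Icc (-δ) δ))
    (hpos : ∀ i a b, |a| ≤ δ → |b| ≤ δ → a0 ≤ lam i a b) (hσ : ∀ i, |σ i| ≤ 1)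
    {w w' β β' : Bool → ℝ → ℝ} {r : Bool → ℝ → ℝ → ℝ} (B : Broad T L M δ Cc lam f σ w β r)
    (hw : UnifDiff L w w') (hβ : UnifDiff T β β') (hw' : ∀ i, ∀ x ∈ Icc 0 L, |w' i x| ≤ E)
    (hcomp : ∀ i, f i (w i 0) (w (!i) L) - lam i (w i 0) (w (!i) L) * w' i 0
      = β' i 0 + σ i * (f (!i) (w (!i) L) (w i 0) - lam (!i) (w (!i) L) (w i 0) * w' (!i) L)) :
    ∃ C m0, CharSys T L C m0 σ r (fun i t x => 1 / lam i (r i t x) (r (!i) t (L - x)))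
      (fun i t x => f i (r i t x) (r (!i) t (L - x)) / lam i (r i t x) (r (!i) t (L - x)))
      w w' β β' := by
  obtain ⟨hm1, hp1⟩ := mm_square hδ ha0 hlam hf hpos
  obtain ⟨Kl, hKl, bl, -, -⟩ := square_c1 hδ hlam
  obtain ⟨Km, hKm, bm, lm, ma, mb, mab, um⟩ := square_c1 hδ hm1
  obtain ⟨Kp, hKp, bp, lp, pa, pb, pab, up⟩ := square_c1 hδ hp1
  have hM := B.hM
  have b := B.bdδ
  set C := Km + Kp + M + Km * (2 * M) + Kp * (2 * M) + |E| with hC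
  have q1 : 0 ≤ Km * (2 * M) := by positivity
  have q2 : 0 ≤ Kp * (2 * M) := by positivity
  have q3 : 0 ≤ |E| := abs_nonneg E
  have hn : ∀ t t' x x' : ℝ, 0 ≤ |t - t'| + |x - x'| := fun _ _ _ _ => by positivity
  have hlp : ∀ i t x, 0 < lam i (r i t x) (r (!i) t (L - x)) := fun i t x =>
    ha0.trans_le (hpos i _ _ (b ..) (b ..))
  have hCpos : 0 < C := by linarith
  refine ⟨C, 1 / Kl, hT, hL, hCpos, by positivity, fun i t x => ?_, fun i t x => ?_,
    fun i t x t' x' => ?_, fun i t x => ?_, fun i t x t' x' => ?_, fun i t x t' x' => ?_,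
    fun i t ht x hx η hη => ?_, B.init, B.bdry, hσ, hw, hβ, fun i x hx => ?_, fun i => ?_,
    fun γ hγ => ?_⟩
  · exact one_div_le_one_div_of_le (hlp i t x) ((le_abs_self _).trans (bl i _ _ (b ..) (b ..)))
  · have := (le_abs_self _).trans (bm i _ _ (b i t x) (b (!i) t (L - x)))
    linarith
  · have h1 := (lm i _ _ _ _ (b i t x) (b (!i) t (L - x)) (b i t' x') (b (!i) t' (L - x'))).trans
      (abs_comp_lip hKm.le B.lip i t x t' x')
    exact h1.trans (mul_le_mul_of_nonneg_right (by linarith) (hn ..))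
  · have h1 := bp i _ _ (b i t x) (b (!i) t (L - x))
    linarith
  · have h1 := (lp i _ _ _ _ (b i t x) (b (!i) t (L - x)) (b i t' x') (b (!i) t' (L - x'))).trans
      (abs_comp_lip hKp.le B.lip i t x t' x')
    exact h1.trans (mul_le_mul_of_nonneg_right (by linarith) (hn ..))
  · exact (B.lip i t t' x x').trans (mul_le_mul_of_nonneg_right (by linarith) (hn ..))
  · exact B.cons_space hCc ha0 hKm hpos
      (fun i a b ha hb => (le_abs_self _).trans (bm i a b ha hb)) i ht hx hη
  · have := hw' i x hx
    linarith [le_abs_self E]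
  · have i1 : ∀ i, r i 0 0 = w i 0 := fun i => B.init i 0 ⟨le_rfl, hL.le⟩
    have i2 : ∀ i, r i 0 L = w i L := fun i => B.init i L ⟨hL.le, le_rfl⟩
    have l1 := hlp i 0 0
    have l2 := hlp (!i) 0 L
    simp only [sub_zero, sub_self, Bool.not_not, i1, i2] at l1 l2 ⊢
    have e : ∀ F W l : ℝ, 0 < l → (F / l - W) / (1 / l) = F - l * W := fun F W l hl => by
      field_simp
    rw [e _ _ _ l1, e _ _ _ l2]
    exact hcomp i
  · obtain ⟨η1, hη1, H1⟩ := um (γ / (2 * M + 1)) (by positivity)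
    obtain ⟨η2, hη2, H2⟩ := up (γ / (2 * M + 1)) (by positivity)
    refine ⟨min η1 η2 / (M + 1), by positivity, fun i s x =>
      ⟨ma i (r i s x) (r (!i) s (L - x)), mb i (r i s x) (r (!i) s (L - x)),
       pa i (r i s x) (r (!i) s (L - x)), pb i (r i s x) (r (!i) s (L - x)), ?_, ?_, ?_, ?_,
       fun t₁ t₂ h1 h2 => ?_⟩⟩
    · linarith [(mab i _ _ (b i s x) (b (!i) s (L - x))).1]
    · linarith [(mab i _ _ (b i s x) (b (!i) s (L - x))).2]
    · linarith [(pab i _ _ (b i s x) (b (!i) s (L - x))).1]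
    · linarith [(pab i _ _ (b i s x) (b (!i) s (L - x))).2]
    · have near : ∀ j t y, |t - s| ≤ min η1 η2 / (M + 1) → |r j t y - r j s y| ≤ min η1 η2 := by
        intro j t y h
        have := B.lip j t s y y
        rw [sub_self, abs_zero, add_zero] at this
        rw [le_div_iff₀ (by positivity)] at h
        linarith [abs_nonneg (t - s)]
      have fin : γ / (2 * M + 1) * (|r i t₂ x - r i t₁ x|
          + |r (!i) t₂ (L - x) - r (!i) t₁ (L - x)|) ≤ γ * |t₂ - t₁| := by
        have a1 := B.lip i t₂ t₁ x x
        have a2 := B.lip (!i) t₂ t₁ (L - x) (L - x)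
        rw [sub_self, abs_zero, add_zero] at a1 a2
        have a3 : |r i t₂ x - r i t₁ x| + |r (!i) t₂ (L - x) - r (!i) t₁ (L - x)|
            ≤ (2 * M + 1) * |t₂ - t₁| := by linarith [abs_nonneg (t₂ - t₁)]
        have a4 : 0 < γ / (2 * M + 1) := by positivity
        refine (mul_le_mul_of_nonneg_left a3 a4.le).trans (le_of_eq ?_)
        field_simp
      have n1 := fun j y => near j t₁ y h1
      have n2 := fun j y => near j t₂ y h2
      constructor
      · exact (H1 i _ _ _ _ _ _ (b ..) (b ..) (b ..) (b ..) (b ..) (b ..)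
          ((n1 ..).trans (min_le_left _ _)) ((n1 ..).trans (min_le_left _ _))
          ((n2 ..).trans (min_le_left _ _)) ((n2 ..).trans (min_le_left _ _))).trans fin
      · exact (H2 i _ _ _ _ _ _ (b ..) (b ..) (b ..) (b ..) (b ..) (b ..)
          ((n1 ..).trans (min_le_right _ _)) ((n1 ..).trans (min_le_right _ _))
          ((n2 ..).trans (min_le_right _ _)) ((n2 ..).trans (min_le_right _ _))).trans fin

/-- By compactness, positive speeds have a positive lower bound. -/
theorem exists_lower {δ : ℝ} (hδ : 0 < δ) {lam : Bool → ℝ → ℝ → ℝ}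
    (hlam : ∀ i, ContDiffOn ℝ 1 (Function.uncurry (lam i)) (Icc (-δ) δ ×ˢ Icc (-δ) δ))
    (hpos : ∀ i a b, |a| ≤ δ → |b| ≤ δ → 0 < lam i a b) :
    ∃ a0 > 0, ∀ i a b, |a| ≤ δ → |b| ≤ δ → a0 ≤ lam i a b := by
  have hsc : IsCompact (Icc (-δ) δ ×ˢ Icc (-δ) δ) := isCompact_Icc.prod isCompact_Icc
  have h0 : ((0, 0) : ℝ × ℝ) ∈ Icc (-δ) δ ×ˢ Icc (-δ) δ :=
    ⟨⟨by linarith, hδ.le⟩, ⟨by linarith, hδ.le⟩⟩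
  have H := fun i => hsc.exists_isMinOn ⟨_, h0⟩ (hlam i).continuousOn
  choose z hz H using H
  have hp : ∀ i, 0 < Function.uncurry (lam i) (z i) := fun i =>
    hpos i _ _ (abs_le.2 (hz i).1) (abs_le.2 (hz i).2)
  refine ⟨min (Function.uncurry (lam true) (z true)) (Function.uncurry (lam false) (z false)),
    lt_min (hp _) (hp _), fun i a b ha hb => ?_⟩
  have := H i (show (a, b) ∈ _ from ⟨abs_le.1 ha, abs_le.1 hb⟩)
  cases i
  · exact (min_le_right _ _).trans this
  · exact (min_le_left _ _).trans this

/-- Classical solutions of the diagonal system on `[0, T] × [0, L]` for small `C¹` data, with a bound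
on the solution and its first derivatives that is linear in the size `E` of the data. -/
theorem exists_diag {T L δ : ℝ} (hδ : 0 < δ) (hL : 0 < L) (hT : 0 < T)
    {lam f : Bool → ℝ → ℝ → ℝ} {σ : Bool → ℝ}
    (hlam : ∀ i, ContDiffOn ℝ 1 (Function.uncurry (lam i)) (Icc (-δ) δ ×ˢ Icc (-δ) δ))
    (hf : ∀ i, ContDiffOn ℝ 1 (Function.uncurry (f i)) (Icc (-δ) δ ×ˢ Icc (-δ) δ))
    (hpos : ∀ i a b, |a| ≤ δ → |b| ≤ δ → 0 < lam i a b) (hf0 : ∀ i, f i 0 0 = 0)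
    (hσ : ∀ i, |σ i| ≤ 1) :
    ∃ C > 0, ∃ ε > 0, ∀ E w w' β β', DiagData L E σ w β → E ≤ ε → UnifDiff L w w' →
      UnifDiff T β β' → (∀ i, ∀ x ∈ Icc 0 L, |w' i x| ≤ E) →
      (∀ i, f i (w i 0) (w (!i) L) - lam i (w i 0) (w (!i) L) * w' i 0
        = β' i 0 + σ i * (f (!i) (w (!i) L) (w i 0)
          - lam (!i) (w (!i) L) (w i 0) * w' (!i) L)) →
      ∃ r q p : Bool → ℝ → ℝ → ℝ, (∀ i t x, |r i t x| ≤ C * E ∧ |r i t x| ≤ δ) ∧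
        (∀ i, Continuous (Function.uncurry (r i))) ∧
        (∀ i, ContinuousOn (Function.uncurry (q i)) (Icc 0 T ×ˢ Icc 0 L)) ∧
        (∀ i, ContinuousOn (Function.uncurry (p i)) (Icc 0 T ×ˢ Icc 0 L)) ∧
        (∀ i, ∀ t ∈ Icc 0 T, ∀ x ∈ Icc 0 L,
          |q i t x| ≤ C * E ∧ |p i t x| ≤ C * E ∧
          HasDerivWithinAt (fun s => r i s x) (q i t x) (Icc 0 T) t ∧
          HasDerivWithinAt (fun y => r i t y) (p i t x) (Icc 0 L) x ∧
          q i t x + lam i (r i t x) (r (!i) t (L - x)) * p i t x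
            = f i (r i t x) (r (!i) t (L - x))) ∧
        (∀ i, ∀ x ∈ Icc 0 L, r i 0 x = w i x) ∧
        ∀ i, ∀ t ∈ Icc 0 T, r i t 0 = β i t + σ i * r (!i) t L := by
  obtain ⟨a0, ha0, hge⟩ := exists_lower hδ hlam hpos
  obtain ⟨Kl, hKl, bl, ll, -⟩ := square_c1 hδ hlam
  obtain ⟨Kf, hKf, -, lf, -⟩ := square_c1 hδ hf
  have hn : ∀ a b a' b' : ℝ, 0 ≤ |a - a'| + |b - b'| := fun _ _ _ _ => by positivity
  have S : DiagSys δ a0 Kl (Kl + Kf) lam f σ :=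
    { hδ := hδ
      ha0 := ha0
      hLc := by positivity
      lam_ge := hge
      lam_le := fun i a b ha hb => (le_abs_self _).trans (bl i a b ha hb)
      lam_lip := fun i a b a' b' h1 h2 h3 h4 => (ll i a b a' b' h1 h2 h3 h4).trans
        (mul_le_mul_of_nonneg_right (by linarith) (hn ..))
      f_lip := fun i a b a' b' h1 h2 h3 h4 => (lf i a b a' b' h1 h2 h3 h4).trans
        (mul_le_mul_of_nonneg_right (by linarith) (hn ..))
      f_zero := hf0
      hσ := hσ }
  obtain ⟨C, hC, ε, hε, H⟩ := exists_broad S hL hT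
  refine ⟨C, hC, ε, hε, fun E w w' β β' D hE hw hβ hw' hcomp => ?_⟩
  obtain ⟨r, Cc, hCc, B⟩ := H E w β D hE
  obtain ⟨C', m0, CS⟩ := exists_charSys hδ hL hT hCc ha0 hlam hf hge hσ B hw hβ hw' hcomp
  obtain ⟨q, qc, qt, qx⟩ := CS.regularity
  have lip0 : ∀ i t x s y, |r i t x - r i s y| ≤ C * E * (|t - s| + |x - y|) :=
    fun i t x s y => B.lip i t s x y
  have rc : ∀ i, Continuous (Function.uncurry (r i)) := fun i => by
    have hM := B.hM
    refine LipschitzWith.continuous (K := ⟨C * E * 2, by positivity⟩)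
      (LipschitzWith.of_dist_le_mul fun z z' => ?_)
    rw [Real.dist_eq, dist_eq_norm, Prod.norm_def]
    refine (lip0 i z.1 z.2 z'.1 z'.2).trans ?_
    change _ ≤ C * E * 2 * _
    rw [mul_assoc (C * E)]
    refine mul_le_mul_of_nonneg_left ?_ hM
    have h1 := le_max_left ‖(z - z').1‖ ‖(z - z').2‖
    have h2 := le_max_right ‖(z - z').1‖ ‖(z - z').2‖
    simp only [Prod.fst_sub, Prod.snd_sub, Real.norm_eq_abs] at h1 h2 ⊢
    linarith
  have hmc : ∀ g : Bool → ℝ → ℝ → ℝ,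
      (∀ i, ContDiffOn ℝ 1 (Function.uncurry (g i)) (Icc (-δ) δ ×ˢ Icc (-δ) δ)) → ∀ i,
      Continuous (Function.uncurry fun t x => g i (r i t x) (r (!i) t (L - x))) := fun g hg i => by
    have h1 : Continuous fun z : ℝ × ℝ => (r i z.1 z.2, r (!i) z.1 (L - z.2)) :=
      (rc i).prodMk ((rc (!i)).comp (by fun_prop : Continuous fun z : ℝ × ℝ => (z.1, L - z.2)))
    exact (hg i).continuousOn.comp_continuous h1 fun z =>
      ⟨abs_le.1 (B.bdδ ..), abs_le.1 (B.bdδ ..)⟩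
  obtain ⟨hm1, hp1⟩ := mm_square hδ ha0 hlam hf hge
  refine ⟨r, q, fun i t x => f i (r i t x) (r (!i) t (L - x)) / lam i (r i t x) (r (!i) t (L - x))
      - 1 / lam i (r i t x) (r (!i) t (L - x)) * q i t x, fun i t x => ⟨B.bd i t x, B.bdδ i t x⟩,
    rc, qc, fun i => ?_, fun i t ht x hx => ⟨?_, ?_, qt i t ht x hx, qx i t ht x hx, ?_⟩, B.init,
    B.bdry⟩
  · exact (hmc (fun i a b => f i a b / lam i a b) hp1 i).continuousOn.sub
      ((hmc (fun i a b => 1 / lam i a b) hm1 i).continuousOn.mul (qc i))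
  · refine abs_deriv_le_of_lip hT ht (qt i t ht x hx) fun y => ?_
    have := lip0 i y x t x
    rwa [sub_self, abs_zero, add_zero] at this
  · refine abs_deriv_le_of_lip hL hx (qx i t ht x hx) fun y => ?_
    have := lip0 i t y t x
    rwa [sub_self, abs_zero, zero_add] at this
  · have hl := ha0.trans_le (hge i _ _ (B.bdδ i t x) (B.bdδ (!i) t (L - x)))
    field_simp
    ring

/-! ### Maximum principle for linear diagonal systems -/

/-- Continuous partial derivatives on a closed rectangle give a `C¹` function there. -/
theorem contDiffOn_rect {T L : ℝ} {h ht hx : ℝ → ℝ → ℝ}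
    (ct : ContinuousOn (Function.uncurry ht) (Icc 0 T ×ˢ Icc 0 L))
    (cx : ContinuousOn (Function.uncurry hx) (Icc 0 T ×ˢ Icc 0 L))
    (dt : ∀ t ∈ Icc 0 T, ∀ x ∈ Icc 0 L, HasDerivWithinAt (fun s => h s x) (ht t x) (Icc 0 T) t)
    (dx : ∀ t ∈ Icc 0 T, ∀ x ∈ Icc 0 L, HasDerivWithinAt (fun y => h t y) (hx t x) (Icc 0 L) x) :
    ContDiffOn ℝ 1 (Function.uncurry h) (Icc 0 T ×ˢ Icc 0 L) := by
  set R : Set (ℝ × ℝ) := Icc 0 T ×ˢ Icc 0 L with hR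
  set D : ℝ × ℝ → ℝ × ℝ →L[ℝ] ℝ := fun z =>
    Function.uncurry ht z • ContinuousLinearMap.fst ℝ ℝ ℝ
      + Function.uncurry hx z • ContinuousLinearMap.snd ℝ ℝ ℝ with hD
  have hDc : ContinuousOn D R := (ct.smul continuousOn_const).add (cx.smul continuousOn_const)
  have hDd : ∀ z ∈ R, HasFDerivWithinAt (Function.uncurry h) (D z) R z := by
    rintro ⟨t, x⟩ ⟨htm, hxm⟩
    rw [hasFDerivWithinAt_iff_isLittleO, Asymptotics.isLittleO_iff]
    intro γ hγ
    have c1 := ct (t, x) ⟨htm, hxm⟩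
    rw [Metric.continuousWithinAt_iff] at c1
    obtain ⟨η, hη, c1⟩ := c1 (γ / 2) (by positivity)
    have c2 := dx t htm x hxm
    rw [hasDerivWithinAt_iff_isLittleO, Asymptotics.isLittleO_iff] at c2
    have c2 := c2 (half_pos hγ)
    have c3 : Tendsto (fun z : ℝ × ℝ => z.2) (𝓝[R] (t, x)) (𝓝[Icc 0 L] x) :=
      (continuous_snd.continuousWithinAt (s := R) (x := (t, x))).tendsto_nhdsWithin
        fun z hz => hz.2
    have c4 := c3.eventually c2
    have c5 : ∀ᶠ z in 𝓝[R] (t, x), dist z (t, x) < η :=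
      (Metric.eventually_nhds_iff.2 ⟨η, hη, fun y hy => hy⟩ : ∀ᶠ z in 𝓝 (t, x), dist z (t, x) < η).filter_mono
        nhdsWithin_le_nhds
    filter_upwards [c4, c5, self_mem_nhdsWithin] with z h4 h5 hz
    obtain ⟨s, y⟩ := z
    simp only [Real.norm_eq_abs, smul_eq_mul] at h4
    have hs : s ∈ Icc 0 T := hz.1
    have hy : y ∈ Icc 0 L := hz.2
    rw [dist_eq_norm, Prod.mk_sub_mk, Prod.norm_mk, Real.norm_eq_abs, Real.norm_eq_abs] at h5
    have n1 := (le_max_left _ _).trans_lt h5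
    have n2 := (le_max_right _ _).trans_lt h5
    have mv : |(h s y - s * ht t x) - (h t y - t * ht t x)| ≤ γ / 2 * |s - t| := by
      have hcv : Convex ℝ (Icc 0 T ∩ Metric.closedBall t |s - t|) :=
        (convex_Icc 0 T).inter (convex_closedBall _ _)
      refine hcv.norm_image_sub_le_of_norm_hasDerivWithin_le
        (f := fun u => h u y - u * ht t x) (f' := fun u => ht u y - 1 * ht t x)
        (fun u hu => ?_) (fun u hu => ?_) ⟨htm, by simp⟩ ⟨hs, by simp [Real.dist_eq]⟩
      · exact ((dt u hu.1 y hy).mono inter_subset_left).sub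
          ((hasDerivWithinAt_id u _).mul_const _)
      · have hu2 := hu.2
        rw [Metric.mem_closedBall, Real.dist_eq] at hu2
        have := c1 (x := (u, y)) ⟨hu.1, hy⟩ (by
          rw [dist_eq_norm, Prod.mk_sub_mk, Prod.norm_mk, Real.norm_eq_abs, Real.norm_eq_abs]
          exact max_lt (hu2.trans_lt n1) n2)
        rw [one_mul]
        rw [dist_eq_norm] at this
        exact this.le
    have e : Function.uncurry h (s, y) - Function.uncurry h (t, x) - D (t, x) ((s, y) - (t, x))
        = ((h s y - s * ht t x) - (h t y - t * ht t x))
          + (h t y - h t x - (y - x) * hx t x) := by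
      simp [hD, Function.uncurry]
      ring
    rw [e, Prod.mk_sub_mk, Prod.norm_mk, Real.norm_eq_abs, Real.norm_eq_abs, Real.norm_eq_abs]
    have m1 := le_max_left |s - t| |y - x|
    have m2 := le_max_right |s - t| |y - x|
    have m3 := mul_le_mul_of_nonneg_left m1 (half_pos hγ).le
    have m4 := mul_le_mul_of_nonneg_left m2 (half_pos hγ).le
    refine (abs_add_le _ _).trans ?_
    linarith
  rw [← zero_add (1 : WithTop ℕ∞), contDiffOn_succ_iff_hasFDerivWithinAt (by simp)]
  intro z hz
  refine ⟨R, by rw [insert_eq_of_mem hz]; exact self_mem_nhdsWithin, by simp, D, hDd, ?_⟩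
  exact contDiffOn_zero.2 hDc

/-- The one-sided partial derivatives of a `C¹` function on a rectangle exist and are continuous. -/
theorem partials_of_contDiffOn {T L : ℝ} (hT : 0 < T) (hL : 0 < L) {h : ℝ → ℝ → ℝ}
    (hh : ContDiffOn ℝ 1 (Function.uncurry h) (Icc 0 T ×ˢ Icc 0 L)) :
    ∃ ht hx : ℝ → ℝ → ℝ, ContinuousOn (Function.uncurry ht) (Icc 0 T ×ˢ Icc 0 L) ∧
      ContinuousOn (Function.uncurry hx) (Icc 0 T ×ˢ Icc 0 L) ∧
      (∀ t ∈ Icc 0 T, ∀ x ∈ Icc 0 L, HasDerivWithinAt (fun s => h s x) (ht t x) (Icc 0 T) t) ∧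
      (∀ t ∈ Icc 0 T, ∀ x ∈ Icc 0 L, HasDerivWithinAt (fun y => h t y) (hx t x) (Icc 0 L) x) := by
  set R : Set (ℝ × ℝ) := Icc 0 T ×ˢ Icc 0 L with hR
  have hu : UniqueDiffOn ℝ R := (uniqueDiffOn_Icc hT).prod (uniqueDiffOn_Icc hL)
  have hc := hh.continuousOn_fderivWithin hu le_rfl
  have hd : ∀ z ∈ R, HasFDerivWithinAt (Function.uncurry h)
      (fderivWithin ℝ (Function.uncurry h) R z) R z := fun z hz =>
    (hh.differentiableOn one_ne_zero z hz).hasFDerivWithinAt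
  refine ⟨fun t x => fderivWithin ℝ (Function.uncurry h) R (t, x) (1, 0),
    fun t x => fderivWithin ℝ (Function.uncurry h) R (t, x) (0, 1),
    hc.clm_apply continuousOn_const, hc.clm_apply continuousOn_const, fun t ht x hx => ?_,
    fun t ht x hx => ?_⟩
  · exact (hd (t, x) ⟨ht, hx⟩).comp_hasDerivWithinAt t (f := fun s => (s, x))
      ((hasDerivWithinAt_id t _).prodMk (hasDerivWithinAt_const t _ x)) fun s hs => ⟨hs, hx⟩
  · exact (hd (t, x) ⟨ht, hx⟩).comp_hasDerivWithinAt x (f := fun y => (t, y))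
      ((hasDerivWithinAt_const x _ t).prodMk (hasDerivWithinAt_id x _)) fun y hy => ⟨ht, hy⟩

theorem deriv_nonneg_of_max {g : ℝ → ℝ} {g' a x : ℝ} (hx : x ∈ Icc 0 a) (hx0 : 0 < x)
    (hd : HasDerivWithinAt g g' (Icc 0 a) x) (hm : ∀ y ∈ Icc 0 a, g y ≤ g x) : 0 ≤ g' := by
  have hd := hd.mono (Icc_subset_Icc_right hx.2 : Icc 0 x ⊆ Icc 0 a)
  have hne : (𝓝[Icc 0 x \ {x}] x).NeBot := by
    have := (uniqueDiffOn_Icc hx0) x ⟨hx0.le, le_rfl⟩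
    rwa [uniqueDiffWithinAt_iff_accPt, accPt_principal_iff_nhdsWithin] at this
  rw [hasDerivWithinAt_iff_tendsto_slope] at hd
  refine ge_of_tendsto hd ?_
  filter_upwards [self_mem_nhdsWithin] with y hy
  rw [slope_def_field]
  exact div_nonneg_of_nonpos (sub_nonpos.2 (hm y ⟨hy.1.1, hy.1.2.trans hx.2⟩))
    (sub_nonpos.2 hy.1.2)

/-- At a positive maximum of the weighted energy, the equation contradicts the first-order
conditions when `K` is large. -/
theorem max_algebra {Λ K0 K l z z' q p L : ℝ} (hK0 : 0 ≤ K0) (hl : l ≤ Λ)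
    (hK : K = Λ + 3 * K0 + K0 * Real.exp L + 1) (hq : |q + l * p| ≤ K0 * (|z| + |z'|))
    (hz' : z' ^ 2 ≤ Real.exp L * z ^ 2) (hz : 0 < z ^ 2) :
    -K * z ^ 2 + 2 * z * q + l * (z ^ 2 + 2 * z * p) < 0 := by
  have h1 : z * (q + l * p) ≤ |z| * (K0 * (|z| + |z'|)) :=
    (le_abs_self _).trans (by rw [abs_mul]; exact mul_le_mul_of_nonneg_left hq (abs_nonneg _))
  have h2 : |z| * |z'| ≤ (z ^ 2 + z' ^ 2) / 2 := by
    nlinarith [sq_nonneg (|z| - |z'|), sq_abs z, sq_abs z']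
  have h3 := mul_le_mul_of_nonneg_left h2 hK0
  have h4 : |z| * (K0 * (|z| + |z'|)) = K0 * z ^ 2 + K0 * (|z| * |z'|) := by
    rw [← sq_abs z]; ring
  have h5 := mul_le_mul_of_nonneg_left hz' hK0
  have h6 := mul_le_mul_of_nonneg_right hl hz.le
  subst hK
  linarith

/-- Weighted maximum principle for the linear diagonal system: with homogeneous initial data and a
non-expansive boundary coupling, `exp (x - K t) * z²` has no positive maximum for large `K`. -/
theorem max_principle {T L Λ K0 : ℝ} (hT : 0 < T) (hL : 0 < L) (hK0 : 0 ≤ K0)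
    {z q p lam : Bool → ℝ → ℝ → ℝ}
    (zc : ∀ i, ContinuousOn (Function.uncurry (z i)) (Icc 0 T ×ˢ Icc 0 L))
    (dt : ∀ i, ∀ t ∈ Icc 0 T, ∀ x ∈ Icc 0 L,
      HasDerivWithinAt (fun s => z i s x) (q i t x) (Icc 0 T) t)
    (dx : ∀ i, ∀ t ∈ Icc 0 T, ∀ x ∈ Icc 0 L,
      HasDerivWithinAt (fun y => z i t y) (p i t x) (Icc 0 L) x)
    (hlam : ∀ i, ∀ t ∈ Icc 0 T, ∀ x ∈ Icc 0 L, 0 ≤ lam i t x ∧ lam i t x ≤ Λ)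
    (pde : ∀ i, ∀ t ∈ Icc 0 T, ∀ x ∈ Icc 0 L,
      |q i t x + lam i t x * p i t x| ≤ K0 * (|z i t x| + |z (!i) t (L - x)|))
    (init : ∀ i, ∀ x ∈ Icc 0 L, z i 0 x = 0)
    (bdry : ∀ i, ∀ t ∈ Icc 0 T, |z i t 0| ≤ |z (!i) t L|) :
    ∀ i, ∀ t ∈ Icc 0 T, ∀ x ∈ Icc 0 L, z i t x = 0 := by
  obtain ⟨K, hK⟩ : ∃ K, K = Λ + 3 * K0 + K0 * Real.exp L + 1 := ⟨_, rfl⟩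
  set g : Bool → ℝ × ℝ → ℝ := fun i y => Real.exp (y.2 - K * y.1) * z i y.1 y.2 ^ 2 with hg
  have hsc : IsCompact (Icc 0 T ×ˢ Icc 0 L) := isCompact_Icc.prod isCompact_Icc
  have gc : ∀ i, ContinuousOn (g i) (Icc 0 T ×ˢ Icc 0 L) := fun i =>
    (Continuous.continuousOn (by fun_prop)).mul ((zc i).pow 2)
  have hmax := fun i => hsc.exists_isMaxOn ⟨(0, 0), ⟨le_rfl, hT.le⟩, ⟨le_rfl, hL.le⟩⟩ (gc i)
  choose P hP hmax using hmax
  obtain ⟨i, hi⟩ : ∃ i, ∀ j, ∀ y ∈ Icc 0 T ×ˢ Icc 0 L, g j y ≤ g i (P i) := by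
    rcases le_total (g true (P true)) (g false (P false)) with h | h
    · refine ⟨false, fun j y hy => ?_⟩
      cases j
      · exact hmax false hy
      · exact (hmax true hy).trans h
    · refine ⟨true, fun j y hy => ?_⟩
      cases j
      · exact (hmax false hy).trans h
      · exact hmax true hy
  obtain ⟨⟨t, x⟩, hPe⟩ : ∃ y, P i = y := ⟨_, rfl⟩
  have hm := hP i
  rw [hPe] at hi hm
  obtain ⟨ht, hx⟩ : t ∈ Icc 0 T ∧ x ∈ Icc 0 L := hm
  have hW : ¬ 0 < z i t x ^ 2 := by
    intro hz
    have ht0 : 0 < t := by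
      rcases ht.1.eq_or_lt with rfl | h
      · rw [init i x hx] at hz; norm_num at hz
      · exact h
    have hx0 : 0 < x := by
      rcases hx.1.eq_or_lt with rfl | h
      · exfalso
        have h1 := hi (!i) (t, L) ⟨ht, hL.le, le_rfl⟩
        have h2 : z i t 0 ^ 2 ≤ z (!i) t L ^ 2 := sq_le_sq.2 (bdry i t ht)
        have h3 : 1 < Real.exp L := Real.one_lt_exp_iff.2 hL
        have h4 : Real.exp (L - K * t) = Real.exp L * Real.exp (0 - K * t) := by
          rw [← Real.exp_add]; ring_nf
        simp only [hg] at h1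
        rw [h4] at h1
        have h5 : 0 < Real.exp (0 - K * t) := Real.exp_pos _
        have h6 : Real.exp L * z (!i) t L ^ 2 ≤ z i t 0 ^ 2 := by
          refine le_of_mul_le_mul_left ?_ h5
          linarith
        nlinarith
      · exact h
    have hz' : z (!i) t (L - x) ^ 2 ≤ Real.exp L * z i t x ^ 2 := by
      have h1 := hi (!i) (t, L - x) ⟨ht, by linarith [hx.2], by linarith⟩
      simp only [hg] at h1
      have h4 : Real.exp (x - K * t) = Real.exp (2 * x - L) * Real.exp (L - x - K * t) := by
        rw [← Real.exp_add]; ring_nf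
      rw [h4] at h1
      have h5 : 0 < Real.exp (L - x - K * t) := Real.exp_pos _
      have h6 : z (!i) t (L - x) ^ 2 ≤ Real.exp (2 * x - L) * z i t x ^ 2 := by
        refine le_of_mul_le_mul_left ?_ h5
        linarith
      refine h6.trans (mul_le_mul_of_nonneg_right (Real.exp_le_exp.2 ?_) hz.le)
      linarith [hx.2]
    have e0 : 0 < Real.exp (x - K * t) := Real.exp_pos _
    have d1 : HasDerivWithinAt (fun s => Real.exp (x - K * s) * z i s x ^ 2)
        (Real.exp (x - K * t) * (-K * z i t x ^ 2 + 2 * z i t x * q i t x)) (Icc 0 T) t := by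
      have a1 : HasDerivWithinAt (fun s => Real.exp (x - K * s))
          (Real.exp (x - K * t) * -(K * 1)) (Icc 0 T) t :=
        ((((hasDerivAt_id t).const_mul K).const_sub x).exp).hasDerivWithinAt
      refine (a1.mul ((dt i t ht x hx).pow 2)).congr_deriv ?_
      norm_num; ring
    have d2 : HasDerivWithinAt (fun y => Real.exp (y - K * t) * z i t y ^ 2)
        (Real.exp (x - K * t) * (z i t x ^ 2 + 2 * z i t x * p i t x)) (Icc 0 L) x := by
      have a1 : HasDerivWithinAt (fun y => Real.exp (y - K * t))
          (Real.exp (x - K * t) * 1) (Icc 0 L) x :=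
        (((hasDerivAt_id x).sub_const (K * t)).exp).hasDerivWithinAt
      refine (a1.mul ((dx i t ht x hx).pow 2)).congr_deriv ?_
      norm_num; ring
    have n1 := deriv_nonneg_of_max ht ht0 d1 fun s hs => hi i (s, x) ⟨hs, hx⟩
    have n2 := deriv_nonneg_of_max hx hx0 d2 fun y hy => hi i (t, y) ⟨ht, hy⟩
    have n1 := (mul_nonneg_iff_of_pos_left e0).1 n1
    have n2 := (mul_nonneg_iff_of_pos_left e0).1 n2
    obtain ⟨l1, l2⟩ := hlam i t ht x hx
    have := max_algebra hK0 l2 hK (pde i t ht x hx) hz' hz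
    have n3 := mul_nonneg l1 n2
    linarith
  intro j s hs y hy
  have h1 := hi j (s, y) ⟨hs, hy⟩
  have h2 : z i t x ^ 2 = 0 := le_antisymm (not_lt.1 hW) (sq_nonneg _)
  simp only [hg, h2, mul_zero] at h1
  have h3 : z j s y ^ 2 ≤ 0 := by
    have := Real.exp_pos (y - K * s)
    by_contra h
    exact absurd (mul_pos this (not_le.1 h)) (not_lt.2 h1)
  exact pow_eq_zero_iff (two_ne_zero) |>.1 (le_antisymm h3 (sq_nonneg _))

/-! ### The Riemann invariant of the density and the norms -/

theorem contDiffOn_one_of_hasDerivAt {U : Set ℝ} (hU : IsOpen U) {g g' : ℝ → ℝ}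
    (hd : ∀ x ∈ U, HasDerivAt g (g' x) x) (hc : ContinuousOn g' U) : ContDiffOn ℝ 1 g U := by
  rw [← zero_add (1 : WithTop ℕ∞), contDiffOn_succ_iff_deriv_of_isOpen hU]
  refine ⟨fun x hx => (hd x hx).differentiableAt.differentiableWithinAt, by simp, ?_⟩
  exact contDiffOn_zero.2 (hc.congr fun x hx => (hd x hx).deriv)

/-- The function `G` with `G' = c(ρ)/ρ` and `G ρ_bar = 0`, which turns `(ρ, v)` into the Riemann
invariants `v ± G ρ`, and its local inverse `S`. -/
structure Invariant (c : ℝ → ℝ) (ρ_bar δ0 : ℝ) (G S : ℝ → ℝ) : Prop where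
  hρ : 0 < ρ_bar
  hδ0 : 0 < δ0
  cpos : ∀ r : ℝ, 0 < r → 0 < c r
  c_diff : ContDiffOn ℝ 1 c (Ioi 0)
  G_deriv : ∀ r : ℝ, 0 < r → HasDerivAt G (c r / r) r
  G_bar : G ρ_bar = 0
  G_mono : StrictMonoOn G (Ioi 0)
  G_diff : ContDiffOn ℝ 1 G (Ioi 0)
  S_pos : ∀ y, |y| < δ0 → 0 < S y
  G_S : ∀ y, |y| < δ0 → G (S y) = y
  S_deriv : ∀ y, |y| < δ0 → HasDerivAt S (S y / c (S y)) y
  S_diff : ContDiffOn ℝ 1 S (Ioo (-δ0) δ0)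

theorem Invariant.S_G {c : ℝ → ℝ} {ρ_bar δ0 : ℝ} {G S : ℝ → ℝ} (I : Invariant c ρ_bar δ0 G S)
    {r : ℝ} (hr : 0 < r) (h : |G r| < δ0) : S (G r) = r :=
  I.G_mono.injOn (I.S_pos _ h) hr (I.G_S _ h)

theorem Invariant.S_zero {c : ℝ → ℝ} {ρ_bar δ0 : ℝ} {G S : ℝ → ℝ} (I : Invariant c ρ_bar δ0 G S) :
    S 0 = ρ_bar := by
  have := I.S_G I.hρ (by rw [I.G_bar, abs_zero]; exact I.hδ0)
  rwa [I.G_bar] at this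

/-- `G` is the integral of `c s / s` from `ρ_bar`, and `S` is its local inverse. -/
theorem exists_invariant {c : ℝ → ℝ} (hc : ContDiffOn ℝ 2 c (Ioi 0))
    (hcpos : ∀ r : ℝ, 0 < r → 0 < c r) {ρ_bar : ℝ} (hρ : 0 < ρ_bar) :
    ∃ δ0 G S, Invariant c ρ_bar δ0 G S := by
  have hc1 : ContDiffOn ℝ 1 c (Ioi 0) := hc.of_le (by norm_num)
  have hcc : ContinuousOn (fun s => c s / s) (Ioi 0) :=
    hc.continuousOn.div continuousOn_id fun s hs => (mem_Ioi.1 hs).ne'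
  set G : ℝ → ℝ := fun r => ∫ s in ρ_bar..r, c s / s with hG
  have hGd : ∀ r : ℝ, 0 < r → HasDerivAt G (c r / r) r := by
    intro r hr
    refine intervalIntegral.integral_hasDerivAt_right ?_ ?_ ?_
    · refine (hcc.mono fun s hs => ?_).intervalIntegrable
      exact (lt_min hρ hr).trans_le hs.1
    · exact hcc.stronglyMeasurableAtFilter isOpen_Ioi r hr
    · exact hcc.continuousAt (Ioi_mem_nhds hr)
  have hG1 : ContDiffOn ℝ 1 G (Ioi 0) := contDiffOn_one_of_hasDerivAt isOpen_Ioi hGd hcc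
  have hGb : G ρ_bar = 0 := by simp [hG]
  have hGm : StrictMonoOn G (Ioi 0) := by
    refine strictMonoOn_of_deriv_pos (convex_Ioi 0) hG1.continuousOn fun r hr => ?_
    rw [interior_Ioi] at hr
    rw [(hGd r hr).deriv]
    exact div_pos (hcpos r hr) hr
  have hst : HasStrictDerivAt G (c ρ_bar / ρ_bar) ρ_bar :=
    (hG1.contDiffAt (Ioi_mem_nhds hρ)).hasStrictDerivAt' (hGd _ hρ) one_ne_zero
  have hne : c ρ_bar / ρ_bar ≠ 0 := (div_pos (hcpos _ hρ) hρ).ne'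
  set e := (hst.hasStrictFDerivAt_equiv hne).toOpenPartialHomeomorph G with he
  have hec : (e : ℝ → ℝ) = G := HasStrictFDerivAt.toOpenPartialHomeomorph_coe _
  have hsrc : ρ_bar ∈ e.source := HasStrictFDerivAt.mem_toOpenPartialHomeomorph_source _
  have hV : IsOpen (e.target ∩ e.symm ⁻¹' Ioi 0) := e.isOpen_inter_preimage_symm isOpen_Ioi
  have h0 : (0 : ℝ) ∈ e.target ∩ e.symm ⁻¹' Ioi 0 := by
    have h1 : e ρ_bar = 0 := by rw [hec, hGb]
    refine ⟨h1 ▸ e.map_source hsrc, ?_⟩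
    have h2 : e.symm 0 = ρ_bar := by rw [← h1, e.left_inv hsrc]
    rw [mem_preimage, h2]
    exact hρ
  obtain ⟨δ0, hδ0, hb⟩ := Metric.isOpen_iff.1 hV 0 h0
  have hb' : ∀ y, |y| < δ0 → y ∈ e.target ∧ 0 < e.symm y := fun y hy =>
    hb (by rwa [Metric.mem_ball, Real.dist_eq, sub_zero])
  have hGS : ∀ y, |y| < δ0 → G (e.symm y) = y := fun y hy => by
    rw [← hec]; exact e.right_inv (hb' y hy).1
  have hSd : ∀ y, |y| < δ0 → HasDerivAt e.symm (e.symm y / c (e.symm y)) y := fun y hy => by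
    obtain ⟨h1, h2⟩ := hb' y hy
    have h3 := e.hasDerivAt_symm h1 (div_pos (hcpos _ h2) h2).ne' (by rw [hec]; exact hGd _ h2)
    rwa [inv_div] at h3
  refine ⟨δ0, G, e.symm, hρ, hδ0, hcpos, hc1, hGd, hGb, hGm, hG1, fun y hy => (hb' y hy).2, hGS,
    hSd, contDiffOn_one_of_hasDerivAt isOpen_Ioo (fun y hy => hSd y (abs_lt.2 hy)) ?_⟩
  have hSc : ContinuousOn e.symm (Ioo (-δ0) δ0) := fun y hy =>
    (hSd y (abs_lt.2 hy)).continuousAt.continuousWithinAt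
  refine hSc.div (hc.continuousOn.comp hSc fun y hy => (hb' y (abs_lt.2 hy)).2) fun y hy => ?_
  exact (hcpos _ (hb' y (abs_lt.2 hy)).2).ne'

/-- The supremum defining `c1NormOn` is not a junk value: the family is bounded by compactness, so
the value and the derivative at each point are at most the norm. -/
theorem le_c1NormOn {a b : ℝ} (ha : 0 < a) {h : ℝ → ℝ} (hh : ContDiffOn ℝ 1 h (Icc 0 a)) {x : ℝ}
    (hx : x ∈ Icc 0 a) :
    |h x - b| ≤ c1NormOn (fun y => h y - b) (Icc 0 a) ∧
    |derivWithin h (Icc 0 a) x| ≤ c1NormOn (fun y => h y - b) (Icc 0 a) := by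
  have hd : ContinuousOn (derivWithin h (Icc 0 a)) (Icc 0 a) :=
    hh.continuousOn_derivWithin (uniqueDiffOn_Icc ha) le_rfl
  have hc : ContinuousOn (fun x => max |h x - b| |derivWithin h (Icc 0 a) x|) (Icc 0 a) :=
    (hh.continuousOn.sub continuousOn_const).abs.sup hd.abs
  have hb : BddAbove (range fun x : Icc 0 a => max |h x - b| |derivWithin h (Icc 0 a) x|) := by
    obtain ⟨B, hB⟩ := isCompact_Icc.exists_bound_of_continuousOn hc
    refine ⟨B, ?_⟩
    rintro _ ⟨y, rfl⟩
    exact (le_abs_self _).trans (hB y y.2)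
  have := le_ciSup hb ⟨x, hx⟩
  unfold c1NormOn
  simp only [derivWithin_sub_const]
  exact ⟨(le_max_left _ _).trans this, (le_max_right _ _).trans this⟩

theorem c1NormOn₂_le {T L B b : ℝ} (hT : 0 < T) (hL : 0 < L) {h ht hx : ℝ → ℝ → ℝ}
    (dt : ∀ t ∈ Icc 0 T, ∀ x ∈ Icc 0 L, HasDerivWithinAt (fun s => h s x) (ht t x) (Icc 0 T) t)
    (dx : ∀ t ∈ Icc 0 T, ∀ x ∈ Icc 0 L, HasDerivWithinAt (fun y => h t y) (hx t x) (Icc 0 L) x)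
    (b0 : ∀ t ∈ Icc 0 T, ∀ x ∈ Icc 0 L, |h t x - b| ≤ B)
    (bt : ∀ t ∈ Icc 0 T, ∀ x ∈ Icc 0 L, |ht t x| ≤ B)
    (bx : ∀ t ∈ Icc 0 T, ∀ x ∈ Icc 0 L, |hx t x| ≤ B) :
    c1NormOn₂ (fun t x => h t x - b) (Icc 0 T) (Icc 0 L) ≤ B := by
  have : Nonempty (Icc 0 T ×ˢ Icc 0 L : Set (ℝ × ℝ)) :=
    ⟨⟨(0, 0), ⟨le_rfl, hT.le⟩, ⟨le_rfl, hL.le⟩⟩⟩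
  refine ciSup_le fun z => ?_
  obtain ⟨⟨t, x⟩, htm, hxm⟩ := z
  simp only at htm hxm
  simp only [derivWithin_sub_const]
  rw [(dt t htm x hxm).derivWithin (uniqueDiffOn_Icc hT t htm),
    (dx t htm x hxm).derivWithin (uniqueDiffOn_Icc hL x hxm)]
  exact max_le (b0 t htm x hxm) (max_le (bt t htm x hxm) (bx t htm x hxm))

/-! ### The Riemann invariants of a classical solution -/

/-- The sign of the Riemann invariant `v ± G ρ` carried by the index `i`. -/
def sg (i : Bool) : ℝ := if i then 1 else -1

/-- The reflection `x ↦ L - x` for the index `false`, the identity for `true`: it makes both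
families of characteristics travel to the right. -/
def rf (L : ℝ) (i : Bool) (x : ℝ) : ℝ := if i then x else L - x

@[simp] theorem sg_true : sg true = 1 := rfl
@[simp] theorem sg_false : sg false = -1 := rfl
@[simp] theorem rf_true (L x : ℝ) : rf L true x = x := rfl
@[simp] theorem rf_false (L x : ℝ) : rf L false x = L - x := rfl

theorem sg_mul_self (i : Bool) : sg i * sg i = 1 := by cases i <;> simp

theorem sg_not (i : Bool) : sg (!i) = -sg i := by cases i <;> simp

theorem rf_not (L : ℝ) (i : Bool) (x : ℝ) : rf L (!i) (L - x) = rf L i x := by cases i <;> simp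

theorem rf_mem {L x : ℝ} (hx : x ∈ Icc 0 L) (i : Bool) : rf L i x ∈ Icc 0 L := by
  obtain ⟨h1, h2⟩ := hx
  cases i
  · exact ⟨by simpa using h2, by simpa using h1⟩
  · exact ⟨h1, h2⟩

theorem rf_deriv {L x g' : ℝ} {g : ℝ → ℝ} (i : Bool)
    (hg : HasDerivWithinAt g g' (Icc 0 L) (rf L i x)) :
    HasDerivWithinAt (fun y => g (rf L i y)) (sg i * g') (Icc 0 L) x := by
  cases i
  · have h1 : HasDerivWithinAt (fun y => L - y) (-1) (Icc 0 L) x :=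
      (hasDerivWithinAt_id x _).const_sub L
    have := HasDerivWithinAt.comp x (h₂ := g) hg h1 (fun y hy => rf_mem hy false)
    rwa [mul_comm] at this
  · simpa using hg

theorem rf_continuous (L : ℝ) (i : Bool) : Continuous fun z : ℝ × ℝ => (z.1, rf L i z.2) := by
  cases i
  · simp only [rf_false]; fun_prop
  · simp only [rf_true]; fun_prop

/-- The partial derivatives of a classical solution, with the two equations. -/
structure Partials (c : ℝ → ℝ) (F : ℝ → ℝ → ℝ) (T L : ℝ) (ρ v ρt ρx vt vx : ℝ → ℝ → ℝ) : Prop where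
  hρt : ∀ t ∈ Icc 0 T, ∀ x ∈ Icc 0 L, HasDerivWithinAt (fun s => ρ s x) (ρt t x) (Icc 0 T) t
  hρx : ∀ t ∈ Icc 0 T, ∀ x ∈ Icc 0 L, HasDerivWithinAt (fun y => ρ t y) (ρx t x) (Icc 0 L) x
  hvt : ∀ t ∈ Icc 0 T, ∀ x ∈ Icc 0 L, HasDerivWithinAt (fun s => v s x) (vt t x) (Icc 0 T) t
  hvx : ∀ t ∈ Icc 0 T, ∀ x ∈ Icc 0 L, HasDerivWithinAt (fun y => v t y) (vx t x) (Icc 0 L) x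
  cρ : ContinuousOn (Function.uncurry ρ) (Icc 0 T ×ˢ Icc 0 L)
  cv : ContinuousOn (Function.uncurry v) (Icc 0 T ×ˢ Icc 0 L)
  cρx : ContinuousOn (Function.uncurry ρx) (Icc 0 T ×ˢ Icc 0 L)
  cvx : ContinuousOn (Function.uncurry vx) (Icc 0 T ×ˢ Icc 0 L)
  pos : ∀ t ∈ Icc 0 T, ∀ x ∈ Icc 0 L, 0 < ρ t x
  eq1 : ∀ t ∈ Icc 0 T, ∀ x ∈ Icc 0 L, ρt t x + v t x * ρx t x + ρ t x * vx t x = 0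
  eq2 : ∀ t ∈ Icc 0 T, ∀ x ∈ Icc 0 L,
    vt t x + (c (ρ t x)) ^ 2 / ρ t x * ρx t x + v t x * vx t x = -F (ρ t x) (v t x)

theorem exists_partials {c : ℝ → ℝ} {F : ℝ → ℝ → ℝ} {T L : ℝ} (hT : 0 < T) (hL : 0 < L)
    {ρ₀ v₀ u₀ uL : ℝ → ℝ} {ρ v : ℝ → ℝ → ℝ}
    (h : IsClassicalSolutionDV c F T L ρ₀ v₀ u₀ uL ρ v) :
    ∃ ρt ρx vt vx, Partials c F T L ρ v ρt ρx vt vx := by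
  obtain ⟨h1, h2, h3, h4, h5, -, -⟩ := h
  obtain ⟨ρt, ρx, -, a2, a3, a4⟩ := partials_of_contDiffOn hT hL h1
  obtain ⟨vt, vx, -, b2, b3, b4⟩ := partials_of_contDiffOn hT hL h2
  have uT := uniqueDiffOn_Icc hT
  have uL := uniqueDiffOn_Icc hL
  refine ⟨ρt, ρx, vt, vx, a3, a4, b3, b4, h1.continuousOn, h2.continuousOn, a2, b2, h3,
    fun t ht x hx => ?_, fun t ht x hx => ?_⟩
  · have := h4 t ht x hx
    rwa [(a3 t ht x hx).derivWithin (uT t ht), (a4 t ht x hx).derivWithin (uL x hx),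
      (b4 t ht x hx).derivWithin (uL x hx)] at this
  · have := h5 t ht x hx
    rwa [(b3 t ht x hx).derivWithin (uT t ht), (a4 t ht x hx).derivWithin (uL x hx),
      (b4 t ht x hx).derivWithin (uL x hx)] at this

/-- The density-velocity system in the characteristic combinations, with `s` the sign of the
characteristic family. -/
theorem riemann_algebra {ρ v c s ρt ρx vt vx F : ℝ} (hρ : 0 < ρ) (hs : s * s = 1)
    (e1 : ρt + v * ρx + ρ * vx = 0) (e2 : vt + c ^ 2 / ρ * ρx + v * vx = -F) :
    (vt + s * (c / ρ * ρt)) + (v + s * c) * (vx + s * (c / ρ * ρx)) = -F := by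
  have h : (vt + s * (c / ρ * ρt)) + (v + s * c) * (vx + s * (c / ρ * ρx))
      = (vt + (s * s) * (c ^ 2 / ρ * ρx) + v * vx) + s * (c / ρ) * (ρt + v * ρx + ρ * vx) := by
    field_simp
    ring
  rw [h, e1, hs, mul_zero, add_zero, one_mul, e2]

/-- The difference of two solutions satisfies a linear system, with right-hand side bounded by the
difference of the Riemann invariants. -/
theorem diff_algebra {s V H dF dc dρ vc rx' KF Kc κ P W : ℝ} (hs : |s| = 1) (hκ : 0 < κ)
    (hKF : 0 ≤ KF) (hKc : 0 ≤ Kc) (hP : |rx'| ≤ P) (hF : |dF| ≤ KF * (|dρ| + |V|))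
    (hc : |dc| ≤ Kc * |dρ|) (hρ : κ * |dρ| ≤ |H|) (hW : W = |V + H| + |V - H|)
    (he : vc = -dF - (V + s * dc) * rx') :
    |vc| ≤ (KF * (1 / κ + 1) + (1 + Kc / κ) * P) * W := by
  have hW0 : 0 ≤ W := by rw [hW]; positivity
  have hP0 : 0 ≤ P := (abs_nonneg _).trans hP
  have hV : |V| ≤ W := by
    have : |2 * V| ≤ |V + H| + |V - H| := by
      refine (le_of_eq ?_).trans (abs_add_le _ _); congr 1; ring
    rw [abs_mul, abs_two] at this
    linarith [abs_nonneg V]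
  have hH : |H| ≤ W := by
    have : |2 * H| ≤ |V + H| + |V - H| := by
      refine (le_of_eq ?_).trans (abs_sub _ _); congr 1; ring
    rw [abs_mul, abs_two] at this
    linarith [abs_nonneg H]
  have hd : |dρ| ≤ 1 / κ * W := by
    rw [one_div, ← div_eq_inv_mul, le_div_iff₀ hκ]; linarith
  have h1 : |dF| ≤ KF * (1 / κ + 1) * W := by
    refine hF.trans ?_
    rw [mul_assoc]
    exact mul_le_mul_of_nonneg_left (by linarith) hKF
  have h2 : |dc| ≤ Kc / κ * W := by
    refine hc.trans ((mul_le_mul_of_nonneg_left hd hKc).trans (le_of_eq ?_))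
    ring
  have h3 : |(V + s * dc) * rx'| ≤ (1 + Kc / κ) * W * P := by
    rw [abs_mul]
    refine mul_le_mul ?_ hP (abs_nonneg _) (by positivity)
    refine (abs_add_le _ _).trans ?_
    rw [abs_mul, hs, one_mul]
    linarith
  rw [he]
  refine (abs_sub _ _).trans ?_
  rw [abs_neg]
  linarith

/-! ### Uniqueness -/

/-- Two positive continuous functions on a compact set take values in a common interval `[m, M]` with
`m > 0`. -/
theorem exists_range {R : Set (ℝ × ℝ)} (hR : IsCompact R) (hne : R.Nonempty) {g g' : ℝ × ℝ → ℝ}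
    (hg : ContinuousOn g R) (hg' : ContinuousOn g' R) (h0 : ∀ z ∈ R, 0 < g z)
    (h0' : ∀ z ∈ R, 0 < g' z) :
    ∃ m M : ℝ, 0 < m ∧ m < M ∧ ∀ z ∈ R, g z ∈ Icc m M ∧ g' z ∈ Icc m M := by
  obtain ⟨a, ha, hm⟩ := hR.exists_isMinOn hne hg
  obtain ⟨a', ha', hm'⟩ := hR.exists_isMinOn hne hg'
  obtain ⟨B, hB⟩ := hR.exists_bound_of_continuousOn hg
  obtain ⟨B', hB'⟩ := hR.exists_bound_of_continuousOn hg'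
  have p := h0 a ha
  have p' := h0' a' ha'
  have q := (le_abs_self _).trans (hB a ha)
  refine ⟨min (g a) (g' a'), max B B' + 1, lt_min p p', ?_, fun z hz => ⟨⟨?_, ?_⟩, ?_, ?_⟩⟩
  · linarith [min_le_left (g a) (g' a'), le_max_left B B']
  · exact (min_le_left _ _).trans (hm hz)
  · linarith [(le_abs_self _).trans (hB z hz), le_max_left B B']
  · exact (min_le_right _ _).trans (hm' hz)
  · linarith [(le_abs_self _).trans (hB' z hz), le_max_right B B']

/-- `G` is bi-Lipschitz from below on compact intervals of positive densities. -/
theorem Invariant.lower {c : ℝ → ℝ} {ρ_bar δ0 : ℝ} {G S : ℝ → ℝ} (I : Invariant c ρ_bar δ0 G S)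
    {m M : ℝ} (hm : 0 < m) (hmM : m < M) :
    ∃ κ > 0, ∀ a ∈ Icc m M, ∀ b ∈ Icc m M, κ * |a - b| ≤ |G a - G b| := by
  have hsub : Icc m M ⊆ Ioi 0 := fun x hx => hm.trans_le hx.1
  have hcc : ContinuousOn (fun s => c s / s) (Icc m M) :=
    (I.c_diff.continuousOn.mono hsub).div continuousOn_id fun s hs => (hm.trans_le hs.1).ne'
  obtain ⟨a, ha, hmin⟩ := isCompact_Icc.exists_isMinOn ⟨m, le_rfl, hmM.le⟩ hcc
  have ha0 : 0 < a := hsub ha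
  have key : ∀ x ∈ Icc m M, ∀ y ∈ Icc m M, x ≤ y → c a / a * (y - x) ≤ G y - G x :=
    (convex_Icc m M).mul_sub_le_image_sub_of_le_deriv
      (I.G_diff.continuousOn.mono hsub)
      (fun x hx => (I.G_deriv x (hsub (interior_subset hx))).differentiableAt.differentiableWithinAt)
      (fun x hx => by
        rw [(I.G_deriv x (hsub (interior_subset hx))).deriv]
        exact hmin (interior_subset hx))
  refine ⟨c a / a, div_pos (I.cpos a ha0) ha0, fun x hx y hy => ?_⟩
  rcases le_total x y with h | h
  · rw [abs_sub_comm, abs_sub_comm (G x), abs_of_nonneg (sub_nonneg.2 h)]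
    exact (key x hx y hy h).trans (le_abs_self _)
  · rw [abs_of_nonneg (sub_nonneg.2 h)]
    exact (key y hy x hx h).trans (le_abs_self _)

theorem abs_sg (i : Bool) : |sg i| = 1 := by cases i <;> simp

/-- A classical solution that stays subsonic is the only classical solution with its data: the
differences of the Riemann invariants solve a linear diagonal system. -/
theorem unique_dv {c : ℝ → ℝ} {F : ℝ → ℝ → ℝ} {ρ_bar δ0 : ℝ} {G S : ℝ → ℝ}
    (I : Invariant c ρ_bar δ0 G S)
    (hF : ContDiffOn ℝ 1 (Function.uncurry F) (Ioi 0 ×ˢ univ)) {T L : ℝ} (hT : 0 < T) (hL : 0 < L)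
    {ρ₀ v₀ u₀ uL : ℝ → ℝ} {ρ v ρ' v' : ℝ → ℝ → ℝ}
    (h : IsClassicalSolutionDV c F T L ρ₀ v₀ u₀ uL ρ v)
    (h' : IsClassicalSolutionDV c F T L ρ₀ v₀ u₀ uL ρ' v')
    (hsub : ∀ t ∈ Icc 0 T, ∀ x ∈ Icc 0 L, |v t x| ≤ c (ρ t x)) :
    ∀ t ∈ Icc 0 T, ∀ x ∈ Icc 0 L, ρ' t x = ρ t x ∧ v' t x = v t x := by
  obtain ⟨ρt, ρx, vt, vx, p⟩ := exists_partials hT hL h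
  obtain ⟨ρt', ρx', vt', vx', p'⟩ := exists_partials hT hL h'
  obtain ⟨-, -, -, -, -, hin, hbd⟩ := h
  obtain ⟨-, -, -, -, -, hin', hbd'⟩ := h'
  set R : Set (ℝ × ℝ) := Icc 0 T ×ˢ Icc 0 L with hR
  have hsc : IsCompact R := isCompact_Icc.prod isCompact_Icc
  have hne : R.Nonempty := ⟨(0, 0), ⟨le_rfl, hT.le⟩, ⟨le_rfl, hL.le⟩⟩
  obtain ⟨m, M, hm, hmM, hr⟩ := exists_range hsc hne p.cρ p'.cρ (fun z hz => p.pos _ hz.1 _ hz.2)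
    (fun z hz => p'.pos _ hz.1 _ hz.2)
  obtain ⟨V1, hV1⟩ := hsc.exists_bound_of_continuousOn p.cv
  obtain ⟨V2, hV2⟩ := hsc.exists_bound_of_continuousOn p'.cv
  have hmem : ∀ t ∈ Icc 0 T, ∀ x ∈ Icc 0 L, ρ t x ∈ Icc m M ∧ ρ' t x ∈ Icc m M :=
    fun t ht x hx => hr (t, x) ⟨ht, hx⟩
  set W := max |V1| |V2| + 1 with hW
  have hW0 : 0 < W := by positivity
  have hvm : ∀ t ∈ Icc 0 T, ∀ x ∈ Icc 0 L, v t x ∈ Icc (-W) W ∧ v' t x ∈ Icc (-W) W := by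
    intro t ht x hx
    have a1 : |v t x| ≤ V1 := hV1 (t, x) ⟨ht, hx⟩
    have a2 : |v' t x| ≤ V2 := hV2 (t, x) ⟨ht, hx⟩
    exact ⟨abs_le.1 (by linarith [le_max_left |V1| |V2|, le_abs_self V1]),
      abs_le.1 (by linarith [le_max_right |V1| |V2|, le_abs_self V2])⟩
  have hpos : Icc m M ⊆ Ioi 0 := fun x hx => hm.trans_le hx.1
  obtain ⟨κ, hκ, hlow⟩ := I.lower hm hmM
  obtain ⟨⟨Kc, hKc, -, cl⟩, -⟩ := unif_c1 isCompact_Icc (convex_Icc m M) (uniqueDiffOn_Icc hmM)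
    (I.c_diff.mono hpos)
  obtain ⟨⟨KF, hKF, -, Fl⟩, -⟩ := unif_c1 (isCompact_Icc.prod isCompact_Icc)
    ((convex_Icc m M).prod (convex_Icc (-W) W))
    ((uniqueDiffOn_Icc hmM).prod (uniqueDiffOn_Icc (by linarith : -W < W)))
    (hF.mono (prod_mono hpos (subset_univ _)))
  have cc' : ContinuousOn (fun z : ℝ × ℝ => c (ρ' z.1 z.2)) R :=
    I.c_diff.continuousOn.comp p'.cρ fun z hz => p'.pos _ hz.1 _ hz.2
  have cq : ContinuousOn (fun z : ℝ × ℝ => c (ρ' z.1 z.2) / ρ' z.1 z.2 * ρx' z.1 z.2) R :=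
    (cc'.div p'.cρ fun z hz => (p'.pos _ hz.1 _ hz.2).ne').mul p'.cρx
  obtain ⟨P1, hP1⟩ := hsc.exists_bound_of_continuousOn p'.cvx
  obtain ⟨P2, hP2⟩ := hsc.exists_bound_of_continuousOn cq
  obtain ⟨Cc, hCc⟩ := isCompact_Icc.exists_bound_of_continuousOn
    (I.c_diff.continuousOn.mono hpos)
  have hP : ∀ i, ∀ t ∈ Icc 0 T, ∀ x ∈ Icc 0 L,
      |vx' t x + sg i * (c (ρ' t x) / ρ' t x * ρx' t x)| ≤ P1 + P2 := fun i t ht x hx => by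
    refine (abs_add_le _ _).trans ?_
    rw [abs_mul, abs_sg, one_mul]
    exact add_le_add (hP1 (t, x) ⟨ht, hx⟩) (hP2 (t, x) ⟨ht, hx⟩)
  have hP0 : 0 ≤ P1 + P2 := (abs_nonneg _).trans (hP true 0 ⟨le_rfl, hT.le⟩ 0 ⟨le_rfl, hL.le⟩)
  set V : ℝ → ℝ → ℝ := fun t x => v t x - v' t x with hV
  set H : ℝ → ℝ → ℝ := fun t x => G (ρ t x) - G (ρ' t x) with hH
  set Vt : ℝ → ℝ → ℝ := fun t x => vt t x - vt' t x with hVt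
  set Vx : ℝ → ℝ → ℝ := fun t x => vx t x - vx' t x with hVx
  set Ht : ℝ → ℝ → ℝ := fun t x => c (ρ t x) / ρ t x * ρt t x - c (ρ' t x) / ρ' t x * ρt' t x with hHt
  set Hx : ℝ → ℝ → ℝ := fun t x => c (ρ t x) / ρ t x * ρx t x - c (ρ' t x) / ρ' t x * ρx' t x with hHx
  have dt : ∀ i, ∀ t ∈ Icc 0 T, ∀ x ∈ Icc 0 L,
      HasDerivWithinAt (fun s => V s x + sg i * H s x) (Vt t x + sg i * Ht t x) (Icc 0 T) t :=
    fun i t ht x hx => ((p.hvt t ht x hx).sub (p'.hvt t ht x hx)).add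
      (((((I.G_deriv _ (p.pos t ht x hx)).comp_hasDerivWithinAt t (p.hρt t ht x hx))).sub
        ((I.G_deriv _ (p'.pos t ht x hx)).comp_hasDerivWithinAt t (p'.hρt t ht x hx))).const_mul _)
  have dx : ∀ i, ∀ t ∈ Icc 0 T, ∀ x ∈ Icc 0 L,
      HasDerivWithinAt (fun y => V t y + sg i * H t y) (Vx t x + sg i * Hx t x) (Icc 0 L) x :=
    fun i t ht x hx => ((p.hvx t ht x hx).sub (p'.hvx t ht x hx)).add
      (((((I.G_deriv _ (p.pos t ht x hx)).comp_hasDerivWithinAt x (p.hρx t ht x hx))).sub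
        ((I.G_deriv _ (p'.pos t ht x hx)).comp_hasDerivWithinAt x (p'.hρx t ht x hx))).const_mul _)
  have Gc : ContinuousOn (Function.uncurry H) R :=
    (I.G_diff.continuousOn.comp p.cρ fun z hz => p.pos _ hz.1 _ hz.2).sub
      (I.G_diff.continuousOn.comp p'.cρ fun z hz => p'.pos _ hz.1 _ hz.2)
  have pw : ∀ i, ∀ t ∈ Icc 0 T, ∀ x ∈ Icc 0 L,
      |(Vt t x + sg i * Ht t x) + (v t x + sg i * c (ρ t x)) * (Vx t x + sg i * Hx t x)|
        ≤ (KF * (1 / κ + 1) + (1 + Kc / κ) * (P1 + P2))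
          * (|V t x + H t x| + |V t x - H t x|) := by
    intro i t ht x hx
    obtain ⟨r1, r2⟩ := hmem t ht x hx
    obtain ⟨v1, v2⟩ := hvm t ht x hx
    have e1 := riemann_algebra (p.pos t ht x hx) (sg_mul_self i) (p.eq1 t ht x hx) (p.eq2 t ht x hx)
    have e2 := riemann_algebra (p'.pos t ht x hx) (sg_mul_self i) (p'.eq1 t ht x hx)
      (p'.eq2 t ht x hx)
    refine diff_algebra (s := sg i) (V := V t x) (H := H t x)
      (dF := F (ρ t x) (v t x) - F (ρ' t x) (v' t x)) (dc := c (ρ t x) - c (ρ' t x))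
      (dρ := ρ t x - ρ' t x) (abs_sg i) hκ hKF.le hKc.le (hP i t ht x hx) ?_ ?_ ?_ rfl ?_
    · have := Fl (ρ' t x, v' t x) ⟨r2, v2⟩ (ρ t x, v t x) ⟨r1, v1⟩
      refine this.trans (mul_le_mul_of_nonneg_left ?_ hKF.le)
      rw [Prod.mk_sub_mk, Prod.norm_mk]
      exact max_le (le_add_of_nonneg_right (abs_nonneg _)) (le_add_of_nonneg_left (abs_nonneg _))
    · exact cl _ r2 _ r1
    · exact hlow _ r1 _ r2
    · simp only [hV, hVt, hVx, hHt, hHx]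
      linear_combination e1 - e2
  have H0 := max_principle (T := T) (L := L) (Λ := Cc + W)
    (K0 := KF * (1 / κ + 1) + (1 + Kc / κ) * (P1 + P2)) hT hL (by positivity)
    (z := fun i t x => V t (rf L i x) + sg i * H t (rf L i x))
    (q := fun i t x => Vt t (rf L i x) + sg i * Ht t (rf L i x))
    (p := fun i t x => sg i * (Vx t (rf L i x) + sg i * Hx t (rf L i x)))
    (lam := fun i t x => c (ρ t (rf L i x)) + sg i * v t (rf L i x))
    (fun i => ((p.cv.sub p'.cv).add (continuousOn_const.mul Gc)).comp
      (rf_continuous L i).continuousOn fun z hz => ⟨hz.1, rf_mem hz.2 i⟩)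
    (fun i t ht x hx => dt i t ht _ (rf_mem hx i))
    (fun i t ht x hx => rf_deriv (g := fun y => V t y + sg i * H t y) i
      (dx i t ht _ (rf_mem hx i)))
    (fun i t ht x hx => ?_) (fun i t ht x hx => ?_) (fun i x hx => ?_) (fun i t ht => ?_)
  · intro t ht x hx
    have h1 := H0 true t ht x hx
    have h2 := H0 false t ht (L - x) ⟨by linarith [hx.2], by linarith [hx.1]⟩
    simp only [rf_true, rf_false, sg_true, sg_false, sub_sub_cancel] at h1 h2
    have h3 : V t x = 0 := by linarith
    have h4 : H t x = 0 := by linarith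
    exact ⟨(I.G_mono.injOn (p.pos t ht x hx) (p'.pos t ht x hx) (sub_eq_zero.1 h4)).symm,
      (sub_eq_zero.1 h3).symm⟩
  · have hx' := rf_mem hx i
    have b1 : |sg i * v t (rf L i x)| ≤ c (ρ t (rf L i x)) := by
      rw [abs_mul, abs_sg, one_mul]; exact hsub t ht _ hx'
    have b2 : |sg i * v t (rf L i x)| ≤ W := by
      rw [abs_mul, abs_sg, one_mul]; exact abs_le.2 (hvm t ht _ hx').1
    have b3 := (le_abs_self _).trans (hCc _ (hmem t ht _ hx').1)
    exact ⟨by linarith [(abs_le.1 b1).1], by linarith [(abs_le.1 b2).2]⟩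
  · have h1 := pw i t ht _ (rf_mem hx i)
    simp only [rf_not, sg_not]
    have e : Vt t (rf L i x) + sg i * Ht t (rf L i x)
        + (c (ρ t (rf L i x)) + sg i * v t (rf L i x))
          * (sg i * (Vx t (rf L i x) + sg i * Hx t (rf L i x)))
        = (Vt t (rf L i x) + sg i * Ht t (rf L i x)) + (v t (rf L i x) + sg i * c (ρ t (rf L i x)))
          * (Vx t (rf L i x) + sg i * Hx t (rf L i x)) := by
      linear_combination (v t (rf L i x) * (Vx t (rf L i x) + sg i * Hx t (rf L i x)))
        * sg_mul_self i
    rw [e]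
    refine h1.trans (le_of_eq ?_)
    congr 1
    cases i
    · simp only [sg_false]
      rw [add_comm]; congr 2 <;> ring
    · simp only [sg_true]
      congr 2 <;> ring
  · have hx' := rf_mem hx i
    simp only [hV, hH, (hin _ hx').1, (hin _ hx').2, (hin' _ hx').1, (hin' _ hx').2]
    ring
  · have v0 : V t 0 = 0 := by simp only [hV, (hbd t ht).1, (hbd' t ht).1, sub_self]
    have ρL : H t L = 0 := by simp only [hH, (hbd t ht).2, (hbd' t ht).2, sub_self]
    cases i
    · simp [ρL]
    · simp [v0]

/-! ### Coefficients of the diagonal system -/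

/-- Speeds of the two Riemann invariants, as functions of the state. -/
noncomputable def lamDV (c S : ℝ → ℝ) (v_bar : ℝ) (i : Bool) (a b : ℝ) : ℝ :=
  c (S (sg i * (a - b) / 2)) + sg i * (v_bar + (a + b) / 2)

/-- Source term of the two Riemann invariants, as a function of the state. -/
noncomputable def srcDV (F : ℝ → ℝ → ℝ) (S : ℝ → ℝ) (v_bar : ℝ) (i : Bool) (a b : ℝ) : ℝ :=
  -F (S (sg i * (a - b) / 2)) (v_bar + (a + b) / 2)

theorem abs_half_diff {δ a b : ℝ} (i : Bool) (ha : |a| ≤ δ) (hb : |b| ≤ δ) :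
    |sg i * (a - b) / 2| ≤ δ := by
  rw [abs_div, abs_mul, abs_sg, one_mul, abs_two]
  linarith [abs_sub a b]

theorem abs_half_sum {δ a b : ℝ} (ha : |a| ≤ δ) (hb : |b| ≤ δ) : |(a + b) / 2| ≤ δ := by
  rw [abs_div, abs_two]
  linarith [abs_add_le a b]

/-- Near the equilibrium the diagonal system has `C¹` coefficients, positive speeds by subsonicity,
and a source vanishing at the equilibrium. -/
theorem coef_spec {c : ℝ → ℝ} {F : ℝ → ℝ → ℝ} {ρ_bar v_bar δ0 : ℝ} {G S : ℝ → ℝ}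
    (I : Invariant c ρ_bar δ0 G S)
    (hF : ContDiffOn ℝ 1 (Function.uncurry F) (Ioi 0 ×ˢ univ)) (hsub : |v_bar| < c ρ_bar)
    (hFeq : F ρ_bar v_bar = 0) :
    ∃ δ > 0, δ < δ0 ∧
      (∀ i, ContDiffOn ℝ 1 (Function.uncurry (lamDV c S v_bar i)) (Icc (-δ) δ ×ˢ Icc (-δ) δ)) ∧
      (∀ i, ContDiffOn ℝ 1 (Function.uncurry (srcDV F S v_bar i)) (Icc (-δ) δ ×ˢ Icc (-δ) δ)) ∧
      (∀ i a b, |a| ≤ δ → |b| ≤ δ → 0 < lamDV c S v_bar i a b) ∧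
      ∀ i, srcDV F S v_bar i 0 0 = 0 := by
  set κ := (c ρ_bar - |v_bar|) / 2 with hκ
  have hκ0 : 0 < κ := by rw [hκ]; linarith
  have hSc : ContinuousAt S 0 := (I.S_deriv 0 (by rw [abs_zero]; exact I.hδ0)).continuousAt
  have hcS : ContinuousAt (fun y => c (S y)) 0 := by
    refine ContinuousAt.comp (g := c) ?_ hSc
    rw [I.S_zero]
    exact I.c_diff.continuousOn.continuousAt (Ioi_mem_nhds I.hρ)
  obtain ⟨η, hη, hb⟩ := Metric.continuousAt_iff.1 hcS κ hκ0
  have hδη : min (η / 2) (min (δ0 / 2) (κ / 2)) ≤ η / 2 := min_le_left _ _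
  have hδδ : min (η / 2) (min (δ0 / 2) (κ / 2)) ≤ δ0 / 2 :=
    (min_le_right _ _).trans (min_le_left _ _)
  have hδκ : min (η / 2) (min (δ0 / 2) (κ / 2)) ≤ κ / 2 :=
    (min_le_right _ _).trans (min_le_right _ _)
  have hδ0 := I.hδ0
  have hδ : 0 < min (η / 2) (min (δ0 / 2) (κ / 2)) := by positivity
  set δ := min (η / 2) (min (δ0 / 2) (κ / 2))
  have hy : ∀ i, ContDiffOn ℝ 1 (fun z : ℝ × ℝ => S (sg i * (z.1 - z.2) / 2))
      (Icc (-δ) δ ×ˢ Icc (-δ) δ) := by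
    intro i
    refine I.S_diff.comp (g := S) (f := fun z : ℝ × ℝ => sg i * (z.1 - z.2) / 2) ?_ ?_
    · exact ContDiff.contDiffOn (by fun_prop)
    · rintro ⟨a, b⟩ ⟨ha, hb⟩
      exact abs_lt.1 ((abs_half_diff i (abs_le.2 ha) (abs_le.2 hb)).trans_lt (by linarith))
  have hyp : ∀ i, ∀ z ∈ Icc (-δ) δ ×ˢ Icc (-δ) δ, 0 < S (sg i * ((z : ℝ × ℝ).1 - z.2) / 2) := by
    rintro i ⟨a, b⟩ ⟨ha, hb⟩
    exact I.S_pos _ ((abs_half_diff i (abs_le.2 ha) (abs_le.2 hb)).trans_lt (by linarith))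
  refine ⟨δ, hδ, by linarith, fun i => ?_, fun i => ?_, fun i a b ha hb' => ?_, fun i => ?_⟩
  · have h1 : ContDiffOn ℝ 1 (fun z : ℝ × ℝ => c (S (sg i * (z.1 - z.2) / 2)))
        (Icc (-δ) δ ×ˢ Icc (-δ) δ) := I.c_diff.comp (g := c) (hy i) (hyp i)
    exact h1.add (ContDiff.contDiffOn (by fun_prop))
  · have h1 : ContDiffOn ℝ 1 (fun z : ℝ × ℝ => Function.uncurry F
        (S (sg i * (z.1 - z.2) / 2), v_bar + (z.1 + z.2) / 2)) (Icc (-δ) δ ×ˢ Icc (-δ) δ) :=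
      hF.comp (g := Function.uncurry F) ((hy i).prodMk (ContDiff.contDiffOn (by fun_prop)))
        fun z hz => ⟨hyp i z hz, mem_univ _⟩
    exact h1.neg
  · have h1 := abs_half_diff i ha hb'
    have h2 := abs_half_sum ha hb'
    have h3 := hb (x := sg i * (a - b) / 2) (by rw [Real.dist_eq, sub_zero]; linarith)
    rw [Real.dist_eq, I.S_zero, abs_lt] at h3
    have h4 : |sg i * (v_bar + (a + b) / 2)| ≤ |v_bar| + δ := by
      rw [abs_mul, abs_sg, one_mul]
      linarith [abs_add_le v_bar ((a + b) / 2)]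
    unfold lamDV
    linarith [neg_abs_le (sg i * (v_bar + (a + b) / 2))]
  · simp [srcDV, I.S_zero, hFeq]

/-- Linear bound for `G` and bound for its derivative near `ρ_bar`. -/
theorem G_bound {c : ℝ → ℝ} {ρ_bar δ0 : ℝ} {G S : ℝ → ℝ} (I : Invariant c ρ_bar δ0 G S) :
    ∃ K > 0, ∀ r, |r - ρ_bar| ≤ ρ_bar / 2 →
      0 < r ∧ |c r / r| ≤ K ∧ |G r| ≤ K * |r - ρ_bar| := by
  have hρ := I.hρ
  have hpos : ∀ r ∈ Icc (ρ_bar / 2) (3 * ρ_bar / 2), 0 < r := fun r hr => by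
    linarith [hr.1]
  have hcc : ContinuousOn (fun s => c s / s) (Icc (ρ_bar / 2) (3 * ρ_bar / 2)) :=
    (I.c_diff.continuousOn.mono hpos).div continuousOn_id fun s hs => (hpos s hs).ne'
  obtain ⟨B, hB⟩ := isCompact_Icc.exists_bound_of_continuousOn hcc
  have hm : ρ_bar ∈ Icc (ρ_bar / 2) (3 * ρ_bar / 2) := ⟨by linarith, by linarith⟩
  refine ⟨|B| + 1, by positivity, fun r hr => ?_⟩
  rw [abs_le] at hr
  have hr' : r ∈ Icc (ρ_bar / 2) (3 * ρ_bar / 2) := ⟨by linarith, by linarith⟩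
  have hb : ∀ s ∈ Icc (ρ_bar / 2) (3 * ρ_bar / 2), |c s / s| ≤ |B| + 1 := fun s hs => by
    have := hB s hs
    rw [Real.norm_eq_abs] at this
    linarith [le_abs_self B]
  refine ⟨hpos r hr', hb r hr', ?_⟩
  have := (convex_Icc (ρ_bar / 2) (3 * ρ_bar / 2)).norm_image_sub_le_of_norm_hasDerivWithin_le
    (fun s hs => (I.G_deriv s (hpos s hs)).hasDerivWithinAt) hb hm hr'
  rwa [I.G_bar, sub_zero] at this

/-- Linear bound for `S` and bound for its derivative near `0`. -/
theorem S_bound {c : ℝ → ℝ} {ρ_bar δ0 δ : ℝ} {G S : ℝ → ℝ} (I : Invariant c ρ_bar δ0 G S)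
    (hδ : 0 < δ) (h : δ < δ0) :
    ∃ K > 0, ∀ y, |y| ≤ δ → |S y / c (S y)| ≤ K ∧ |S y - ρ_bar| ≤ K * |y| := by
  have hlt : ∀ y ∈ Icc (-δ) δ, |y| < δ0 := fun y hy => (abs_le.2 hy).trans_lt h
  have hSc : ContinuousOn S (Icc (-δ) δ) := fun y hy =>
    (I.S_deriv y (hlt y hy)).continuousAt.continuousWithinAt
  have hcc : ContinuousOn (fun y => S y / c (S y)) (Icc (-δ) δ) :=
    hSc.div (I.c_diff.continuousOn.comp hSc fun y hy => I.S_pos y (hlt y hy)) fun y hy =>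
      (I.cpos _ (I.S_pos y (hlt y hy))).ne'
  obtain ⟨B, hB⟩ := isCompact_Icc.exists_bound_of_continuousOn hcc
  have hb : ∀ s ∈ Icc (-δ) δ, |S s / c (S s)| ≤ |B| + 1 := fun s hs => by
    have := hB s hs
    rw [Real.norm_eq_abs] at this
    linarith [le_abs_self B]
  refine ⟨|B| + 1, by positivity, fun y hy => ⟨hb y (abs_le.1 hy), ?_⟩⟩
  have := (convex_Icc (-δ) δ).norm_image_sub_le_of_norm_hasDerivWithin_le
    (fun s hs => (I.S_deriv s (hlt s hs)).hasDerivWithinAt) hb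
    (⟨by linarith, hδ.le⟩ : (0 : ℝ) ∈ Icc (-δ) δ) (abs_le.1 hy)
  rwa [I.S_zero, sub_zero] at this

/-! ### Data of the diagonal system -/

/-- Initial data of the Riemann invariants, reflected according to `rf`. -/
noncomputable def wDV (G : ℝ → ℝ) (v_bar L : ℝ) (ρ₀ v₀ : ℝ → ℝ) (i : Bool) (x : ℝ) : ℝ :=
  v₀ (rf L i x) - v_bar + sg i * G (ρ₀ (rf L i x))

/-- Boundary data of the Riemann invariants, extended by clamping the time. -/
noncomputable def βDV (G : ℝ → ℝ) (v_bar T : ℝ) (u₀ uL : ℝ → ℝ) (i : Bool) (t : ℝ) : ℝ :=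
  if i then 2 * (u₀ (clamp T t) - v_bar) else -2 * G (uL (clamp T t))

/-- The diagonal data inherit size and Lipschitz bounds and the compatibility conditions of both
orders. The reflection coefficients are `-1` at the velocity boundary and `+1` at the density
boundary. -/
theorem diag_data {c : ℝ → ℝ} {F : ℝ → ℝ → ℝ} {ρ_bar v_bar δ0 T L K N : ℝ} {G S : ℝ → ℝ}
    (I : Invariant c ρ_bar δ0 G S) (hT : 0 < T) (hL : 0 < L)
    {ρ₀ v₀ u₀ uL : ℝ → ℝ} (cρ : ContDiffOn ℝ 1 ρ₀ (Icc 0 L)) (cv : ContDiffOn ℝ 1 v₀ (Icc 0 L))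
    (cu : ContDiffOn ℝ 1 u₀ (Icc 0 T)) (cl : ContDiffOn ℝ 1 uL (Icc 0 T))
    (e0 : u₀ 0 = v₀ 0) (e1 : uL 0 = ρ₀ L)
    (e2 : derivWithin u₀ (Icc 0 T) 0 = -((c (ρ₀ 0)) ^ 2 / ρ₀ 0) * derivWithin ρ₀ (Icc 0 L) 0
            - v₀ 0 * derivWithin v₀ (Icc 0 L) 0 - F (ρ₀ 0) (v₀ 0))
    (e3 : derivWithin uL (Icc 0 T) 0
          = -(v₀ L) * derivWithin ρ₀ (Icc 0 L) L - ρ₀ L * derivWithin v₀ (Icc 0 L) L)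
    (bρ : ∀ x ∈ Icc 0 L, |ρ₀ x - ρ_bar| ≤ N ∧ |derivWithin ρ₀ (Icc 0 L) x| ≤ N)
    (bv : ∀ x ∈ Icc 0 L, |v₀ x - v_bar| ≤ N ∧ |derivWithin v₀ (Icc 0 L) x| ≤ N)
    (bu : ∀ t ∈ Icc 0 T, |u₀ t - v_bar| ≤ N ∧ |derivWithin u₀ (Icc 0 T) t| ≤ N)
    (bl : ∀ t ∈ Icc 0 T, |uL t - ρ_bar| ≤ N ∧ |derivWithin uL (Icc 0 T) t| ≤ N)
    (hK0 : 0 < K)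
    (hK : ∀ r, |r - ρ_bar| ≤ N → 0 < r ∧ |c r / r| ≤ K ∧ |G r| ≤ K * |r - ρ_bar|)
    (hKδ : K * N < δ0) :
    let w := wDV G v_bar L ρ₀ v₀
    let w' := fun i => derivWithin (w i) (Icc 0 L)
    let β := βDV G v_bar T u₀ uL
    let β' := fun i => derivWithin (β i) (Icc 0 T)
    let σ := fun i => -sg i
    DiagData L (2 * (1 + K) * N) σ w β ∧ UnifDiff L w w' ∧ UnifDiff T β β' ∧
    (∀ i, ∀ x ∈ Icc 0 L, |w' i x| ≤ 2 * (1 + K) * N) ∧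
    ∀ i, srcDV F S v_bar i (w i 0) (w (!i) L)
        - lamDV c S v_bar i (w i 0) (w (!i) L) * w' i 0
      = β' i 0 + σ i * (srcDV F S v_bar (!i) (w (!i) L) (w i 0)
        - lamDV c S v_bar (!i) (w (!i) L) (w i 0) * w' (!i) L) := by
  intro w w' β β' σ
  have m0L : (0 : ℝ) ∈ Icc 0 L := ⟨le_rfl, hL.le⟩
  have mLL : L ∈ Icc 0 L := ⟨hL.le, le_rfl⟩
  have m0T : (0 : ℝ) ∈ Icc 0 T := ⟨le_rfl, hT.le⟩
  have N0 : 0 ≤ N := (abs_nonneg _).trans (bρ 0 m0L).1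
  have KN0 : 0 ≤ K * N := by positivity
  have dG : ∀ {s : Set ℝ} {g : ℝ → ℝ} {g' x : ℝ}, |g x - ρ_bar| ≤ N → HasDerivWithinAt g g' s x →
      HasDerivWithinAt (fun y => G (g y)) (c (g x) / g x * g') s x := fun h1 h2 =>
    (I.G_deriv _ (hK _ h1).1).comp_hasDerivWithinAt _ h2
  have hGN : ∀ r, |r - ρ_bar| ≤ N → |G r| ≤ K * N := fun r hr =>
    (hK r hr).2.2.trans (mul_le_mul_of_nonneg_left hr hK0.le)
  have hGN' : ∀ r r', |r - ρ_bar| ≤ N → |r'| ≤ N → |c r / r * r'| ≤ K * N := fun r r' hr hr' => by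
    rw [abs_mul]
    exact mul_le_mul (hK r hr).2.1 hr' (abs_nonneg _) hK0.le
  have dρ : ∀ x ∈ Icc 0 L, HasDerivWithinAt ρ₀ (derivWithin ρ₀ (Icc 0 L) x) (Icc 0 L) x :=
    fun x hx => (cρ.differentiableOn one_ne_zero x hx).hasDerivWithinAt
  have dv : ∀ x ∈ Icc 0 L, HasDerivWithinAt v₀ (derivWithin v₀ (Icc 0 L) x) (Icc 0 L) x :=
    fun x hx => (cv.differentiableOn one_ne_zero x hx).hasDerivWithinAt
  have du : ∀ t ∈ Icc 0 T, HasDerivWithinAt u₀ (derivWithin u₀ (Icc 0 T) t) (Icc 0 T) t :=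
    fun x hx => (cu.differentiableOn one_ne_zero x hx).hasDerivWithinAt
  have dl : ∀ t ∈ Icc 0 T, HasDerivWithinAt uL (derivWithin uL (Icc 0 T) t) (Icc 0 T) t :=
    fun x hx => (cl.differentiableOn one_ne_zero x hx).hasDerivWithinAt
  -- derivatives of the diagonal data
  have dw : ∀ i, ∀ x ∈ Icc 0 L, HasDerivWithinAt (w i)
      (sg i * (derivWithin v₀ (Icc 0 L) (rf L i x) + sg i * (c (ρ₀ (rf L i x)) / ρ₀ (rf L i x)
        * derivWithin ρ₀ (Icc 0 L) (rf L i x)))) (Icc 0 L) x := by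
    intro i x hx
    have hm := rf_mem hx i
    exact rf_deriv (g := fun y => v₀ y - v_bar + sg i * G (ρ₀ y)) i
      (((dv _ hm).sub_const _).add ((dG (bρ _ hm).1 (dρ _ hm)).const_mul _))
  have hw' : ∀ i, ∀ x ∈ Icc 0 L, w' i x = sg i * (derivWithin v₀ (Icc 0 L) (rf L i x) + sg i *
      (c (ρ₀ (rf L i x)) / ρ₀ (rf L i x) * derivWithin ρ₀ (Icc 0 L) (rf L i x))) :=
    fun i x hx => (dw i x hx).derivWithin (uniqueDiffOn_Icc hL x hx)
  have bw' : ∀ i, ∀ x ∈ Icc 0 L, |w' i x| ≤ 2 * (1 + K) * N := by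
    intro i x hx
    have hm := rf_mem hx i
    rw [hw' i x hx, abs_mul, abs_sg, one_mul]
    refine (abs_add_le _ _).trans ?_
    rw [abs_mul, abs_sg, one_mul]
    have := hGN' _ _ (bρ _ hm).1 (bρ _ hm).2
    linarith [(bv _ hm).2]
  have cw : ∀ i, ContDiffOn ℝ 1 (w i) (Icc 0 L) := by
    intro i
    have hr : ContDiffOn ℝ 1 (rf L i) (Icc 0 L) := by
      cases i
      · exact ContDiff.contDiffOn (contDiff_const.sub contDiff_id)
      · exact ContDiff.contDiffOn contDiff_id
    have h1 : ContDiffOn ℝ 1 (fun x => ρ₀ (rf L i x)) (Icc 0 L) :=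
      cρ.comp hr fun x hx => rf_mem hx i
    have h2 : ContDiffOn ℝ 1 (fun x => v₀ (rf L i x)) (Icc 0 L) :=
      cv.comp hr fun x hx => rf_mem hx i
    exact (h2.sub contDiffOn_const).add (contDiffOn_const.mul
      (I.G_diff.comp h1 fun x hx => (hK _ (bρ _ (rf_mem hx i)).1).1))
  have cβ : ∀ i, ContDiffOn ℝ 1 (β i) (Icc 0 T) := by
    intro i
    cases i
    · refine (contDiffOn_const (c := (-2 : ℝ)).mul (I.G_diff.comp cl
        fun x hx => (hK _ (bl _ hx).1).1)).congr fun t ht => ?_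
      simp [β, βDV, clamp_of_mem ht]
    · refine (contDiffOn_const (c := (2 : ℝ)).mul (cu.sub
        (contDiffOn_const (c := v_bar)))).congr fun t ht => ?_
      simp [β, βDV, clamp_of_mem ht]
  have dβt : ∀ t ∈ Icc 0 T, HasDerivWithinAt (β true) (2 * derivWithin u₀ (Icc 0 T) t)
      (Icc 0 T) t := fun t ht => by
    refine (((du t ht).sub_const v_bar).const_mul 2).congr (fun s hs => ?_) ?_
    · simp [β, βDV, clamp_of_mem hs]
    · simp [β, βDV, clamp_of_mem ht]
  have dβf : ∀ t ∈ Icc 0 T, HasDerivWithinAt (β false)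
      (-2 * (c (uL t) / uL t * derivWithin uL (Icc 0 T) t)) (Icc 0 T) t := fun t ht => by
    refine ((dG (bl t ht).1 (dl t ht)).const_mul (-2)).congr (fun s hs => ?_) ?_
    · simp [β, βDV, clamp_of_mem hs]
    · simp [β, βDV, clamp_of_mem ht]
  have hw0 : ∀ i, w i 0 = v₀ (rf L i 0) - v_bar + sg i * G (ρ₀ (rf L i 0)) := fun i => rfl
  have hwL : ∀ i, w (!i) L = v₀ (rf L i 0) - v_bar - sg i * G (ρ₀ (rf L i 0)) := fun i => by
    have : rf L (!i) L = rf L i 0 := by cases i <;> simp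
    simp only [w, wDV, this, sg_not]
    ring
  refine ⟨⟨by positivity, ?_, ?_, ?_, ?_⟩, unifDiff_of_contDiffOn hL cw,
    unifDiff_of_contDiffOn hT cβ, bw', ?_⟩
  · intro i x hx
    have hm := rf_mem hx i
    refine (abs_add_le _ _).trans ?_
    rw [abs_mul, abs_sg, one_mul]
    have := hGN _ (bρ _ hm).1
    linarith [(bv _ hm).1]
  · intro i x y hx hy
    have := (convex_Icc 0 L).norm_image_sub_le_of_norm_hasDerivWithin_le (f := w i)
      (fun s hs => (((cw i).differentiableOn one_ne_zero) s hs).hasDerivWithinAt) (bw' i) hy hx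
    simpa [Real.norm_eq_abs] using this
  · have key : ∀ i, ∀ s ∈ Icc 0 T, ∀ t ∈ Icc 0 T, |β i s - β i t| ≤ 2 * (1 + K) * N * |s - t| := by
      intro i s hs t ht
      refine (convex_Icc 0 T).norm_image_sub_le_of_norm_hasDerivWithin_le (f := β i)
        (f' := β' i) (C := 2 * (1 + K) * N)
        (fun s hs => (((cβ i).differentiableOn one_ne_zero) s hs).hasDerivWithinAt)
        (fun s hs => ?_) ht hs
      have hun := uniqueDiffOn_Icc hT s hs
      rw [Real.norm_eq_abs]
      cases i
      · simp only [β']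
        rw [(dβf s hs).derivWithin hun, abs_mul, abs_neg, abs_two]
        linarith [hGN' _ _ (bl s hs).1 (bl s hs).2]
      · simp only [β']
        rw [(dβt s hs).derivWithin hun, abs_mul, abs_two]
        linarith [(bu s hs).2]
    intro i s t
    have h1 := key i _ (clamp_mem hT.le s) _ (clamp_mem hT.le t)
    have h2 : ∀ s, β i (clamp T s) = β i s := fun s => by
      simp [β, βDV, clamp_of_mem (clamp_mem hT.le s)]
    rw [h2, h2] at h1
    exact h1.trans (mul_le_mul_of_nonneg_left (clamp_lip T s t) (by positivity))
  · intro i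
    rw [hw0, hwL]
    cases i
    · simp only [β, βDV, σ, clamp_of_mem m0T, e1]
      simp
      ring
    · simp only [β, βDV, σ, clamp_of_mem m0T, e0]
      simp
      ring
  · intro i
    have hm := rf_mem m0L i
    have hr := bρ _ hm
    have hpos := (hK _ hr.1).1
    have hS : S (G (ρ₀ (rf L i 0))) = ρ₀ (rf L i 0) :=
      I.S_G hpos ((hGN _ hr.1).trans_lt hKδ)
    have hP : rf L (!i) L = rf L i 0 := by cases i <;> simp
    have a1 : sg i * (w i 0 - w (!i) L) / 2 = G (ρ₀ (rf L i 0)) := by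
      rw [hw0, hwL]
      linear_combination (G (ρ₀ (rf L i 0))) * sg_mul_self i
    have a2 : sg (!i) * (w (!i) L - w i 0) / 2 = G (ρ₀ (rf L i 0)) := by
      rw [← a1, sg_not]; ring
    have a3 : v_bar + (w i 0 + w (!i) L) / 2 = v₀ (rf L i 0) := by rw [hw0, hwL]; ring
    have a4 : v_bar + (w (!i) L + w i 0) / 2 = v₀ (rf L i 0) := by rw [← a3]; ring
    simp only [srcDV, lamDV]
    rw [a1, a2, a3, a4, hS, hw' i 0 m0L, hw' (!i) L mLL, hP]
    cases i
    · have hb : β' false 0 = _ := (dβf 0 m0T).derivWithin (uniqueDiffOn_Icc hT 0 m0T)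
      rw [hb, e3, e1]
      simp [σ] at hpos ⊢
      field_simp
      ring
    · have hb : β' true 0 = _ := (dβt 0 m0T).derivWithin (uniqueDiffOn_Icc hT 0 m0T)
      rw [hb, e2]
      simp [σ] at hpos ⊢
      field_simp
      ring

/-! ### Reconstruction of the solution -/

/-- The inverse of `riemann_algebra`: the diagonal equations give back the density-velocity system. -/
theorem solution_algebra {ρ c v qt qf pt pf F : ℝ} (hρ : 0 < ρ) (hc : 0 < c)
    (e1 : qt + (c + v) * pt = -F) (e2 : qf + (c - v) * pf = -F) :
    ρ / c * ((qt - qf) / 2) + v * (ρ / c * ((pt + pf) / 2)) + ρ * ((pt - pf) / 2) = 0 ∧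
    (qt + qf) / 2 + c ^ 2 / ρ * (ρ / c * ((pt + pf) / 2)) + v * ((pt - pf) / 2) = -F := by
  constructor
  · have : ρ / c * ((qt - qf) / 2) + v * (ρ / c * ((pt + pf) / 2)) + ρ * ((pt - pf) / 2)
        = ρ / c / 2 * ((qt + (c + v) * pt) - (qf + (c - v) * pf)) := by
      field_simp
      ring
    rw [this, e1, e2, sub_self, mul_zero]
  · have : (qt + qf) / 2 + c ^ 2 / ρ * (ρ / c * ((pt + pf) / 2)) + v * ((pt - pf) / 2)
        = ((qt + (c + v) * pt) + (qf + (c - v) * pf)) / 2 := by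
      field_simp
      ring
    rw [this, e1, e2]
    ring

/-- A solution of the diagonal system for the Riemann invariants gives a classical solution of the
density–velocity system, with the same size. -/
theorem solution_of_diag {c : ℝ → ℝ} {F : ℝ → ℝ → ℝ} {ρ_bar v_bar δ0 δ T L K B : ℝ} {G S : ℝ → ℝ}
    (I : Invariant c ρ_bar δ0 G S) (hT : 0 < T) (hL : 0 < L) (hδ : δ < δ0) (hK0 : 0 < K)
    (hK : ∀ y, |y| ≤ δ → |S y / c (S y)| ≤ K ∧ |S y - ρ_bar| ≤ K * |y|)
    {ρ₀ v₀ u₀ uL : ℝ → ℝ} (hρ₀ : ∀ x ∈ Icc 0 L, S (G (ρ₀ x)) = ρ₀ x)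
    (huL : ∀ t ∈ Icc 0 T, S (G (uL t)) = uL t)
    (hpos : ∀ i a b, |a| ≤ δ → |b| ≤ δ → 0 < lamDV c S v_bar i a b)
    {r q p : Bool → ℝ → ℝ → ℝ}
    (hrb : ∀ i t x, |r i t x| ≤ B ∧ |r i t x| ≤ δ) (hrc : ∀ i, Continuous (Function.uncurry (r i)))
    (hqc : ∀ i, ContinuousOn (Function.uncurry (q i)) (Icc 0 T ×ˢ Icc 0 L))
    (hpc : ∀ i, ContinuousOn (Function.uncurry (p i)) (Icc 0 T ×ˢ Icc 0 L))
    (hd : ∀ i, ∀ t ∈ Icc 0 T, ∀ x ∈ Icc 0 L, |q i t x| ≤ B ∧ |p i t x| ≤ B ∧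
      HasDerivWithinAt (fun s => r i s x) (q i t x) (Icc 0 T) t ∧
      HasDerivWithinAt (fun y => r i t y) (p i t x) (Icc 0 L) x ∧
      q i t x + lamDV c S v_bar i (r i t x) (r (!i) t (L - x)) * p i t x
        = srcDV F S v_bar i (r i t x) (r (!i) t (L - x)))
    (hi : ∀ i, ∀ x ∈ Icc 0 L, r i 0 x = wDV G v_bar L ρ₀ v₀ i x)
    (hb : ∀ i, ∀ t ∈ Icc 0 T, r i t 0 = βDV G v_bar T u₀ uL i t + -sg i * r (!i) t L) :
    ∃ ρ v, IsClassicalSolutionDV c F T L ρ₀ v₀ u₀ uL ρ v ∧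
      max (c1NormOn₂ (fun t x => ρ t x - ρ_bar) (Icc 0 T) (Icc 0 L))
        (c1NormOn₂ (fun t x => v t x - v_bar) (Icc 0 T) (Icc 0 L)) ≤ max K 1 * B ∧
      ∀ t ∈ Icc 0 T, ∀ x ∈ Icc 0 L, |v t x| ≤ c (ρ t x) := by
  have B0 : 0 ≤ B := (abs_nonneg _).trans (hrb true 0 0).1
  set y : ℝ → ℝ → ℝ := fun t x => (r true t x - r false t (L - x)) / 2 with hy
  have hyb : ∀ t x, |y t x| ≤ B ∧ |y t x| ≤ δ := fun t x => by
    have h1 := hrb true t x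
    have h2 := hrb false t (L - x)
    have h3 := abs_sub (r true t x) (r false t (L - x))
    rw [hy]
    simp only [abs_div, abs_two]
    exact ⟨by linarith, by linarith⟩
  have hyδ : ∀ t x, |y t x| < δ0 := fun t x => (hyb t x).2.trans_lt hδ
  have hSp : ∀ t x, 0 < S (y t x) := fun t x => I.S_pos _ (hyδ t x)
  set V : ℝ → ℝ → ℝ := fun t x => v_bar + (r true t x + r false t (L - x)) / 2 with hV
  have m : ∀ x ∈ Icc 0 L, L - x ∈ Icc 0 L := fun x hx => rf_mem hx false
  have hlt : ∀ t x, lamDV c S v_bar true (r true t x) (r false t (L - x))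
      = c (S (y t x)) + V t x := fun t x => by
    simp [lamDV, hy, hV]
  have hlf : ∀ t x, lamDV c S v_bar false (r false t (L - x)) (r true t x)
      = c (S (y t x)) - V t x := fun t x => by
    simp only [lamDV, hy, hV, sg_false]
    have : -1 * (r false t (L - x) - r true t x) / 2 = (r true t x - r false t (L - x)) / 2 := by
      ring
    rw [this]
    ring
  have hst : ∀ t x, srcDV F S v_bar true (r true t x) (r false t (L - x))
      = -F (S (y t x)) (V t x) := fun t x => by
    simp [srcDV, hy, hV]
  have hsf : ∀ t x, srcDV F S v_bar false (r false t (L - x)) (r true t x)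
      = -F (S (y t x)) (V t x) := fun t x => by
    simp only [srcDV, hy, hV, sg_false]
    have : -1 * (r false t (L - x) - r true t x) / 2 = (r true t x - r false t (L - x)) / 2 := by
      ring
    rw [this, add_comm (r false t (L - x))]
  -- partial derivatives of the reconstructed solution
  have drx : ∀ t ∈ Icc 0 T, ∀ x ∈ Icc 0 L,
      HasDerivWithinAt (fun y => r false t (L - y)) (-p false t (L - x)) (Icc 0 L) x :=
    fun t ht x hx => by
      have := rf_deriv (g := r false t) (x := x) false (hd false t ht _ (m x hx)).2.2.2.1
      simpa using this
  have dyt : ∀ t ∈ Icc 0 T, ∀ x ∈ Icc 0 L, HasDerivWithinAt (fun s => y s x)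
      ((q true t x - q false t (L - x)) / 2) (Icc 0 T) t := fun t ht x hx =>
    (((hd true t ht x hx).2.2.1).sub ((hd false t ht _ (m x hx)).2.2.1)).div_const 2
  have dyx : ∀ t ∈ Icc 0 T, ∀ x ∈ Icc 0 L, HasDerivWithinAt (fun z => y t z)
      ((p true t x + p false t (L - x)) / 2) (Icc 0 L) x := fun t ht x hx => by
    have := (((hd true t ht x hx).2.2.2.1).sub (drx t ht x hx)).div_const 2
    rwa [sub_neg_eq_add] at this
  have dρt : ∀ t ∈ Icc 0 T, ∀ x ∈ Icc 0 L, HasDerivWithinAt (fun s => S (y s x))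
      (S (y t x) / c (S (y t x)) * ((q true t x - q false t (L - x)) / 2)) (Icc 0 T) t :=
    fun t ht x hx =>
    HasDerivAt.comp_hasDerivWithinAt t (h := fun s => y s x) (I.S_deriv _ (hyδ t x)) (dyt t ht x hx)
  have dρx : ∀ t ∈ Icc 0 T, ∀ x ∈ Icc 0 L, HasDerivWithinAt (fun z => S (y t z))
      (S (y t x) / c (S (y t x)) * ((p true t x + p false t (L - x)) / 2)) (Icc 0 L) x :=
    fun t ht x hx => (I.S_deriv _ (hyδ t x)).comp_hasDerivWithinAt _ (dyx t ht x hx)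
  have dvt : ∀ t ∈ Icc 0 T, ∀ x ∈ Icc 0 L, HasDerivWithinAt (fun s => V s x)
      ((q true t x + q false t (L - x)) / 2) (Icc 0 T) t := fun t ht x hx =>
    ((((hd true t ht x hx).2.2.1).add ((hd false t ht _ (m x hx)).2.2.1)).div_const 2).const_add _
  have dvx : ∀ t ∈ Icc 0 T, ∀ x ∈ Icc 0 L, HasDerivWithinAt (fun z => V t z)
      ((p true t x - p false t (L - x)) / 2) (Icc 0 L) x := fun t ht x hx => by
    have := ((((hd true t ht x hx).2.2.2.1).add (drx t ht x hx)).div_const 2).const_add v_bar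
    rwa [← sub_eq_add_neg] at this
  -- continuity
  have mR : MapsTo (fun z : ℝ × ℝ => (z.1, rf L false z.2)) (Icc 0 T ×ˢ Icc 0 L)
      (Icc 0 T ×ˢ Icc 0 L) := fun z hz => ⟨hz.1, rf_mem hz.2 false⟩
  have cq : ContinuousOn (fun z : ℝ × ℝ => q false z.1 (L - z.2)) (Icc 0 T ×ˢ Icc 0 L) :=
    (hqc false).comp (rf_continuous L false).continuousOn mR
  have cp : ContinuousOn (fun z : ℝ × ℝ => p false z.1 (L - z.2)) (Icc 0 T ×ˢ Icc 0 L) :=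
    (hpc false).comp (rf_continuous L false).continuousOn mR
  have cr : Continuous (fun z : ℝ × ℝ => r false z.1 (L - z.2)) :=
    (hrc false).comp (rf_continuous L false)
  have cqt : ContinuousOn (fun z : ℝ × ℝ => q true z.1 z.2) (Icc 0 T ×ˢ Icc 0 L) := hqc true
  have cpt : ContinuousOn (fun z : ℝ × ℝ => p true z.1 z.2) (Icc 0 T ×ˢ Icc 0 L) := hpc true
  have crt : Continuous (fun z : ℝ × ℝ => r true z.1 z.2) := hrc true
  have cy : Continuous (fun z : ℝ × ℝ => y z.1 z.2) := (crt.sub cr).div_const 2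
  have cSy : Continuous (fun z : ℝ × ℝ => S (y z.1 z.2)) :=
    continuous_iff_continuousAt.2 fun z =>
      (I.S_deriv _ (hyδ z.1 z.2)).continuousAt.comp (f := fun z : ℝ × ℝ => y z.1 z.2)
        cy.continuousAt
  have ccS : Continuous (fun z : ℝ × ℝ => c (S (y z.1 z.2))) :=
    I.c_diff.continuousOn.comp_continuous cSy fun z => hSp z.1 z.2
  have cκ : ContinuousOn (fun z : ℝ × ℝ => S (y z.1 z.2) / c (S (y z.1 z.2)))
      (Icc 0 T ×ˢ Icc 0 L) :=
    (cSy.div ccS fun z => (I.cpos _ (hSp z.1 z.2)).ne').continuousOn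
  have hsub : ∀ t x, |V t x| ≤ c (S (y t x)) := fun t x => by
    have h1 := hpos true _ _ (hrb true t x).2 (hrb false t (L - x)).2
    have h2 := hpos false _ _ (hrb false t (L - x)).2 (hrb true t x).2
    rw [hlt] at h1
    rw [hlf] at h2
    exact abs_le.2 ⟨by linarith, by linarith⟩
  have alg : ∀ t ∈ Icc 0 T, ∀ x ∈ Icc 0 L, _ ∧ _ := fun t ht x hx => by
    have h1 := (hd true t ht x hx).2.2.2.2
    have h2 := (hd false t ht _ (m x hx)).2.2.2.2
    simp only [Bool.not_true, Bool.not_false, sub_sub_cancel] at h1 h2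
    rw [hlt, hst] at h1
    rw [hlf, hsf] at h2
    exact solution_algebra (hSp t x) (I.cpos _ (hSp t x)) h1 h2
  have uT := uniqueDiffOn_Icc hT
  have uL' := uniqueDiffOn_Icc hL
  refine ⟨fun t x => S (y t x), V, ⟨?_, ?_, fun t _ x _ => hSp t x, ?_, ?_, ?_, ?_⟩, max_le ?_ ?_,
    fun t _ x _ => hsub t x⟩
  · refine contDiffOn_rect ?_ ?_ dρt dρx
    · exact cκ.mul ((cqt.sub cq).div_const 2)
    · exact cκ.mul ((cpt.add cp).div_const 2)
  · refine contDiffOn_rect ?_ ?_ dvt dvx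
    · exact (cqt.add cq).div_const 2
    · exact (cpt.sub cp).div_const 2
  · intro t ht x hx
    rw [(dρt t ht x hx).derivWithin (uT t ht), (dρx t ht x hx).derivWithin (uL' x hx),
      (dvx t ht x hx).derivWithin (uL' x hx)]
    exact (alg t ht x hx).1
  · intro t ht x hx
    rw [(dvt t ht x hx).derivWithin (uT t ht), (dρx t ht x hx).derivWithin (uL' x hx),
      (dvx t ht x hx).derivWithin (uL' x hx)]
    exact (alg t ht x hx).2
  · intro x hx
    have h1 := hi true x hx
    have h2 := hi false (L - x) (m x hx)
    simp only [wDV, rf_true, rf_false, sg_true, sg_false, sub_sub_cancel] at h1 h2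
    constructor
    · have : y 0 x = G (ρ₀ x) := by simp only [hy]; rw [h1, h2]; ring
      change S (y 0 x) = _
      rw [this, hρ₀ x hx]
    · simp only [hV]; rw [h1, h2]; ring
  · intro t ht
    have h1 := hb true t ht
    have h2 := hb false t ht
    simp [βDV, clamp_of_mem ht] at h1 h2
    constructor
    · simp only [hV, sub_zero]; rw [h1]; ring
    · have : y t L = G (uL t) := by simp only [hy, sub_self]; rw [h2]; ring
      change S (y t L) = _
      rw [this, huL t ht]
  · have hq : ∀ a b d : ℝ, |d| ≤ K → |a| ≤ B → |b| ≤ B → |d * ((a - b) / 2)| ≤ max K 1 * B := by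
      intro a b d h1 h2 h3
      rw [abs_mul, abs_div, abs_two]
      refine mul_le_mul (h1.trans (le_max_left _ _)) ?_ (by positivity) (by positivity)
      linarith [abs_sub a b]
    refine c1NormOn₂_le hT hL dρt dρx (fun t ht x hx => ?_) (fun t ht x hx => ?_)
      (fun t ht x hx => ?_)
    · refine (hK _ (hyb t x).2).2.trans ?_
      exact mul_le_mul (le_max_left _ _) (hyb t x).1 (abs_nonneg _) (by positivity)
    · exact hq _ _ _ (hK _ (hyb t x).2).1 (hd true t ht x hx).1 (hd false t ht _ (m x hx)).1
    · have := hq (p true t x) (-p false t (L - x)) _ (hK _ (hyb t x).2).1 (hd true t ht x hx).2.1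
        (by rw [abs_neg]; exact (hd false t ht _ (m x hx)).2.1)
      rwa [sub_neg_eq_add] at this
  · have hq : ∀ a b : ℝ, |a| ≤ B → |b| ≤ B → |(a + b) / 2| ≤ max K 1 * B := by
      intro a b h2 h3
      refine (abs_half_sum h2 h3).trans ?_
      exact le_mul_of_one_le_left B0 (le_max_right _ _)
    refine c1NormOn₂_le hT hL dvt dvx (fun t ht x hx => ?_) (fun t ht x hx => ?_)
      (fun t ht x hx => ?_)
    · simp only [hV, add_sub_cancel_left]
      exact hq _ _ (hrb true t x).1 (hrb false t (L - x)).1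
    · exact hq _ _ (hd true t ht x hx).1 (hd false t ht _ (m x hx)).1
    · have := hq (p true t x) (-p false t (L - x)) (hd true t ht x hx).2.1
        (by rw [abs_neg]; exact (hd false t ht _ (m x hx)).2.1)
      rwa [← sub_eq_add_neg] at this

/-! ### Semi-global classical solutions -/

/-- Semi-global existence, uniqueness and a priori bound for classical
solutions of the density–velocity system, for `C¹`-small `C¹`-compatible initial and
boundary data around a subsonic equilibrium `(ρ̄, v̄)`. -/
theorem semiglobal_classical_solutions_density_velocity
    (L : ℝ) (hL : 0 < L)
    (c : ℝ → ℝ) (hc : ContDiffOn ℝ 2 c (Ioi 0)) (hcpos : ∀ r : ℝ, 0 < r → 0 < c r)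
    (F : ℝ → ℝ → ℝ) (hF : ContDiffOn ℝ 1 (Function.uncurry F) (Ioi 0 ×ˢ univ))
    (ρ_bar v_bar : ℝ) (hρ_bar : 0 < ρ_bar) (hsub : |v_bar| < c ρ_bar)
    (hFeq : F ρ_bar v_bar = 0)
    (T : ℝ) (hT : 0 < T) :
    ∃ ε > (0 : ℝ), ∃ C₀ > (0 : ℝ),
      ∀ ρ₀ v₀ u₀ uL : ℝ → ℝ,
        ContDiffOn ℝ 1 ρ₀ (Icc 0 L) → ContDiffOn ℝ 1 v₀ (Icc 0 L) →
        ContDiffOn ℝ 1 u₀ (Icc 0 T) → ContDiffOn ℝ 1 uL (Icc 0 T) →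
        -- C⁰-compatibility conditions
        u₀ 0 = v₀ 0 → uL 0 = ρ₀ L →
        -- C¹-compatibility conditions
        derivWithin u₀ (Icc 0 T) 0
          = -((c (ρ₀ 0)) ^ 2 / ρ₀ 0) * derivWithin ρ₀ (Icc 0 L) 0
            - v₀ 0 * derivWithin v₀ (Icc 0 L) 0 - F (ρ₀ 0) (v₀ 0) →
        derivWithin uL (Icc 0 T) 0
          = -(v₀ L) * derivWithin ρ₀ (Icc 0 L) L - ρ₀ L * derivWithin v₀ (Icc 0 L) L →
        -- smallness of the data
        max (max (c1NormOn (fun x => ρ₀ x - ρ_bar) (Icc 0 L))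
                 (c1NormOn (fun x => v₀ x - v_bar) (Icc 0 L)))
            (max (c1NormOn (fun t => u₀ t - v_bar) (Icc 0 T))
                 (c1NormOn (fun t => uL t - ρ_bar) (Icc 0 T))) < ε →
        -- existence
        ∃ ρ v : ℝ → ℝ → ℝ,
          IsClassicalSolutionDV c F T L ρ₀ v₀ u₀ uL ρ v ∧
          -- a priori bound
          max (c1NormOn₂ (fun t x => ρ t x - ρ_bar) (Icc 0 T) (Icc 0 L))
              (c1NormOn₂ (fun t x => v t x - v_bar) (Icc 0 T) (Icc 0 L))
            ≤ C₀ * max (max (c1NormOn (fun x => ρ₀ x - ρ_bar) (Icc 0 L))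
                            (c1NormOn (fun x => v₀ x - v_bar) (Icc 0 L)))
                       (max (c1NormOn (fun t => u₀ t - v_bar) (Icc 0 T))
                            (c1NormOn (fun t => uL t - ρ_bar) (Icc 0 T))) ∧
          -- uniqueness
          ∀ ρ' v' : ℝ → ℝ → ℝ,
            IsClassicalSolutionDV c F T L ρ₀ v₀ u₀ uL ρ' v' →
            ∀ t ∈ Icc (0 : ℝ) T, ∀ x ∈ Icc (0 : ℝ) L, ρ' t x = ρ t x ∧ v' t x = v t x := by
  obtain ⟨δ0, G, S, I⟩ := exists_invariant hc hcpos hρ_bar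
  have hδ0 := I.hδ0
  obtain ⟨δ, hδ, hδδ, hlam, hf, hpos, hf0⟩ := coef_spec I hF hsub hFeq
  obtain ⟨C, hC, ε, hε, hex⟩ := exists_diag hδ hL hT (σ := fun i => -sg i) hlam hf hpos hf0
    (fun i => by rw [abs_neg, abs_sg])
  obtain ⟨KG, hKG, hG⟩ := G_bound I
  obtain ⟨KS, hKS, hS⟩ := S_bound I hδ hδδ
  refine ⟨min (ρ_bar / 2) (min (δ0 / KG) (ε / (2 * (1 + KG)))), by positivity,
    max KS 1 * (C * (2 * (1 + KG))), by positivity, ?_⟩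
  intro ρ₀ v₀ u₀ uL cρ cv cu cl e0 e1 e2 e3 hN
  obtain ⟨hN1, hN2⟩ := lt_min_iff.1 hN
  obtain ⟨hN2, hN3⟩ := lt_min_iff.1 hN2
  set N := max (max (c1NormOn (fun x => ρ₀ x - ρ_bar) (Icc 0 L))
                 (c1NormOn (fun x => v₀ x - v_bar) (Icc 0 L)))
            (max (c1NormOn (fun t => u₀ t - v_bar) (Icc 0 T))
                 (c1NormOn (fun t => uL t - ρ_bar) (Icc 0 T))) with hNdef
  rw [lt_div_iff₀ hKG] at hN2
  rw [lt_div_iff₀ (by positivity)] at hN3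
  have bρ : ∀ x ∈ Icc 0 L, |ρ₀ x - ρ_bar| ≤ N ∧ |derivWithin ρ₀ (Icc 0 L) x| ≤ N := fun x hx =>
    (le_c1NormOn hL cρ hx).imp (fun h => h.trans ((le_max_left _ _).trans (le_max_left _ _)))
      (fun h => h.trans ((le_max_left _ _).trans (le_max_left _ _)))
  have bv : ∀ x ∈ Icc 0 L, |v₀ x - v_bar| ≤ N ∧ |derivWithin v₀ (Icc 0 L) x| ≤ N := fun x hx =>
    (le_c1NormOn hL cv hx).imp (fun h => h.trans ((le_max_right _ _).trans (le_max_left _ _)))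
      (fun h => h.trans ((le_max_right _ _).trans (le_max_left _ _)))
  have bu : ∀ x ∈ Icc 0 T, |u₀ x - v_bar| ≤ N ∧ |derivWithin u₀ (Icc 0 T) x| ≤ N := fun x hx =>
    (le_c1NormOn hT cu hx).imp (fun h => h.trans ((le_max_left _ _).trans (le_max_right _ _)))
      (fun h => h.trans ((le_max_left _ _).trans (le_max_right _ _)))
  have bl : ∀ x ∈ Icc 0 T, |uL x - ρ_bar| ≤ N ∧ |derivWithin uL (Icc 0 T) x| ≤ N := fun x hx =>
    (le_c1NormOn hT cl hx).imp (fun h => h.trans ((le_max_right _ _).trans (le_max_right _ _)))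
      (fun h => h.trans ((le_max_right _ _).trans (le_max_right _ _)))
  have hG' : ∀ r, |r - ρ_bar| ≤ N → 0 < r ∧ |c r / r| ≤ KG ∧ |G r| ≤ KG * |r - ρ_bar| :=
    fun r hr => hG r (hr.trans hN1.le)
  have hSG : ∀ r, |r - ρ_bar| ≤ N → S (G r) = r := fun r hr => by
    obtain ⟨h1, -, h3⟩ := hG' r hr
    exact I.S_G h1 (by linarith [mul_le_mul_of_nonneg_left hr hKG.le])
  obtain ⟨hD, hw, hβ, hw', hcomp⟩ := diag_data (F := F) I hT hL cρ cv cu cl e0 e1 e2 e3 bρ bv bu bl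
    hKG hG' (by linarith)
  obtain ⟨r, q, p, h1, h2, h3, h4, h5, h6, h7⟩ :=
    hex _ _ _ _ _ hD (by linarith) hw hβ hw' hcomp
  obtain ⟨ρ, v, hsol, hbd, hle⟩ := solution_of_diag I hT hL hδδ hKS hS
    (fun x hx => hSG _ (bρ x hx).1) (fun t ht => hSG _ (bl t ht).1) hpos h1 h2 h3 h4 h5 h6 h7
  refine ⟨ρ, v, hsol, hbd.trans (le_of_eq ?_), fun ρ' v' h' => unique_dv I hF hT hL hsol h' hle⟩
  ring
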